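/- Let G be an abelian group, k a commutative G-ring, n a natural number, and δ ∈ k invertible. Then there is an isomorphism of graded k-modules Tor_*^{GTL_n(δ)}(𝟙,𝟙) ≅ Tor_*^{k[G^n]}(k,k) = H_*(G^n; k). -/

import Mathlib

open scoped TensorProduct

noncomputable section

/-! ### Bar-complex homology of an augmented algebra

For a `k`-algebra `A` with augmentation `ε : A →ₐ[k] k` (the algebra map corresponding to
the trivial module `𝟙 = k`), we form the (unnormalized) bar complex `C_q = A^{⊗ q}`
(tensors over `k`), with the usual differential
`d(a₁⊗…⊗a_q) = ε(a₁)(a₂⊗…) + Σ (-1)^i (…a_i a_{i+1}…) + (-1)^q ε(a_q)(a₁⊗…)`,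
whose homology is `Tor_*^A(𝟙,𝟙)`. -/

/-- The modules `A^{⊗ q}` of the bar complex. -/
def barC (k : Type) [CommRing k] (A : Type) [Ring A] [Algebra k A] : ℕ → ModuleCat k
  | 0 => ModuleCat.of k k
  | (q + 1) => ModuleCat.of k (A ⊗[k] (barC k A q))

variable (k : Type) [CommRing k] (A : Type) [Ring A] [Algebra k A] (ε : A →ₐ[k] k)

/-- Left multiplication of `A` on the leftmost bar factor (via `ε` in degree `0`). -/
def barAct : ∀ q : ℕ, A →ₗ[k] ((barC k A q : Type) →ₗ[k] (barC k A q : Type))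
  | 0 => (LinearMap.lsmul k k).comp ε.toLinearMap
  | (q + 1) =>
    show A →ₗ[k] ((A ⊗[k] (barC k A q : Type)) →ₗ[k] (A ⊗[k] (barC k A q : Type))) from
    { toFun := fun a => TensorProduct.map (LinearMap.mulLeft k a) LinearMap.id
      map_add' := by
        intro a b
        refine TensorProduct.ext' fun x y => ?_
        simp [add_mul, TensorProduct.add_tmul]
      map_smul' := by
        intro c a
        refine TensorProduct.ext' fun x y => ?_
        simp [TensorProduct.smul_tmul', smul_mul_assoc] }

/-- All terms of the bar differential except the first face. -/
def barB : ∀ q : ℕ, ((A ⊗[k] (barC k A q : Type)) →ₗ[k] (barC k A q : Type))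
  | 0 => - TensorProduct.lift ((LinearMap.lsmul k (barC k A 0 : Type)).comp ε.toLinearMap)
  | (q + 1) =>
    show (A ⊗[k] (A ⊗[k] (barC k A q : Type))) →ₗ[k] (A ⊗[k] (barC k A q : Type)) from
    TensorProduct.lift (LinearMap.mk₂ k
      (fun (a : A) (x : A ⊗[k] (barC k A q : Type)) =>
        -((show A →ₗ[k] ((A ⊗[k] (barC k A q : Type)) →ₗ[k] (A ⊗[k] (barC k A q : Type))) from
            barAct k A ε (q + 1)) a x) - a ⊗ₜ[k] (barB q x))
      (by intro a b x
          generalize (show A →ₗ[k] ((A ⊗[k] (barC k A q : Type)) →ₗ[k] (A ⊗[k] (barC k A q : Type))) from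
            barAct k A ε (q + 1)) = F
          simp only [map_add, LinearMap.add_apply, TensorProduct.add_tmul]
          try abel)
      (by intro c a x
          generalize (show A →ₗ[k] ((A ⊗[k] (barC k A q : Type)) →ₗ[k] (A ⊗[k] (barC k A q : Type))) from
            barAct k A ε (q + 1)) = F
          simp only [map_smul, LinearMap.smul_apply, smul_sub, smul_neg,
            TensorProduct.smul_tmul'])
      (by intro a x y
          simp only [map_add, LinearMap.map_add, TensorProduct.tmul_add]
          try abel)
      (by intro c a x
          simp only [map_smul, LinearMap.map_smul, TensorProduct.tmul_smul, smul_sub, smul_neg]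
          try abel))

/-- The bar differential `C_{q+1} = A ⊗ C_q → C_q`. -/
def bard (q : ℕ) : (A ⊗[k] (barC k A q : Type)) →ₗ[k] (barC k A q : Type) :=
  TensorProduct.lift ((LinearMap.lsmul k (barC k A q : Type)).comp ε.toLinearMap)
  + barB k A ε q

/-- Cycles of the bar complex. -/
def barCycles : ∀ q : ℕ, Submodule k (barC k A q : Type)
  | 0 => ⊤
  | (q + 1) =>
    show Submodule k (barC k A (q + 1) : Type) from LinearMap.ker (bard k A ε q)

/-- `Tor_q^A(𝟙, 𝟙)`, the homology of the algebra `A` with augmentation (trivial module) `ε`,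
computed by the bar complex. -/
def barTor (q : ℕ) : Type :=
  (barCycles k A ε q) ⧸
    (Submodule.comap (barCycles k A ε q).subtype (LinearMap.range (bard k A ε q)))

instance (q : ℕ) : AddCommGroup (barTor k A ε q) :=
  inferInstanceAs (AddCommGroup ((barCycles k A ε q) ⧸
    (Submodule.comap (barCycles k A ε q).subtype (LinearMap.range (bard k A ε q)))))

instance (q : ℕ) : Module k (barTor k A ε q) :=
  inferInstanceAs (Module k ((barCycles k A ε q) ⧸
    (Submodule.comap (barCycles k A ε q).subtype (LinearMap.range (bard k A ε q)))))

/-- The augmentation of a group algebra `k[G]`, corresponding to the trivial action of `G`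
on `k`. -/
def groupAug (G : Type) [Group G] : MonoidAlgebra k G →ₐ[k] k :=
  MonoidAlgebra.lift k k G 1

/-- Group homology `H_*(G; k) = Tor_*^{k[G]}(k, k)` (with the trivial action on `k`). -/
abbrev groupTor (G : Type) [Group G] (q : ℕ) : Type :=
  barTor k (MonoidAlgebra k G) (groupAug k G) q

section GTLsection

/-! The `G`-equivariant Temperley-Lieb algebra `GTL_n(δ)`: generators `e i` (planar
cap-cup hooks) and `t g j` (labels); a middle loop with total label `g` is deleted at
the cost of the factor `(ρ g) δ = g•δ ∈ k`. -/

inductive GTLGen (n : ℕ) (G : Type) : Type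
  | e : Fin (n - 1) → GTLGen n G
  | t : G → Fin n → GTLGen n G

variable (k G : Type) [CommRing k] [CommGroup G] (ρ : G →* RingAut k) (n : ℕ) (δ : k)

abbrev GTLe (i : Fin (n - 1)) : FreeAlgebra k (GTLGen n G) := FreeAlgebra.ι k (GTLGen.e i)
abbrev GTLt (g : G) (j : Fin n) : FreeAlgebra k (GTLGen n G) := FreeAlgebra.ι k (GTLGen.t g j)

/-- The diagrammatic relations. -/
inductive GTLRel : FreeAlgebra k (GTLGen n G) → FreeAlgebra k (GTLGen n G) → Prop
  | e_sq (i : Fin (n - 1)) :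
      GTLRel (GTLe k G n i * GTLe k G n i) (δ • GTLe k G n i)
  | e_hook (i j : Fin (n - 1)) (h : (j : ℕ) = (i : ℕ) + 1 ∨ (i : ℕ) = (j : ℕ) + 1) :
      GTLRel (GTLe k G n i * GTLe k G n j * GTLe k G n i) (GTLe k G n i)
  | ee_comm (i j : Fin (n - 1)) (h : (i : ℕ) + 1 < (j : ℕ)) :
      GTLRel (GTLe k G n i * GTLe k G n j) (GTLe k G n j * GTLe k G n i)
  | t_mul (g h' : G) (j : Fin n) :
      GTLRel (GTLt k G n g j * GTLt k G n h' j) (GTLt k G n (g * h') j)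
  | t_one (j : Fin n) :
      GTLRel (GTLt k G n 1 j) (1)
  | tt_comm (g h' : G) (j l : Fin n) (h : j ≠ l) :
      GTLRel (GTLt k G n g j * GTLt k G n h' l) (GTLt k G n h' l * GTLt k G n g j)
  | et_comm (g : G) (i : Fin (n - 1)) (l : Fin n) (h : (l : ℕ) ≠ (i : ℕ) ∧ (l : ℕ) ≠ (i : ℕ) + 1) :
      GTLRel (GTLe k G n i * GTLt k G n g l) (GTLt k G n g l * GTLe k G n i)
  | cap_slide_l (g : G) (i : Fin (n - 1)) (j j' : Fin n) (h : (j : ℕ) = (i : ℕ)) (h' : (j' : ℕ) = (i : ℕ) + 1) :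
      GTLRel (GTLt k G n g j * GTLe k G n i) (GTLt k G n g j' * GTLe k G n i)
  | cap_slide_r (g : G) (i : Fin (n - 1)) (j j' : Fin n) (h : (j : ℕ) = (i : ℕ)) (h' : (j' : ℕ) = (i : ℕ) + 1) :
      GTLRel (GTLe k G n i * GTLt k G n g j) (GTLe k G n i * GTLt k G n g j')
  | loop (g : G) (i : Fin (n - 1)) (j : Fin n) (h : (j : ℕ) = (i : ℕ)) :
      GTLRel (GTLe k G n i * GTLt k G n g j * GTLe k G n i) ((ρ g δ) • GTLe k G n i)

/-- The diagram algebra: the quotient of the free algebra on the diagram generators by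
the diagrammatic relations. -/
abbrev GTLAlg : Type := RingQuot (GTLRel k G ρ n δ)

/-- The augmentation corresponding to the trivial module `𝟙`: a diagram acts by `1`
if it has `n` left-to-right connections, and by `0` otherwise. -/
noncomputable def GTLaug : GTLAlg k G ρ n δ →ₐ[k] k :=
  RingQuot.liftAlgHom k ⟨FreeAlgebra.lift k
      (fun x => match x with
        | GTLGen.e _ => (0 : k)
        | GTLGen.t _ _ => (1 : k)),
    by rintro x y h
       induction h <;>
         simp [GTLe, GTLt, FreeAlgebra.lift_ι_apply]⟩

end GTLsection

namespace GTLProof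

section Generic
variable {k : Type} [CommRing k] {A : Type} [Ring A] [Algebra k A]
variable {M M' : Type} [AddCommGroup M] [Module k M] [AddCommGroup M'] [Module k M']

def gE (ε : A →ₐ[k] k) (M : Type) [AddCommGroup M] [Module k M] : (A ⊗[k] M) →ₗ[k] M :=
  TensorProduct.lift ((LinearMap.lsmul k M).comp ε.toLinearMap)

@[simp] lemma gE_tmul (ε : A →ₐ[k] k) (a : A) (x : M) : gE ε M (a ⊗ₜ x) = ε a • x := by
  simp [gE]

lemma gE_smul (ε : A →ₐ[k] k) (a : A) (x : A ⊗[k] M) : gE ε M (a • x) = ε a • gE ε M x := by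
  induction x with
  | zero => simp
  | add x y hx hy => simp [hx, hy]
  | tmul b x => simp [TensorProduct.smul_tmul', mul_smul]

def stepB (b : (A ⊗[k] M) →ₗ[k] M) : (A ⊗[k] (A ⊗[k] M)) →ₗ[k] (A ⊗[k] M) :=
  TensorProduct.lift (Algebra.lsmul k k (A ⊗[k] M)).toLinearMap - LinearMap.lTensor A b

@[simp] lemma stepB_tmul (b : (A ⊗[k] M) →ₗ[k] M) (a : A) (x : A ⊗[k] M) :
    stepB b (a ⊗ₜ x) = a • x - a ⊗ₜ b x := by
  simp [stepB]

lemma stepB_smul (b : (A ⊗[k] M) →ₗ[k] M) (a : A) (x : A ⊗[k] (A ⊗[k] M)) :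
    stepB b (a • x) = a • stepB b x := by
  induction x with
  | zero => simp
  | add x y hx hy => simp only [smul_add, map_add, hx, hy]
  | tmul c x => simp [TensorProduct.smul_tmul', mul_smul, smul_sub]

def Good (b : (A ⊗[k] M) →ₗ[k] M) : Prop := ∀ a x, b (a • x) = b (a ⊗ₜ b x)

lemma Good.comp_step {b : (A ⊗[k] M) →ₗ[k] M} (h : Good b) (x) : b (stepB b x) = 0 := by
  induction x with
  | zero => simp
  | add x y hx hy => simp only [map_add, hx, hy, add_zero]
  | tmul c x => rw [stepB_tmul, map_sub, h, sub_self]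

lemma Good.step {b : (A ⊗[k] M) →ₗ[k] M} (h : Good b) : Good (stepB b) := by
  intro a x
  rw [stepB_smul, stepB_tmul, h.comp_step, TensorProduct.tmul_zero, sub_zero]

lemma Good.dd {b : (A ⊗[k] M) →ₗ[k] M} (h : Good b) (ε : A →ₐ[k] k) (x) :
    (gE ε M - b) ((gE ε (A ⊗[k] M) - stepB b) x) = 0 := by
  induction x with
  | zero => simp
  | add x y hx hy => simp only [map_add, hx, hy, add_zero]
  | tmul c x =>
    have := h c x
    simp only [LinearMap.sub_apply, gE_tmul, stepB_tmul, map_sub, map_smul, gE_smul, this, smul_sub]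
    abel

variable {B : Type} [Ring B] [Algebra k B]

lemma map_smul_tens (π : A →ₐ[k] B) (f : M →ₗ[k] M') (a : A) (x : A ⊗[k] M) :
    TensorProduct.map π.toLinearMap f (a • x) = π a • TensorProduct.map π.toLinearMap f x := by
  induction x with
  | zero => simp
  | add x y hx hy => simp only [smul_add, map_add, hx, hy]
  | tmul c x => simp [TensorProduct.smul_tmul']

lemma step_map (π : A →ₐ[k] B) (f : M →ₗ[k] M') {b : (A ⊗[k] M) →ₗ[k] M}
    {b' : (B ⊗[k] M') →ₗ[k] M'} (h : ∀ x, f (b x) = b' (TensorProduct.map π.toLinearMap f x)) (x) :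
    TensorProduct.map π.toLinearMap f (stepB b x) =
      stepB b' (TensorProduct.map π.toLinearMap (TensorProduct.map π.toLinearMap f) x) := by
  induction x with
  | zero => simp
  | add x y hx hy => simp only [map_add, hx, hy]
  | tmul c x =>
    simp [map_smul_tens, h]

lemma gE_map (π : A →ₐ[k] B) (f : M →ₗ[k] M') (ε : A →ₐ[k] k) (ε' : B →ₐ[k] k)
    (h : ∀ a, ε' (π a) = ε a) (x) :
    f (gE ε M x) = gE ε' M' (TensorProduct.map π.toLinearMap f x) := by
  induction x with
  | zero => simp
  | add x y hx hy => simp only [map_add, hx, hy]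
  | tmul c x => simp [h]

lemma lTensor_smul (s : M →ₗ[k] M') (a : A) (x : A ⊗[k] M) :
    LinearMap.lTensor A s (a • x) = a • LinearMap.lTensor A s x := by
  induction x with
  | zero => simp
  | add x y hx hy => simp only [smul_add, map_add, hx, hy]
  | tmul c x => simp [TensorProduct.smul_tmul']

lemma step_htpy {b : (A ⊗[k] M) →ₗ[k] M} {s : M →ₗ[k] A ⊗[k] M} {c : k}
    (h : ∀ y, stepB b (LinearMap.lTensor A s y) = s (b y) + c • y) (z) :
    stepB (stepB b) (LinearMap.lTensor A (LinearMap.lTensor A s) z) =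
      LinearMap.lTensor A s (stepB b z) + (-c) • z := by
  induction z with
  | zero => simp
  | add x y hx hy => simp only [map_add, hx, hy, smul_add]; abel
  | tmul a x =>
    simp only [LinearMap.lTensor_tmul, stepB_tmul, map_sub, lTensor_smul, h, TensorProduct.tmul_add, TensorProduct.tmul_smul]
    rw [show (-c) • (a ⊗ₜ[k] x) = -(c • (a ⊗ₜ[k] x)) from
      neg_smul (R := k) (M := A ⊗[k] (A ⊗[k] M)) c (a ⊗ₜ x)]
    abel

lemma gE_htpy {s : M →ₗ[k] A ⊗[k] M} (ε : A →ₐ[k] k) (z) :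
    gE ε _ (LinearMap.lTensor A s z) = s (gE ε _ z) := by
  induction z with
  | zero => simp
  | add x y hx hy => simp only [map_add, hx, hy]
  | tmul a x => simp

/-- tensoring with V -/
def thStep (V : Type) [AddCommGroup V] [Module k V] (θ : M' ≃ₗ[k] M ⊗[k] V) :
    (A ⊗[k] M') ≃ₗ[k] (A ⊗[k] M) ⊗[k] V :=
  (TensorProduct.congr (LinearEquiv.refl k A) θ).trans (TensorProduct.assoc k A M V).symm

lemma thStep_smul (V : Type) [AddCommGroup V] [Module k V] (θ : M' ≃ₗ[k] M ⊗[k] V) (a : A) (x) :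
    thStep V θ (a • x) = LinearMap.rTensor V (Algebra.lsmul k k (A ⊗[k] M) a) (thStep V θ x) := by
  induction x with
  | zero => simp
  | add x y hx hy => simp only [smul_add, map_add, hx, hy]
  | tmul c x =>
    simp only [thStep, TensorProduct.smul_tmul', LinearEquiv.trans_apply, TensorProduct.congr_tmul,
      LinearEquiv.refl_apply]
    induction θ x with
    | zero => simp
    | add x y hx hy => simp only [TensorProduct.tmul_add, map_add, hx, hy]
    | tmul d y => simp [TensorProduct.smul_tmul']

lemma thStep_tmul (V : Type) [AddCommGroup V] [Module k V] (θ : M' ≃ₗ[k] M ⊗[k] V) (a : A) (x) :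
    thStep V θ (a ⊗ₜ x) = LinearMap.rTensor V (TensorProduct.mk k A M a) (θ x) := by
  simp only [thStep, LinearEquiv.trans_apply, TensorProduct.congr_tmul,
      LinearEquiv.refl_apply]
  induction θ x with
  | zero => simp
  | add x y hx hy => simp only [TensorProduct.tmul_add, map_add, hx, hy]
  | tmul d y => simp

lemma step_th (V : Type) [AddCommGroup V] [Module k V] (θ : M' ≃ₗ[k] M ⊗[k] V)
    {b : (A ⊗[k] M) →ₗ[k] M} {b' : (A ⊗[k] M') →ₗ[k] M'}
    (h : ∀ x, θ (b' x) = LinearMap.rTensor V b (thStep V θ x)) (x) :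
    thStep V θ (stepB b' x) = LinearMap.rTensor V (stepB b) (thStep V (thStep V θ) x) := by
  induction x with
  | zero => simp
  | add x y hx hy => simp only [map_add, hx, hy]
  | tmul c x =>
    rw [stepB_tmul, map_sub, thStep_smul, thStep_tmul, thStep_tmul, h]
    generalize thStep V θ x = y
    induction y with
    | zero => simp
    | add x y hx hy =>
      rw [map_add, map_add, map_add, map_add, map_add, ← hx, ← hy]; abel
    | tmul d y => simp [TensorProduct.sub_tmul]

lemma gE_th (V : Type) [AddCommGroup V] [Module k V] (θ : M' ≃ₗ[k] M ⊗[k] V) (ε : A →ₐ[k] k) (x) :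
    θ (gE ε M' x) = LinearMap.rTensor V (gE ε M) (thStep V θ x) := by
  induction x with
  | zero => simp
  | add x y hx hy => simp only [map_add, hx, hy]
  | tmul c x =>
    rw [gE_tmul, map_smul, thStep_tmul]
    induction θ x with
    | zero => simp
    | add x y hx hy => rw [map_add, map_add, smul_add, hx, hy]
    | tmul d y => simp [TensorProduct.smul_tmul']

end Generic
end GTLProof

namespace GTLProof
set_option linter.unusedSectionVars false

section Complex

/-- The terms of the bar complex with coefficients in `N`. -/
def cC (k : Type) [CommRing k] (A : Type) [Ring A] [Algebra k A] (N : Type) [AddCommGroup N]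
    [Module k N] : ℕ → ModuleCat k
  | 0 => ModuleCat.of k N
  | (q + 1) => ModuleCat.of k (A ⊗[k] (cC k A N q))

variable {k : Type} [CommRing k] {A : Type} [Ring A] [Algebra k A]
variable {B : Type} [Ring B] [Algebra k B]
variable {N N' N'' : Type} [AddCommGroup N] [Module k N] [AddCommGroup N'] [Module k N']
  [AddCommGroup N''] [Module k N'']

def cB (α : A →ₐ[k] Module.End k N) : ∀ q : ℕ, (A ⊗[k] (cC k A N q)) →ₗ[k] (cC k A N q)
  | 0 => (TensorProduct.lift α.toLinearMap : A ⊗[k] N →ₗ[k] N)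
  | (q + 1) => stepB (cB α q)

lemma cB_good (α : A →ₐ[k] Module.End k N) : ∀ q, Good (cB α q)
  | 0 => by
    intro a (x : A ⊗[k] N)
    change TensorProduct.lift α.toLinearMap (a • x) =
      TensorProduct.lift α.toLinearMap (a ⊗ₜ TensorProduct.lift α.toLinearMap x)
    induction x with
    | zero => simp
    | add x y hx hy => simp only [smul_add, map_add, hx, hy, TensorProduct.tmul_add]
    | tmul c x => simp [TensorProduct.smul_tmul']
  | (q + 1) => (cB_good α q).step

def cD (ε : A →ₐ[k] k) (α : A →ₐ[k] Module.End k N) (q : ℕ) :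
    (A ⊗[k] (cC k A N q)) →ₗ[k] (cC k A N q) := gE ε _ - cB α q

def cMap (π : A →ₐ[k] B) (f : N →ₗ[k] N') : ∀ q, (cC k A N q) →ₗ[k] (cC k B N' q)
  | 0 => f
  | (q + 1) => TensorProduct.map π.toLinearMap (cMap π f q)

/-- the map in degree `q+1` -/
def cMap1 (π : A →ₐ[k] B) (f : N →ₗ[k] N') (q : ℕ) :
    (A ⊗[k] (cC k A N q)) →ₗ[k] (B ⊗[k] (cC k B N' q)) :=
  TensorProduct.map π.toLinearMap (cMap π f q)

def Equi (π : A →ₐ[k] B) (α : A →ₐ[k] Module.End k N) (β : B →ₐ[k] Module.End k N')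
    (f : N →ₗ[k] N') : Prop := ∀ a x, f (α a x) = β (π a) (f x)

lemma cMap_cB {π : A →ₐ[k] B} {α : A →ₐ[k] Module.End k N} {β : B →ₐ[k] Module.End k N'}
    {f : N →ₗ[k] N'} (h : Equi π α β f) : ∀ q x,
    cMap π f q (cB α q x) = cB β q (cMap1 π f q x)
  | 0 => by
    intro (x : A ⊗[k] N)
    change f (TensorProduct.lift α.toLinearMap x) =
      TensorProduct.lift β.toLinearMap (TensorProduct.map π.toLinearMap f x)
    induction x with
    | zero => simp
    | add x y hx hy => simp only [map_add, hx, hy]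
    | tmul c x => simp [h c x]
  | (q + 1) => step_map π _ (cMap_cB h q)

lemma cMap_cD {π : A →ₐ[k] B} {α : A →ₐ[k] Module.End k N} {β : B →ₐ[k] Module.End k N'}
    {f : N →ₗ[k] N'} (h : Equi π α β f) {ε : A →ₐ[k] k} {ε' : B →ₐ[k] k}
    (hε : ∀ a, ε' (π a) = ε a) (q) (x) :
    cMap π f q (cD ε α q x) = cD ε' β q (cMap1 π f q x) := by
  simp only [cD, LinearMap.sub_apply, map_sub, cMap_cB h]
  rw [gE_map π _ ε ε' hε]; rfl

def IsCyc (ε : A →ₐ[k] k) (α : A →ₐ[k] Module.End k N) : ∀ q, (cC k A N q) → Prop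
  | 0, _ => True
  | (q + 1), x => cD ε α q x = 0

lemma IsCyc_cD (ε : A →ₐ[k] k) (α : A →ₐ[k] Module.End k N) : ∀ q y, IsCyc ε α q (cD ε α q y)
  | 0, _ => trivial
  | (q + 1), x => (cB_good α q).dd ε x

lemma IsCyc.sub {ε : A →ₐ[k] k} {α : A →ₐ[k] Module.End k N} : ∀ {q x y},
    IsCyc ε α q x → IsCyc ε α q y → IsCyc ε α q (x - y)
  | 0, _, _, _, _ => trivial
  | (q + 1), x, y, hx, hy =>
    (map_sub (cD ε α q) x y).trans ((congrArg₂ (· - ·) hx hy).trans (sub_zero 0))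

lemma IsCyc.map {π : A →ₐ[k] B} {α : A →ₐ[k] Module.End k N} {β : B →ₐ[k] Module.End k N'}
    {f : N →ₗ[k] N'} (h : Equi π α β f) {ε : A →ₐ[k] k} {ε' : B →ₐ[k] k}
    (hε : ∀ a, ε' (π a) = ε a) : ∀ {q x}, IsCyc ε α q x → IsCyc ε' β q (cMap π f q x)
  | 0, _, _ => trivial
  | (q + 1), x, hx => by
    have := cMap_cD h hε q x
    change cD ε α q x = 0 at hx
    rw [hx, map_zero] at this
    exact this.symm

lemma IsCyc.of_map {π : A →ₐ[k] B} {α : A →ₐ[k] Module.End k N} {β : B →ₐ[k] Module.End k N'}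
    {f : N →ₗ[k] N'} (h : Equi π α β f) {ε : A →ₐ[k] k} {ε' : B →ₐ[k] k}
    (hε : ∀ a, ε' (π a) = ε a) (hf : ∀ q, Function.Injective (cMap π f q)) :
    ∀ {q x}, IsCyc ε' β q (cMap π f q x) → IsCyc ε α q x
  | 0, _, _ => trivial
  | (q + 1), x, hx => by
    have := cMap_cD h hε q x
    refine hf q ?_
    rw [map_zero, ← show _ = _ from hx]
    exact this

lemma cMap_surj {π : A →ₐ[k] B} {f : N →ₗ[k] N'} (hπ : Function.Surjective π)
    (hf : Function.Surjective f) : ∀ q, Function.Surjective (cMap π f q)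
  | 0 => hf
  | (q + 1) => TensorProduct.map_surjective hπ (cMap_surj hπ hf q)

lemma cMap_inj [Module.Flat k A] {f : N →ₗ[k] N'}
    (hf : Function.Injective f) : ∀ q, Function.Injective (cMap (AlgHom.id k A) f q)
  | 0 => hf
  | (q + 1) => Module.Flat.lTensor_preserves_injective_linearMap (M := A) _ (cMap_inj hf q)

lemma cMap_exact [Module.Flat k A] {f : N' →ₗ[k] N} {g : N →ₗ[k] N''}
    (hf : Function.Exact f g) :
    ∀ q, Function.Exact (cMap (AlgHom.id k A) f q) (cMap (AlgHom.id k A) g q)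
  | 0 => hf
  | (q + 1) => Module.Flat.lTensor_exact A (cMap_exact hf q)

lemma cMap_comp {D N₃ : Type} [Ring D] [Algebra k D] [AddCommGroup N₃] [Module k N₃]
    (π : A →ₐ[k] B) (π' : B →ₐ[k] D) (f : N →ₗ[k] N') (f' : N' →ₗ[k] N₃) :
    ∀ q x, cMap π' f' q (cMap π f q x) = cMap (π'.comp π) (f' ∘ₗ f) q x
  | 0 => fun x => rfl
  | (q + 1) => by
    intro (x : A ⊗[k] _)
    change TensorProduct.map π'.toLinearMap (cMap π' f' q)
      (TensorProduct.map π.toLinearMap (cMap π f q) x) =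
        TensorProduct.map (π'.comp π).toLinearMap (cMap (π'.comp π) (f' ∘ₗ f) q) x
    induction x with
    | zero => simp
    | add x y hx hy => simp only [map_add, hx, hy]
    | tmul c x => simp [cMap_comp π π' f f' q]

lemma cMap_id : ∀ q x, cMap (AlgHom.id k A) (LinearMap.id : N →ₗ[k] N) q x = x
  | 0 => fun x => rfl
  | (q + 1) => by
    intro (x : A ⊗[k] _)
    change TensorProduct.map (AlgHom.id k A).toLinearMap
      (cMap (AlgHom.id k A) (LinearMap.id : N →ₗ[k] N) q) x = x
    induction x with
    | zero => simp
    | add x y hx hy => simp only [map_add, hx, hy]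
    | tmul c x => simp [cMap_id q]

/-- all homology vanishes -/
def Acyc (ε : A →ₐ[k] k) (α : A →ₐ[k] Module.End k N) : Prop :=
  ∀ q x, IsCyc ε α q x → ∃ y, cD ε α q y = x

/-- positive degree homology vanishes -/
def AcycPos (ε : A →ₐ[k] k) (α : A →ₐ[k] Module.End k N) : Prop :=
  ∀ q x, IsCyc ε α (q + 1) x → ∃ y, cD ε α (q + 1) y = x

abbrev EquiA (α : A →ₐ[k] Module.End k N) (β : A →ₐ[k] Module.End k N')
    (f : N →ₗ[k] N') : Prop := Equi (AlgHom.id k A) α β f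

section
variable [Module.Flat k A] {ε : A →ₐ[k] k} {α' : A →ₐ[k] Module.End k N'}
  {α : A →ₐ[k] Module.End k N} {α'' : A →ₐ[k] Module.End k N''}
  {f : N' →ₗ[k] N} {g : N →ₗ[k] N''}

lemma cMapA_cD (h : EquiA α α'' g) (q) (x) :
    cMap (AlgHom.id k A) g q (cD ε α q x) = cD ε α'' q (cMap1 (AlgHom.id k A) g q x) :=
  cMap_cD h (fun _ => rfl) q x

/-- quotient: general form, degree `q` -/
lemma quot_step (hf : EquiA α' α f) (hg : EquiA α α'' g)
    (hfi : Function.Injective f) (hex : Function.Exact f g) (hgs : Function.Surjective g)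
    (h1 : Acyc ε α') (q : ℕ)
    (h2 : ∀ x, IsCyc ε α q x → ∃ y, cD ε α q y = x) (x) (hx : IsCyc ε α'' q x) :
    ∃ y, cD ε α'' q y = x := by
  obtain ⟨x', rfl⟩ := cMap_surj (π := AlgHom.id k A) (fun a => ⟨a, rfl⟩) hgs q x
  have key : ∃ x₁, IsCyc ε α q x₁ ∧ cMap (AlgHom.id k A) g q x₁ =
      cMap (AlgHom.id k A) g q x' := by
    cases q with
    | zero => exact ⟨x', trivial, rfl⟩
    | succ q =>
      have e1 : cMap (AlgHom.id k A) g q (cD ε α q x') = 0 :=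
        (cMapA_cD hg q x').trans hx
      obtain ⟨z, hz⟩ := (cMap_exact (A := A) hex q _).1 e1
      have hzc : IsCyc ε α' q z := by
        refine IsCyc.of_map hf (ε := ε) (ε' := ε) (fun _ => rfl) (cMap_inj hfi) ?_
        rw [hz]; exact IsCyc_cD _ _ _ _
      obtain ⟨w, hw⟩ := h1 q z hzc
      refine ⟨x' - cMap (AlgHom.id k A) f (q + 1) w, ?_, ?_⟩
      · have := cMapA_cD (ε := ε) hf q w
        rw [hw, hz] at this
        exact (map_sub (cD ε α q) x' _).trans (sub_eq_zero.2 this)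
      · rw [map_sub]
        have := (cMap_exact (A := A) hex (q+1) (cMap (AlgHom.id k A) f (q + 1) w)).2 ⟨w, rfl⟩
        rw [this, sub_zero]
  obtain ⟨x₁, hc, he⟩ := key
  obtain ⟨y, rfl⟩ := h2 x₁ hc
  exact ⟨cMap1 (AlgHom.id k A) g q y, by rw [← cMapA_cD hg, he]⟩

lemma Acyc.quot (h1 : Acyc ε α') (h2 : Acyc ε α) (hf : EquiA α' α f) (hg : EquiA α α'' g)
    (hfi : Function.Injective f) (hex : Function.Exact f g) (hgs : Function.Surjective g) :
    Acyc ε α'' := fun q x hx => quot_step hf hg hfi hex hgs h1 q (h2 q) x hx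

lemma AcycPos.quot (h1 : Acyc ε α') (h2 : AcycPos ε α) (hf : EquiA α' α f) (hg : EquiA α α'' g)
    (hfi : Function.Injective f) (hex : Function.Exact f g) (hgs : Function.Surjective g) :
    AcycPos ε α'' := fun q x hx => quot_step hf hg hfi hex hgs h1 (q + 1) (h2 q) x hx

lemma Acyc.retract (h : Acyc ε α) (hg : EquiA α α'' g) {i : N'' →ₗ[k] N} (hi : EquiA α'' α i)
    (hgi : ∀ x, g (i x) = x) : Acyc ε α'' := by
  intro q x hx
  obtain ⟨y, hy⟩ := h q _ (hx.map hi (ε' := ε) (fun _ => rfl))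
  refine ⟨cMap1 (AlgHom.id k A) g q y, ?_⟩
  rw [← cMapA_cD hg, hy, cMap_comp]
  have : g ∘ₗ i = LinearMap.id := LinearMap.ext hgi
  rw [this]
  exact cMap_id q x

end
end Complex
end GTLProof

namespace GTLProof

section FreeMod
variable {k : Type} [CommRing k] {A : Type} [Ring A] [Algebra k A]
variable {V : Type} [AddCommGroup V] [Module k V]

variable (k A V) in
/-- induced module -/
abbrev ind : A →ₐ[k] Module.End k (A ⊗[k] V) := Algebra.lsmul k k (A ⊗[k] V)

variable (k A V) in
def cS : ∀ q, (cC k A (A ⊗[k] V) q) →ₗ[k] (A ⊗[k] cC k A (A ⊗[k] V) q)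
  | 0 => (LinearMap.lTensor A (TensorProduct.mk k A V 1) :
      A ⊗[k] V →ₗ[k] A ⊗[k] (A ⊗[k] V))
  | (q + 1) => LinearMap.lTensor A (cS q)

lemma cS_zero (y : A ⊗[k] V) : TensorProduct.lift (ind k A V).toLinearMap
    (LinearMap.lTensor A (TensorProduct.mk k A V 1) y) = y := by
  induction y with
  | zero => simp
  | add x y hx hy => simp only [map_add, hx, hy]
  | tmul c x => simp [TensorProduct.smul_tmul']

lemma cS_zero' (y : A ⊗[k] (A ⊗[k] V)) :
    stepB (TensorProduct.lift (ind k A V).toLinearMap)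
      (LinearMap.lTensor A (LinearMap.lTensor A (TensorProduct.mk k A V 1)) y) =
    LinearMap.lTensor A (TensorProduct.mk k A V 1)
      (TensorProduct.lift (ind k A V).toLinearMap y) + (-1 : k) • y := by
  induction y with
  | zero => simp
  | add x y hx hy => simp only [map_add, hx, hy, smul_add]; abel
  | tmul c x =>
    rw [LinearMap.lTensor_tmul, stepB_tmul, cS_zero,
      neg_smul (R := k) (M := A ⊗[k] (A ⊗[k] V)), one_smul, TensorProduct.lift.tmul,
      sub_eq_add_neg]
    congr 1
    exact (lTensor_smul (TensorProduct.mk k A V 1) c x).symm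

lemma cS_htpy : ∀ q y, stepB (cB (ind k A V) q) (LinearMap.lTensor A (cS k A V q) y) =
    cS k A V q (cB (ind k A V) q y) + ((-1 : k) ^ (q + 1)) • y
  | 0 => fun y => by rw [zero_add, pow_one]; exact cS_zero' y
  | (q + 1) => fun y => by
    have := step_htpy (cS_htpy q) y
    rw [pow_succ (-1 : k) (q + 1), mul_neg_one]
    exact this

lemma ind_acycPos (ε : A →ₐ[k] k) : AcycPos ε (ind k A V) := by
  intro q x hx
  change A ⊗[k] cC k A (A ⊗[k] V) q at x
  have h1 : (gE ε (A ⊗[k] cC k A (A ⊗[k] V) q) - stepB (cB (ind k A V) q)) (LinearMap.lTensor A (cS k A V q) x) =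
      (-(-1 : k) ^ (q + 1)) • x := by
    rw [LinearMap.sub_apply, cS_htpy, gE_htpy]
    have h2 : cS k A V q (gE ε _ x) - cS k A V q (cB (ind k A V) q x) = 0 := by
      rw [← map_sub]
      change cS k A V q (cD ε (ind k A V) q x) = 0
      have : cD ε (ind k A V) q x = 0 := hx
      rw [this, map_zero]
    rw [neg_smul (R := k) (M := A ⊗[k] cC k A (A ⊗[k] V) q), ← sub_sub, h2, zero_sub]
  refine ⟨(-(-1 : k) ^ (q + 1)) • LinearMap.lTensor A (cS k A V q) x, ?_⟩
  refine (map_smul (cD ε (ind k A V) (q+1)) (-(-1 : k) ^ (q + 1))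
    (LinearMap.lTensor A (cS k A V q) x)).trans ?_
  have h3 : (-(-1 : k) ^ (q + 1)) • (-(-1 : k) ^ (q + 1)) • x = x := by
    rw [smul_smul, neg_mul_neg, ← mul_pow]
    simp
  exact (congrArg ((-(-1 : k) ^ (q + 1)) • ·) h1).trans h3

lemma ind_retract_acyc {N : Type} [AddCommGroup N] [Module k N] {α : A →ₐ[k] Module.End k N}
    (ε : A →ₐ[k] k) (i : N →ₗ[k] A ⊗[k] V) (r : A ⊗[k] V →ₗ[k] N)
    (hi : EquiA α (ind k A V) i) (hr : EquiA (ind k A V) α r) (hri : ∀ x, r (i x) = x)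
    (h0 : ∀ x, gE ε V (i x) = 0) : Acyc ε α := by
  intro q x hx
  have key : ∃ y, cD ε (ind k A V) q y = cMap (AlgHom.id k A) i q x := by
    cases q with
    | zero =>
      change N at x
      refine ⟨-(LinearMap.lTensor A (TensorProduct.mk k A V 1) (i x)), ?_⟩
      change (gE ε (A ⊗[k] V) - (TensorProduct.lift (ind k A V).toLinearMap)) (-_) = i x
      rw [map_neg, LinearMap.sub_apply, cS_zero, gE_htpy, h0]
      simp
    | succ q =>
      exact ind_acycPos ε q _ (hx.map hi (ε' := ε) (fun _ => rfl))
  obtain ⟨y, hy⟩ := key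
  refine ⟨cMap1 (AlgHom.id k A) r q y, ?_⟩
  rw [← cMap_cD hr (ε := ε) (fun _ => rfl), hy, cMap_comp]
  have : r ∘ₗ i = LinearMap.id := LinearMap.ext hri
  rw [this]
  exact cMap_id q x

end FreeMod

section Tens
variable {k : Type} [CommRing k] {A : Type} [Ring A] [Algebra k A]
variable {N : Type} [AddCommGroup N] [Module k N]

variable (k A N) in
def cTh (V : Type) [AddCommGroup V] [Module k V] :
    ∀ q, (cC k A (N ⊗[k] V) q) ≃ₗ[k] (cC k A N q) ⊗[k] V
  | 0 => LinearEquiv.refl k (N ⊗[k] V)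
  | (q + 1) => thStep V (cTh V q)

lemma cTh_cB {V : Type} [AddCommGroup V] [Module k V] {α : A →ₐ[k] Module.End k N}
    {β : A →ₐ[k] Module.End k (N ⊗[k] V)} (hβ : ∀ a x, β a x = LinearMap.rTensor V (α a) x) :
    ∀ q x, cTh k A N V q (cB β q x) =
      LinearMap.rTensor V (cB α q) (thStep V (cTh k A N V q) x)
  | 0 => by
    intro (x : A ⊗[k] (N ⊗[k] V))
    change (TensorProduct.lift β.toLinearMap) x =
      LinearMap.rTensor V (TensorProduct.lift α.toLinearMap)
        (thStep V (LinearEquiv.refl k (N ⊗[k] V)) x)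
    induction x with
    | zero => simp
    | add x y hx hy => simp only [map_add, hx, hy]
    | tmul a x =>
      rw [thStep_tmul, TensorProduct.lift.tmul]
      refine (hβ a x).trans ?_
      rw [LinearEquiv.refl_apply, ← LinearMap.comp_apply, ← LinearMap.rTensor_comp]
      congr 2
  | (q + 1) => step_th V (cTh k A N V q) (cTh_cB hβ q)

lemma cTh_cD {V : Type} [AddCommGroup V] [Module k V] {α : A →ₐ[k] Module.End k N}
    {β : A →ₐ[k] Module.End k (N ⊗[k] V)} (hβ : ∀ a x, β a x = LinearMap.rTensor V (α a) x)
    (ε : A →ₐ[k] k) (q) (x) : cTh k A N V q (cD ε β q x) =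
      LinearMap.rTensor V (cD ε α q) (thStep V (cTh k A N V q) x) := by
  rw [cD, cD, LinearMap.rTensor_sub, LinearMap.sub_apply, LinearMap.sub_apply, map_sub,
    cTh_cB hβ, gE_th]

lemma Acyc.tens {V : Type} [AddCommGroup V] [Module k V] [Module.Flat k V]
    {α : A →ₐ[k] Module.End k N} {ε : A →ₐ[k] k} (h : Acyc ε α)
    {β : A →ₐ[k] Module.End k (N ⊗[k] V)} (hβ : ∀ a x, β a x = LinearMap.rTensor V (α a) x) :
    Acyc ε β := by
  intro q x hx
  have key : ∃ y, LinearMap.rTensor V (cD ε α q) y = cTh k A N V q x := by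
    cases q with
    | zero =>
      exact LinearMap.rTensor_surjective V (g := cD ε α 0) (fun x => h 0 x trivial) _
    | succ q =>
      have hex : Function.Exact (cD ε α (q+1) : A ⊗[k] (A ⊗[k] cC k A N q) →ₗ[k] _)
          (cD ε α q) := by
        intro y
        constructor
        · intro hy; exact h (q+1) y hy
        · rintro ⟨z, rfl⟩
          exact IsCyc_cD ε α (q+1) z
      refine (Module.Flat.rTensor_exact V hex _).1 ?_
      refine (cTh_cD hβ ε q x).symm.trans ?_
      have : cD ε β q x = 0 := hx
      exact (congrArg _ this).trans (map_zero _)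
  obtain ⟨y, hy⟩ := key
  refine ⟨(thStep V (cTh k A N V q)).symm y, (cTh k A N V q).injective ?_⟩
  rw [cTh_cD hβ, LinearEquiv.apply_symm_apply, hy]

end Tens
end GTLProof

namespace GTLProof
set_option linter.unusedSectionVars false

section Comparison
variable {k : Type} [CommRing k] {A : Type} [Ring A] [Algebra k A] {B : Type} [Ring B] [Algebra k B]

/-- restriction of a representation to an invariant submodule -/
def subRep {N : Type} [AddCommGroup N] [Module k N] (α : A →ₐ[k] Module.End k N)
    (K : Submodule k N) (h : ∀ a, ∀ x ∈ K, α a x ∈ K) : A →ₐ[k] Module.End k K where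
  toFun a := (α a).restrict (h a)
  map_one' := by ext x; simp
  map_mul' a b := by ext x; simp
  map_zero' := by ext x; simp
  map_add' a b := by ext x; simp
  commutes' c := by ext x; simp

@[simp] lemma subRep_coe {N : Type} [AddCommGroup N] [Module k N] (α : A →ₐ[k] Module.End k N)
    (K : Submodule k N) (h : ∀ a, ∀ x ∈ K, α a x ∈ K) (a : A) (x : K) :
    ((subRep α K h a x : K) : N) = α a x := rfl

variable [Module.Flat k A] [Module.Flat k B] {ε : A →ₐ[k] k} {ε' : B →ₐ[k] k}
  {π : A →ₐ[k] B}

lemma comp1 (hπ : Function.Surjective π)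
    {I : Type} [AddCommGroup I] [Module k I] {αI : A →ₐ[k] Module.End k I} (hI : Acyc ε αI)
    (ι : I →ₗ[k] A) (hι : Function.Injective ι) (hιe : ∀ a x, ι (αI a x) = a * ι x)
    (hex : Function.Exact ι π)
    (N : Type) [AddCommGroup N] [Module k N] [Module.Flat k N] :
    AcycPos ε ((ind k B N).comp π) := by
  let β : A →ₐ[k] Module.End k (I ⊗[k] N) := (Module.End.rTensorAlgHom k I N).comp αI
  have h1 : Acyc ε β := hI.tens (V := N) (fun a x => rfl)
  refine AcycPos.quot (f := LinearMap.rTensor N ι) (g := LinearMap.rTensor N π.toLinearMap) h1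
    (ind_acycPos (V := N) ε) ?_ ?_ ?_ ?_ ?_
  · intro a x
    change LinearMap.rTensor N ι (LinearMap.rTensor N (αI a) x) = a • (LinearMap.rTensor N ι x)
    induction x with
    | zero => simp
    | add x y hx hy => simp only [map_add, hx, hy, smul_add]
    | tmul c x => simp [hιe, TensorProduct.smul_tmul']
  · intro a x
    change LinearMap.rTensor N π.toLinearMap (a • x) = π a • (LinearMap.rTensor N π.toLinearMap x)
    induction x with
    | zero => simp
    | add x y hx hy => simp only [map_add, hx, hy, smul_add]
    | tmul c x => simp [TensorProduct.smul_tmul']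
  · exact Module.Flat.rTensor_preserves_injective_linearMap _ hι
  · exact rTensor_exact N (f := ι) (g := π.toLinearMap) hex hπ
  · exact LinearMap.rTensor_surjective N hπ

/-- the projection of complexes -/
abbrev cP (π : A →ₐ[k] B) (N : Type) [AddCommGroup N] [Module k N] (q : ℕ) :
    cC k A N q →ₗ[k] cC k B N q := cMap π LinearMap.id q

abbrev cP1 (π : A →ₐ[k] B) (N : Type) [AddCommGroup N] [Module k N] (q : ℕ) :
    A ⊗[k] cC k A N q →ₗ[k] B ⊗[k] cC k B N q := cMap1 π LinearMap.id q

lemma cP_nat {N N' : Type} [AddCommGroup N] [Module k N] [AddCommGroup N'] [Module k N']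
    (f : N →ₗ[k] N') (q) (x) :
    cP π N' q (cMap (AlgHom.id k A) f q x) = cMap (AlgHom.id k B) f q (cP π N q x) := by
  rw [cMap_comp, cMap_comp]
  rfl

lemma equi_restr {N : Type} [AddCommGroup N] [Module k N] (β : B →ₐ[k] Module.End k N) :
    Equi π (β.comp π) β LinearMap.id := fun _ _ => rfl

lemma cP_cD {N : Type} [AddCommGroup N] [Module k N] (β : B →ₐ[k] Module.End k N)
    (hε : ∀ a, ε' (π a) = ε a) (q) (x) :
    cP π N q (cD ε (β.comp π) q x) = cD ε' β q (cP1 π N q x) :=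
  cMap_cD (equi_restr β) hε q x

/-- kernel of `C^A(B ⊗ N) → C^B(B ⊗ N)` has no positive homology -/
lemma comp2 (hπ : Function.Surjective π) (hε : ∀ a, ε' (π a) = ε a)
    {N : Type} [AddCommGroup N] [Module k N]
    (h : AcycPos ε ((ind k B N).comp π)) (q) (v : cC k A (B ⊗[k] N) (q + 1))
    (hv : IsCyc ε ((ind k B N).comp π) (q + 1) v) (hp : cP π _ (q + 1) v = 0) :
    ∃ u, cP1 π _ (q + 1) u = 0 ∧ cD ε ((ind k B N).comp π) (q + 1) u = v := by
  obtain ⟨u, hu⟩ := h q v hv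
  have h1 : IsCyc ε' (ind k B N) (q + 2) (cP1 π _ (q + 1) u) := by
    change cD ε' (ind k B N) (q + 1) (cP1 π _ (q + 1) u) = 0
    rw [← cP_cD (ind k B N) hε, hu, hp]
  obtain ⟨r, hr⟩ := ind_acycPos (V := N) ε' (q + 1) _ h1
  obtain ⟨r', hr'⟩ := cMap_surj (f := (LinearMap.id : B ⊗[k] N →ₗ[k] _)) hπ (fun x => ⟨x, rfl⟩)
    (q + 3) r
  let u' : A ⊗[k] cC k A (B ⊗[k] N) (q + 1) := cD ε ((ind k B N).comp π) (q + 2) r'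
  refine ⟨u - u', ?_, ?_⟩
  · refine (map_sub (cP1 π (B ⊗[k] N) (q + 1)) u _).trans ?_
    refine sub_eq_zero.2 ?_
    refine hr.symm.trans ?_
    rw [← hr']
    exact (cP_cD (ind k B N) hε (q + 2) r').symm
  · refine (map_sub (cD ε ((ind k B N).comp π) (q + 1)) u _).trans ?_
    rw [hu]
    have := IsCyc_cD ε ((ind k B N).comp π) (q + 2) r'
    exact (congrArg (v - ·) this).trans (sub_zero v)

lemma exists_ker {N : Type} [AddCommGroup N] [Module k N] [Module.Flat k N]
    (β : B →ₐ[k] Module.End k N) :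
    ∃ (K : Type) (_ : AddCommGroup K) (_ : Module k K) (_ : Module.Flat k K)
      (κ : B →ₐ[k] Module.End k K) (i : K →ₗ[k] B ⊗[k] N), Function.Injective i ∧
      Function.Exact i (TensorProduct.lift β.toLinearMap) ∧ EquiA κ (ind k B N) i := by
    let μ : B ⊗[k] N →ₗ[k] N := TensorProduct.lift β.toLinearMap
    have hμ : ∀ b x, μ (b • x) = β b (μ x) := by
      intro b x
      induction x with
      | zero => simp
      | add x y hx hy => simp only [map_add, hx, hy, smul_add]
      | tmul c x => simp [TensorProduct.smul_tmul', μ]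
    have hK : ∀ b, ∀ x ∈ LinearMap.ker μ, ind k B N b x ∈ LinearMap.ker μ := by
      intro b x hx
      change μ (b • x) = 0
      rw [hμ, show μ x = 0 from hx, map_zero]
    let κ := subRep (ind k B N) (LinearMap.ker μ) hK
    let i : LinearMap.ker μ →ₗ[k] B ⊗[k] N := (LinearMap.ker μ).subtype
    have hi : Function.Injective i := Subtype.val_injective
    have hex : Function.Exact i μ := by
      intro y
      constructor
      · intro hy; exact ⟨⟨y, hy⟩, rfl⟩
      · rintro ⟨z, rfl⟩; exact z.2
    have hfl : Module.Flat k (LinearMap.ker μ) := by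
      let r0 : B ⊗[k] N →ₗ[k] B ⊗[k] N := LinearMap.id - (TensorProduct.mk k B N 1) ∘ₗ μ
      let r : B ⊗[k] N →ₗ[k] LinearMap.ker μ := r0.codRestrict _ (by
        intro c
        simp [r0, μ])
      refine Module.Flat.of_retract i r ?_
      refine LinearMap.ext fun x => Subtype.ext ?_
      have : μ x.1 = 0 := x.2
      change x.1 - 1 ⊗ₜ[k] (μ x.1) = x.1
      rw [this, TensorProduct.tmul_zero, sub_zero]
    exact ⟨LinearMap.ker μ, inferInstance, inferInstance, hfl, κ, i, hi, hex, fun a x => rfl⟩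

lemma comp3 (hπ : Function.Surjective π) (hε : ∀ a, ε' (π a) = ε a)
    (H : ∀ (N : Type) [AddCommGroup N] [Module k N] [Module.Flat k N],
      AcycPos ε ((ind k B N).comp π)) : ∀ (q : ℕ)
    (N : Type) [AddCommGroup N] [Module k N] [Module.Flat k N] (β : B →ₐ[k] Module.End k N)
    (x : cC k A N q), IsCyc ε (β.comp π) q x → cP π N q x = 0 →
    ∃ y, cP1 π N q y = 0 ∧ cD ε (β.comp π) q y = x := by
  intro q
  induction q with
  | zero =>
    intro N _ _ _ β x hx h0
    have : x = 0 := h0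
    exact ⟨0, map_zero _, by rw [this, map_zero]⟩
  | succ q ih =>
    intro N _ _ _ β x hx h0
    let μ : B ⊗[k] N →ₗ[k] N := TensorProduct.lift β.toLinearMap
    have hμ : ∀ b x, μ (b • x) = β b (μ x) := by
      intro b x
      induction x with
      | zero => simp
      | add x y hx hy => simp only [map_add, hx, hy, smul_add]
      | tmul c x => simp [TensorProduct.smul_tmul', μ]
    have hμs : Function.Surjective μ := fun n => ⟨1 ⊗ₜ n, by simp [μ]⟩
    obtain ⟨K, _, _, _, κ, i, hi, hex, hie⟩ := exists_ker β
    have eA : EquiA ((ind k B N).comp π) (β.comp π) μ := fun a x => hμ _ _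
    have eB : EquiA (ind k B N) β μ := fun a x => hμ _ _
    have eiA : EquiA (κ.comp π) ((ind k B N).comp π) i := fun a x => hie _ _
    have idA : Function.Surjective (AlgHom.id k A) := fun x => ⟨x, rfl⟩
    -- lift x
    obtain ⟨x', hx'⟩ := cMap_surj idA hμs (q + 1) x
    have e1 : cMap (AlgHom.id k B) μ (q + 1) (cP π _ (q + 1) x') = 0 := by
      rw [← cP_nat, hx', h0]
    obtain ⟨t, ht⟩ := (cMap_exact hex (q + 1) _).1 e1
    obtain ⟨t', ht'⟩ := cMap_surj (f := (LinearMap.id : K →ₗ[k] K)) hπ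
      (fun x => ⟨x, rfl⟩) (q + 1) t
    obtain ⟨x₁, hx₁, hp₁⟩ : ∃ x₁, cMap (AlgHom.id k A) μ (q + 1) x₁ = x ∧
        cP π _ (q + 1) x₁ = 0 := by
      refine ⟨x' - cMap (AlgHom.id k A) i (q + 1) t', ?_, ?_⟩
      · rw [map_sub, hx', (cMap_exact (A := A) hex (q+1) _).2 ⟨t', rfl⟩, sub_zero]
      · rw [map_sub, cP_nat, ht', ht, sub_self]
    -- its boundary
    have e2 : cMap (AlgHom.id k A) μ q (cD ε ((ind k B N).comp π) q x₁) = 0 := by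
      refine (cMapA_cD eA q x₁).trans ?_
      refine Eq.trans ?_ hx
      exact congrArg _ hx₁
    obtain ⟨z, hz⟩ := (cMap_exact hex q _).1 e2
    have hzc : IsCyc ε (κ.comp π) q z := by
      refine IsCyc.of_map eiA (ε := ε) (ε' := ε) (fun _ => rfl) (cMap_inj hi) ?_
      rw [hz]; exact IsCyc_cD _ _ _ _
    have hzp : cP π _ q z = 0 := by
      refine cMap_inj (A := B) hi q ?_
      rw [← cP_nat, hz, map_zero]
      refine (cP_cD (ind k B N) hε q x₁).trans ?_
      exact (congrArg _ hp₁).trans (map_zero _)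
    obtain ⟨w, hwp, hw⟩ : ∃ w : cC k A K (q + 1), cP π K (q + 1) w = 0 ∧
        cMap (AlgHom.id k A) i q z =
          cD ε ((ind k B N).comp π) q (cMap (AlgHom.id k A) i (q + 1) w) := by
      obtain ⟨w, hwp, hw⟩ := ih _ κ z hzc hzp
      refine ⟨w, hwp, ?_⟩
      rw [← hw]
      exact cMapA_cD eiA q w
    have hc2 : IsCyc ε ((ind k B N).comp π) (q + 1)
        (x₁ - cMap (AlgHom.id k A) i (q + 1) w) := by
      refine (map_sub (cD ε ((ind k B N).comp π) q) x₁ _).trans (sub_eq_zero.2 ?_)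
      exact hz.symm.trans hw
    have hp2 : cP π _ (q + 1) (x₁ - cMap (AlgHom.id k A) i (q + 1) w) = 0 := by
      rw [map_sub, hp₁, cP_nat, hwp, map_zero, sub_zero]
    obtain ⟨u, hup, hu⟩ := comp2 hπ hε (H N) q _ hc2 hp2
    refine ⟨cMap1 (AlgHom.id k A) μ (q + 1) u, ?_, ?_⟩
    · refine (cP_nat μ (q + 2) u).trans ?_
      exact (congrArg _ hup).trans (map_zero _)
    · rw [← cMapA_cD eA, hu, map_sub, hx₁,
        (cMap_exact (A := A) hex (q+1) _).2 ⟨w, rfl⟩, sub_zero]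

end Comparison
end GTLProof

namespace GTLProof
set_option linter.unusedSectionVars false

section BarCompare
variable {k : Type} [CommRing k] {A : Type} [Ring A] [Algebra k A] {B : Type} [Ring B] [Algebra k B]

/-- trivial representation -/
abbrev trv (ε : A →ₐ[k] k) : A →ₐ[k] Module.End k k := (Algebra.lsmul k k k).comp ε

variable (k A) in
def bK : ∀ q, (barC k A q) ≃ₗ[k] (cC k A k q)
  | 0 => LinearEquiv.refl k k
  | (q + 1) => TensorProduct.congr (LinearEquiv.refl k A) (bK q)

variable (k A) in
def bK1 (q) : A ⊗[k] (barC k A q) ≃ₗ[k] A ⊗[k] (cC k A k q) :=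
  TensorProduct.congr (LinearEquiv.refl k A) (bK k A q)

lemma barAct_succ (ε : A →ₐ[k] k) (q) (a : A) (x : A ⊗[k] (barC k A q)) :
    barAct k A ε (q + 1) a x = (a • x : A ⊗[k] (barC k A q)) := by
  change TensorProduct.map (LinearMap.mulLeft k a) LinearMap.id x = a • x
  induction x with
  | zero => simp
  | add x y hx hy => simp only [map_add, hx, hy, smul_add]
  | tmul c x => simp [TensorProduct.smul_tmul']

lemma barB_succ (ε : A →ₐ[k] k) (q) (a : A) (x : A ⊗[k] (barC k A q)) :
    barB k A ε (q + 1) (a ⊗ₜ x) =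
      (-(a • x) - a ⊗ₜ (barB k A ε q x) : A ⊗[k] (barC k A q)) := by
  rw [← barAct_succ ε q a x]
  rfl

lemma congr_smul {M M' : Type} [AddCommGroup M] [Module k M] [AddCommGroup M'] [Module k M']
    (e : M ≃ₗ[k] M') (a : A) (x : A ⊗[k] M) :
    TensorProduct.congr (LinearEquiv.refl k A) e (a • x) =
      a • TensorProduct.congr (LinearEquiv.refl k A) e x := by
  induction x with
  | zero => simp
  | add x y hx hy => simp only [map_add, hx, hy, smul_add]
  | tmul c x => simp [TensorProduct.smul_tmul']

lemma step_bar {M M' : Type} [AddCommGroup M] [Module k M] [AddCommGroup M'] [Module k M']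
    (e : M ≃ₗ[k] M') (b : A ⊗[k] M →ₗ[k] M) (b1 : A ⊗[k] (A ⊗[k] M) →ₗ[k] A ⊗[k] M)
    (c : A ⊗[k] M' →ₗ[k] M') (h1 : ∀ a x, b1 (a ⊗ₜ x) = -(a • x) - a ⊗ₜ (b x))
    (h : ∀ x, e (b x) = - c (TensorProduct.congr (LinearEquiv.refl k A) e x)) (x) :
    TensorProduct.congr (LinearEquiv.refl k A) e (b1 x) =
      - stepB c (TensorProduct.congr (LinearEquiv.refl k A)
        (TensorProduct.congr (LinearEquiv.refl k A) e) x) := by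
  induction x with
  | zero => simp
  | add x y hx hy => simp only [map_add, hx, hy]; abel
  | tmul a x =>
    rw [h1, map_sub, map_neg, congr_smul, TensorProduct.congr_tmul, TensorProduct.congr_tmul,
      LinearEquiv.refl_apply, stepB_tmul, h, TensorProduct.tmul_neg]
    abel

lemma bK_barB (ε : A →ₐ[k] k) : ∀ q x, bK k A q (barB k A ε q x) =
    - cB (trv ε) q (bK1 k A q x)
  | 0 => by
    intro (x : A ⊗[k] k)
    change (- TensorProduct.lift ((LinearMap.lsmul k k).comp ε.toLinearMap)) x =
      - TensorProduct.lift (trv ε).toLinearMap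
        (TensorProduct.congr (LinearEquiv.refl k A) (LinearEquiv.refl k k) x)
    induction x with
    | zero => simp
    | add x y hx hy => simp only [map_add, hx, hy]; abel
    | tmul a x => simp
  | (q + 1) => step_bar (bK k A q) (barB k A ε q) (barB k A ε (q + 1)) (cB (trv ε) q)
      (barB_succ ε q) (bK_barB ε q)

lemma bK_bard (ε : A →ₐ[k] k) (q x) : bK k A q (bard k A ε q x) =
    cD ε (trv ε) q (bK1 k A q x) := by
  rw [bard, LinearMap.add_apply, map_add, bK_barB, cD, LinearMap.sub_apply, sub_eq_add_neg]
  congr 1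
  change bK k A q (gE ε _ x) = gE ε _ (bK1 k A q x)
  exact gE_map (AlgHom.id k A) (bK k A q).toLinearMap ε ε (fun _ => rfl) x

lemma bK_cyc (ε : A →ₐ[k] k) : ∀ q x, x ∈ barCycles k A ε q ↔ IsCyc ε (trv ε) q (bK k A q x)
  | 0, x => ⟨fun _ => trivial, fun _ => trivial⟩
  | (q + 1), x => by
    change A ⊗[k] barC k A q at x
    change bard k A ε q x = 0 ↔ cD ε (trv ε) q (bK1 k A q x) = 0
    rw [← bK_bard]
    exact (map_eq_zero_iff (bK k A q) (bK k A q).injective).symm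

lemma quot_equiv {M₁ M₂ : Type} [AddCommGroup M₁] [Module k M₁] [AddCommGroup M₂] [Module k M₂]
    (Z₁ R₁ : Submodule k M₁) (Z₂ R₂ : Submodule k M₂) (P : M₁ →ₗ[k] M₂)
    (h1 : ∀ x ∈ Z₁, P x ∈ Z₂) (h2 : ∀ x ∈ Z₁, P x ∈ R₂ ↔ x ∈ R₁)
    (h3 : ∀ z ∈ Z₂, ∃ x ∈ Z₁, P x = z) :
    Nonempty ((Z₁ ⧸ Submodule.comap Z₁.subtype R₁) ≃ₗ[k] (Z₂ ⧸ Submodule.comap Z₂.subtype R₂)) := by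
  let f : Z₁ →ₗ[k] (Z₂ ⧸ Submodule.comap Z₂.subtype R₂) :=
    (Submodule.mkQ _) ∘ₗ (P.restrict h1)
  have hf : Function.Surjective f := by
    intro y
    obtain ⟨z, rfl⟩ := Submodule.mkQ_surjective _ y
    obtain ⟨x, hx, e⟩ := h3 z.1 z.2
    refine ⟨⟨x, hx⟩, ?_⟩
    change Submodule.mkQ _ _ = _
    congr 1
    exact Subtype.ext e
  have hk : LinearMap.ker f = Submodule.comap Z₁.subtype R₁ := by
    ext x
    rw [LinearMap.mem_ker]
    change Submodule.Quotient.mk (P.restrict h1 x) = 0 ↔ _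
    rw [Submodule.Quotient.mk_eq_zero]
    exact h2 x.1 x.2
  exact ⟨(Submodule.quotEquivOfEq _ _ hk.symm).trans (f.quotKerEquivOfSurjective hf)⟩

theorem barTor_equiv [Module.Flat k A] [Module.Flat k B] {ε : A →ₐ[k] k} {ε' : B →ₐ[k] k}
    {π : A →ₐ[k] B} (hπ : Function.Surjective π) (hε : ∀ a, ε' (π a) = ε a)
    {I : Type} [AddCommGroup I] [Module k I] {αI : A →ₐ[k] Module.End k I} (hI : Acyc ε αI)
    (ι : I →ₗ[k] A) (hι : Function.Injective ι) (hιe : ∀ a x, ι (αI a x) = a * ι x)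
    (hex : Function.Exact ι π) (q : ℕ) :
    Nonempty (barTor k A ε q ≃ₗ[k] barTor k B ε' q) := by
  have C3 := comp3 (ε := ε) (ε' := ε') hπ hε (fun N _ _ _ => comp1 hπ hI ι hι hιe hex N)
  have htr : (trv ε').comp π = trv ε := by
    ext a; simp [hε]
  have C : ∀ (q : ℕ) (x : cC k A k q), IsCyc ε (trv ε) q x → cP π k q x = 0 →
      ∃ y, cP1 π k q y = 0 ∧ cD ε (trv ε) q y = x := by
    intro q x
    rw [← htr]
    exact C3 q k (trv ε') x
  have hE : Equi π (trv ε) (trv ε') LinearMap.id := by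
    rw [← htr]; exact equi_restr _
  have hs : ∀ q, Function.Surjective (cP π k q) := cMap_surj hπ (fun x => ⟨x, rfl⟩)
  have hPD : ∀ q x, cP π k q (cD ε (trv ε) q x) = cD ε' (trv ε') q (cP1 π k q x) :=
    cMap_cD hE hε
  refine quot_equiv (barCycles k A ε q) (LinearMap.range (bard k A ε q))
    (barCycles k B ε' q) (LinearMap.range (bard k B ε' q))
    ((bK k B q).symm.toLinearMap ∘ₗ (cP π k q) ∘ₗ (bK k A q).toLinearMap) ?_ ?_ ?_
  · intro x hx
    rw [bK_cyc] at hx ⊢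
    have := hx.map hE hε
    simpa using this
  · intro x hx
    rw [bK_cyc] at hx
    constructor
    · rintro ⟨y, hy⟩
      have hy2 : cD ε' (trv ε') q (bK1 k B q y) = cP π k q (bK k A q x) := by
        rw [← bK_bard, hy]; simp
      obtain ⟨z, hz⟩ : ∃ z, cP1 π k q z = bK1 k B q y := hs (q + 1) (bK1 k B q y)
      obtain ⟨w, -, hw⟩ := C q (bK k A q x - cD ε (trv ε) q z) (hx.sub (IsCyc_cD _ _ _ _)) (by
        rw [map_sub, hPD, ← hy2, ← hz, sub_self])
      refine ⟨(bK1 k A q).symm (w + z), (bK k A q).injective ?_⟩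
      rw [bK_bard, LinearEquiv.apply_symm_apply]
      refine (map_add (cD ε (trv ε) q) w z).trans ?_
      rw [hw, sub_add_cancel]
    · rintro ⟨y, rfl⟩
      refine ⟨(bK1 k B q).symm (cP1 π k q (bK1 k A q y)), (bK k B q).injective ?_⟩
      rw [bK_bard, LinearEquiv.apply_symm_apply, ← hPD, ← bK_bard]
      simp
  · intro z hz
    rw [bK_cyc] at hz
    obtain ⟨x, hx⟩ := hs q (bK k B q z)
    have key : ∃ x', IsCyc ε (trv ε) q x' ∧ cP π k q x' = bK k B q z := by
      cases q with
      | zero => exact ⟨x, trivial, hx⟩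
      | succ q =>
        have e1 : cP π k q (cD ε (trv ε) q x) = 0 := by
          refine (hPD q x).trans ?_
          refine Eq.trans ?_ hz
          exact congrArg _ hx
        obtain ⟨w, hw1, hw2⟩ := C q _ (IsCyc_cD ε (trv ε) q x) e1
        obtain ⟨w', hw'⟩ : ∃ w' : cC k A k (q + 1), w' = w := ⟨w, rfl⟩
        refine ⟨x - w', ?_, ?_⟩
        · refine (map_sub (cD ε (trv ε) q) x w').trans (sub_eq_zero.2 ?_)
          rw [hw']; exact hw2.symm
        · rw [map_sub, hx, sub_eq_self, hw']
          exact hw1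
    obtain ⟨x', hx', e'⟩ := key
    refine ⟨(bK k A q).symm x', ?_, ?_⟩
    · rw [bK_cyc]; simpa using hx'
    · simp [e']

end BarCompare
end GTLProof

namespace GTLProof
section Model

/-- labelled matchings of a set `X` -/
@[ext] structure Mt (X G : Type) [CommGroup G] where
  s : X → X
  l : X → G
  inv : ∀ x, s (s x) = x
  nf : ∀ x, s x ≠ x
  hl : ∀ x, l (s x) = l x

variable {X G : Type} [CommGroup G] [DecidableEq X]

def Mt.E (p q : X) (hpq : p ≠ q) (d : Mt X G) : Mt X G where
  s x := if x = p then q else if x = q then p else if x = d.s p then d.s q else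
    if x = d.s q then d.s p else d.s x
  l x := if x = p ∨ x = q then 1 else if x = d.s p ∨ x = d.s q then d.l p * d.l q else d.l x
  inv x := by
    have := d.inv; have := d.nf
    grind
  nf x := by
    have := d.inv; have := d.nf
    grind
  hl x := by
    have := d.inv; have := d.nf; have := d.hl
    grind

def Mt.T (p : X) (g : G) (d : Mt X G) : Mt X G where
  s := d.s
  l x := if x = p ∨ x = d.s p then g * d.l x else d.l x
  inv := d.inv
  nf := d.nf
  hl x := by
    have := d.inv; have := d.nf; have := d.hl
    grind

lemma Mt.E_symm (p q : X) (h : p ≠ q) (d : Mt X G) : d.E p q h = d.E q p h.symm := by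
  have := d.inv; have := d.nf; have := d.hl
  apply Mt.ext
  · funext x; simp only [Mt.E]; grind
  · funext x; simp only [Mt.E]; grind

lemma Mt.E_of (p q : X) (h : p ≠ q) (d : Mt X G) (h1 : d.s p = q) (h2 : d.l p = 1) :
    d.E p q h = d := by
  have := d.inv; have := d.nf; have := d.hl
  apply Mt.ext
  · funext x; simp only [Mt.E]; grind
  · funext x; simp only [Mt.E]; grind

lemma Mt.E_hook (p q r : X) (h : p ≠ q) (h' : q ≠ r) (hpr : p ≠ r) (d : Mt X G) (h1 : d.s p = q)
    (h2 : d.l p = 1) :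
    (d.E q r h').E p q h = d := by
  have := d.inv; have := d.nf; have := d.hl
  apply Mt.ext
  · funext x; simp only [Mt.E]; grind
  · funext x; simp only [Mt.E]; grind

lemma Mt.E_comm (p q r t : X) (h : p ≠ q) (h' : r ≠ t) (h1 : p ≠ r) (h2 : p ≠ t) (h3 : q ≠ r)
    (h4 : q ≠ t) (d : Mt X G) :
    (d.E r t h').E p q h = (d.E p q h).E r t h' := by
  have a1 := d.inv; have a2 := d.nf; have a3 := d.hl
  apply Mt.ext
  · funext x; simp only [Mt.E, h1, h2, h3, h4, h1.symm, h2.symm, h3.symm, h4.symm, if_false, false_or]; grind (splits := 30)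
  · funext x; simp only [Mt.E, h1, h2, h3, h4, h1.symm, h2.symm, h3.symm, h4.symm, if_false, false_or]; grind (splits := 30)

lemma Mt.T_mul (p : X) (g h : G) (d : Mt X G) : (d.T p h).T p g = d.T p (g * h) := by
  have a1 := d.inv; have a2 := d.nf; have a3 := d.hl
  apply Mt.ext
  · rfl
  · funext x; simp only [Mt.T]; grind

lemma Mt.T_one (p : X) (d : Mt X G) : d.T p 1 = d := by
  have a1 := d.inv; have a2 := d.nf; have a3 := d.hl
  apply Mt.ext
  · rfl
  · funext x; simp only [Mt.T]; grind

lemma Mt.T_comm (p q : X) (g h : G) (d : Mt X G) : (d.T p h).T q g = (d.T q g).T p h := by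
  have a1 := d.inv; have a2 := d.nf; have a3 := d.hl
  apply Mt.ext
  · rfl
  · funext x; simp only [Mt.T]; grind

lemma Mt.ET_comm (p q r : X) (h : p ≠ q) (h1 : r ≠ p) (h2 : r ≠ q) (g : G) (d : Mt X G) :
    (d.T r g).E p q h = (d.E p q h).T r g := by
  have a1 := d.inv; have a2 := d.nf; have a3 := d.hl
  apply Mt.ext
  · rfl
  · funext x; simp only [Mt.T, Mt.E]; grind

lemma Mt.TE_slide (p q : X) (h : p ≠ q) (g : G) (d : Mt X G) :
    (d.E p q h).T p g = (d.E p q h).T q g := by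
  have a1 := d.inv; have a2 := d.nf; have a3 := d.hl
  apply Mt.ext
  · rfl
  · funext x; simp only [Mt.T, Mt.E]; grind

lemma Mt.ET_slide (p q : X) (h : p ≠ q) (g : G) (d : Mt X G) :
    (d.T p g).E p q h = (d.T q g).E p q h := by
  have a1 := d.inv; have a2 := d.nf; have a3 := d.hl
  apply Mt.ext
  · rfl
  · funext x; simp only [Mt.T, Mt.E]; grind

lemma Mt.ETE (p q : X) (h : p ≠ q) (g : G) (d : Mt X G) :
    ((d.E p q h).T p g).E p q h = d.E p q h := by
  have a1 := d.inv; have a2 := d.nf; have a3 := d.hl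
  apply Mt.ext
  · funext x; simp only [Mt.T, Mt.E]; grind
  · funext x; simp only [Mt.T, Mt.E]; grind

end Model
end GTLProof

namespace GTLProof
set_option linter.unusedSectionVars false
section Sys

/-- A family of elements satisfying the defining relations of `GTL_n`. -/
structure Sys {k G : Type} [CommRing k] [CommGroup G] (ρ : G →* RingAut k) (δ : k) (n : ℕ)
    (X : Type) [Ring X] [Algebra k X] where
  E : ℕ → X
  T : G → ℕ → X
  e_sq : ∀ i, i + 1 < n → E i * E i = δ • E i
  hook_up : ∀ i, i + 2 < n → E i * E (i + 1) * E i = E i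
  hook_dn : ∀ i, i + 2 < n → E (i + 1) * E i * E (i + 1) = E (i + 1)
  ee : ∀ i j, i + 1 < j → j + 1 < n → E i * E j = E j * E i
  t_mul : ∀ g h j, j < n → T g j * T h j = T (g * h) j
  t_one : ∀ j, j < n → T 1 j = 1
  tt : ∀ g h j l, j < n → l < n → j ≠ l → T g j * T h l = T h l * T g j
  et : ∀ g i l, i + 1 < n → l < n → l ≠ i → l ≠ i + 1 → E i * T g l = T g l * E i
  slide_l : ∀ g i, i + 1 < n → T g i * E i = T g (i + 1) * E i
  slide_r : ∀ g i, i + 1 < n → E i * T g i = E i * T g (i + 1)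
  loop : ∀ g i, i + 1 < n → E i * T g i * E i = (ρ g δ) • E i

variable {k G : Type} [CommRing k] [CommGroup G] {ρ : G →* RingAut k} {δ : k} {n : ℕ}
variable {X : Type} [Ring X] [Algebra k X]

def Sys.lift (S : Sys ρ δ n X) : GTLAlg k G ρ n δ →ₐ[k] X :=
  RingQuot.liftAlgHom k ⟨FreeAlgebra.lift k
      (fun x => match x with
        | GTLGen.e i => S.E i
        | GTLGen.t g j => S.T g j), by
    intro x y h
    induction h with
    | e_sq i => simpa using S.e_sq i (by omega)
    | e_hook i j h =>
      rcases h with h | h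
      · simpa [h] using S.hook_up i (by omega)
      · simpa [h] using S.hook_dn j (by omega)
    | ee_comm i j h => simpa using S.ee i j h (by omega)
    | t_mul g h' j => simpa using S.t_mul g h' j j.2
    | t_one j => simpa using S.t_one j j.2
    | tt_comm g h' j l h =>
      simpa using S.tt g h' j l j.2 l.2 (fun hh => h (Fin.ext hh))
    | et_comm g i l h => simpa using S.et g i l (by omega) l.2 h.1 h.2
    | cap_slide_l g i j j' h h' => simpa [h, h'] using S.slide_l g i (by omega)
    | cap_slide_r g i j j' h h' => simpa [h, h'] using S.slide_r g i (by omega)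
    | loop g i j h => simpa [h] using S.loop g i (by omega)⟩

variable (ρ δ n) in
def ge (i : ℕ) : GTLAlg k G ρ n δ :=
  if h : i < n - 1 then RingQuot.mkAlgHom k (GTLRel k G ρ n δ) (GTLe k G n ⟨i, h⟩) else 0

variable (ρ δ n) in
def gt (g : G) (j : ℕ) : GTLAlg k G ρ n δ :=
  if h : j < n then RingQuot.mkAlgHom k (GTLRel k G ρ n δ) (GTLt k G n g ⟨j, h⟩) else 1

lemma mkE (i : Fin (n - 1)) : RingQuot.mkAlgHom k (GTLRel k G ρ n δ) (GTLe k G n i) = ge ρ δ n i := by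
  simp [ge]

lemma mkT (g : G) (i : Fin n) :
    RingQuot.mkAlgHom k (GTLRel k G ρ n δ) (GTLt k G n g i) = gt ρ δ n g i := by
  simp [gt]

variable (ρ δ n) in
def gSys : Sys ρ δ n (GTLAlg k G ρ n δ) where
  E := ge ρ δ n
  T := gt ρ δ n
  e_sq i h := by
    have := RingQuot.mkAlgHom_rel k (GTLRel.e_sq (k := k) (ρ := ρ) (δ := δ) (⟨i, by omega⟩ : Fin (n - 1)))
    simpa only [map_mul, map_smul, mkE, mkT] using this
  hook_up i h := by
    have := RingQuot.mkAlgHom_rel k (GTLRel.e_hook (k := k) (ρ := ρ) (δ := δ)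
      (⟨i, by omega⟩ : Fin (n - 1)) (⟨i + 1, by omega⟩ : Fin (n - 1)) (Or.inl rfl))
    simpa only [map_mul, map_smul, mkE, mkT] using this
  hook_dn i h := by
    have := RingQuot.mkAlgHom_rel k (GTLRel.e_hook (k := k) (ρ := ρ) (δ := δ)
      (⟨i + 1, by omega⟩ : Fin (n - 1)) (⟨i, by omega⟩ : Fin (n - 1)) (Or.inr rfl))
    simpa only [map_mul, map_smul, mkE, mkT] using this
  ee i j h h' := by
    have := RingQuot.mkAlgHom_rel k (GTLRel.ee_comm (k := k) (ρ := ρ) (δ := δ)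
      (⟨i, by omega⟩ : Fin (n - 1)) (⟨j, by omega⟩ : Fin (n - 1)) h)
    simpa only [map_mul, map_smul, mkE, mkT] using this
  t_mul g h j hj := by
    have := RingQuot.mkAlgHom_rel k (GTLRel.t_mul (k := k) (ρ := ρ) (δ := δ) g h ⟨j, hj⟩)
    simpa only [map_mul, map_smul, mkE, mkT] using this
  t_one j hj := by
    have := RingQuot.mkAlgHom_rel k (GTLRel.t_one (k := k) (ρ := ρ) (δ := δ) ⟨j, hj⟩)
    simpa only [map_mul, map_smul, mkE, mkT, map_one] using this
  tt g h j l hj hl hne := by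
    have := RingQuot.mkAlgHom_rel k (GTLRel.tt_comm (k := k) (ρ := ρ) (δ := δ) g h ⟨j, hj⟩ ⟨l, hl⟩
      (fun h => hne (congrArg Fin.val h)))
    simpa only [map_mul, map_smul, mkE, mkT] using this
  et g i l hi hl h1 h2 := by
    have := RingQuot.mkAlgHom_rel k (GTLRel.et_comm (k := k) (ρ := ρ) (δ := δ) g
      (⟨i, by omega⟩ : Fin (n - 1)) ⟨l, hl⟩ ⟨h1, h2⟩)
    simpa only [map_mul, map_smul, mkE, mkT] using this
  slide_l g i hi := by
    have := RingQuot.mkAlgHom_rel k (GTLRel.cap_slide_l (k := k) (ρ := ρ) (δ := δ) g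
      (⟨i, by omega⟩ : Fin (n - 1)) ⟨i, by omega⟩ ⟨i + 1, hi⟩ rfl rfl)
    simpa only [map_mul, map_smul, mkE, mkT] using this
  slide_r g i hi := by
    have := RingQuot.mkAlgHom_rel k (GTLRel.cap_slide_r (k := k) (ρ := ρ) (δ := δ) g
      (⟨i, by omega⟩ : Fin (n - 1)) ⟨i, by omega⟩ ⟨i + 1, hi⟩ rfl rfl)
    simpa only [map_mul, map_smul, mkE, mkT] using this
  loop g i hi := by
    have := RingQuot.mkAlgHom_rel k (GTLRel.loop (k := k) (ρ := ρ) (δ := δ) g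
      (⟨i, by omega⟩ : Fin (n - 1)) ⟨i, by omega⟩ rfl)
    simpa only [map_mul, map_smul, mkE, mkT] using this

lemma Sys.lift_e (S : Sys ρ δ n X) (i : ℕ) (h : i + 1 < n) : S.lift (ge ρ δ n i) = S.E i := by
  rw [ge, dif_pos (by omega), Sys.lift]
  erw [RingQuot.liftAlgHom_mkAlgHom_apply]
  simp

lemma Sys.lift_t (S : Sys ρ δ n X) (g : G) (i : ℕ) (h : i < n) : S.lift (gt ρ δ n g i) = S.T g i := by
  rw [gt, dif_pos h, Sys.lift]
  erw [RingQuot.liftAlgHom_mkAlgHom_apply]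
  simp

lemma hom_ext {f f' : GTLAlg k G ρ n δ →ₐ[k] X} (h1 : ∀ i, i + 1 < n → f (ge ρ δ n i) = f' (ge ρ δ n i))
    (h2 : ∀ g i, i < n → f (gt ρ δ n g i) = f' (gt ρ δ n g i)) : f = f' := by
  apply RingQuot.ringQuot_ext'
  apply FreeAlgebra.hom_ext
  funext x
  cases x with
  | e i =>
    have := h1 i (by omega)
    rw [← mkE] at this
    exact this
  | t g j =>
    have := h2 g j j.2
    rw [← mkT] at this
    exact this

lemma gen_top (M : Subalgebra k (GTLAlg k G ρ n δ)) (h1 : ∀ i, i + 1 < n → ge ρ δ n i ∈ M)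
    (h2 : ∀ g i, i < n → gt ρ δ n g i ∈ M) (x) : x ∈ M := by
  obtain ⟨y, rfl⟩ := RingQuot.mkAlgHom_surjective k (GTLRel k G ρ n δ) x
  induction y using FreeAlgebra.induction with
  | grade0 r => rw [AlgHom.commutes]; exact M.algebraMap_mem r
  | grade1 x =>
    cases x with
    | e i => exact (mkE (ρ := ρ) (δ := δ) i) ▸ h1 i (by omega)
    | t g j => exact (mkT (ρ := ρ) (δ := δ) g j) ▸ h2 g j j.2
  | mul a b ha hb => rw [map_mul]; exact M.mul_mem ha hb
  | add a b ha hb => rw [map_add]; exact M.add_mem ha hb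

lemma left_ind (M : Submodule k (GTLAlg k G ρ n δ)) (h0 : 1 ∈ M)
    (h1 : ∀ i, i + 1 < n → ∀ x ∈ M, ge ρ δ n i * x ∈ M)
    (h2 : ∀ g i, i < n → ∀ x ∈ M, gt ρ δ n g i * x ∈ M) (x) : x ∈ M := by
  let S : Subalgebra k (GTLAlg k G ρ n δ) :=
    { carrier := {a | ∀ x ∈ M, a * x ∈ M}
      mul_mem' := fun {a b} ha hb x hx => by rw [mul_assoc]; exact ha _ (hb _ hx)
      add_mem' := fun {a b} ha hb x hx => by rw [add_mul]; exact M.add_mem (ha _ hx) (hb _ hx)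
      algebraMap_mem' := fun r x hx => by
        rw [← Algebra.smul_def]; exact M.smul_mem r hx }
  have := gen_top S (fun i hi x hx => h1 i hi x hx) (fun g i hi x hx => h2 g i hi x hx) x 1 h0
  rwa [mul_one] at this

lemma ge_out (i : ℕ) (h : ¬ i + 1 < n) : ge ρ δ n i = 0 := by
  rw [ge, dif_neg (by omega)]

lemma gt_out (g : G) (i : ℕ) (h : ¬ i < n) : gt ρ δ n g i = 1 := by
  rw [gt, dif_neg h]

/-- the anti-involution -/
def starSys (S : Sys ρ δ n X) : Sys ρ δ n Xᵐᵒᵖ where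
  E i := MulOpposite.op (S.E i)
  T g j := MulOpposite.op (S.T g j)
  e_sq i h := by rw [← MulOpposite.op_mul, S.e_sq i h, MulOpposite.op_smul]
  hook_up i h := by rw [← MulOpposite.op_mul, ← MulOpposite.op_mul, ← mul_assoc, S.hook_up i h]
  hook_dn i h := by rw [← MulOpposite.op_mul, ← MulOpposite.op_mul, ← mul_assoc, S.hook_dn i h]
  ee i j h h' := by rw [← MulOpposite.op_mul, ← MulOpposite.op_mul, S.ee i j h h']
  t_mul g h j hj := by rw [← MulOpposite.op_mul, S.t_mul _ _ j hj, mul_comm]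
  t_one j hj := by rw [S.t_one j hj, MulOpposite.op_one]
  tt g h j l hj hl hne := by
    rw [← MulOpposite.op_mul, ← MulOpposite.op_mul, S.tt _ _ _ _ hj hl hne]
  et g i l hi hl h1 h2 := by rw [← MulOpposite.op_mul, ← MulOpposite.op_mul, S.et g i l hi hl h1 h2]
  slide_l g i hi := by rw [← MulOpposite.op_mul, ← MulOpposite.op_mul, S.slide_r g i hi]
  slide_r g i hi := by rw [← MulOpposite.op_mul, ← MulOpposite.op_mul, S.slide_l g i hi]
  loop g i hi := by
    rw [← MulOpposite.op_mul, ← MulOpposite.op_mul, ← mul_assoc, S.loop g i hi, MulOpposite.op_smul]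

/-- index shift -/
def shSys (S : Sys ρ δ (n + 2) X) : Sys ρ δ n X where
  E i := S.E (i + 2)
  T g j := S.T g (j + 2)
  e_sq i h := S.e_sq _ (by omega)
  hook_up i h := S.hook_up _ (by omega)
  hook_dn i h := S.hook_dn _ (by omega)
  ee i j h h' := S.ee _ _ (by omega) (by omega)
  t_mul g h j hj := S.t_mul _ _ _ (by omega)
  t_one j hj := S.t_one _ (by omega)
  tt g h j l hj hl hne := S.tt _ _ _ _ (by omega) (by omega) (by omega)
  et g i l hi hl h1 h2 := S.et _ _ _ (by omega) (by omega) (by omega) (by omega)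
  slide_l g i hi := S.slide_l _ _ (by omega)
  slide_r g i hi := S.slide_r _ _ (by omega)
  loop g i hi := S.loop _ _ (by omega)

variable (ρ δ n) in
def piSys : Sys ρ δ n (MonoidAlgebra k (Fin n → G)) where
  E i := 0
  T g j := if h : j < n then MonoidAlgebra.of k _ (Pi.mulSingle ⟨j, h⟩ g) else 1
  e_sq i h := by simp
  hook_up i h := by simp
  hook_dn i h := by simp
  ee i j h h' := by simp
  t_mul g h j hj := by simp [hj, ← map_mul, Pi.mulSingle_mul]
  t_one j hj := by simp only [hj, dif_pos, Pi.mulSingle_one, map_one]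
  tt g h j l hj hl hne := by
    simp only [hj, hl, dif_pos, ← map_mul]
    rw [mul_comm]
  et g i l hi hl h1 h2 := by simp
  slide_l g i hi := by simp
  slide_r g i hi := by simp
  loop g i hi := by simp

end Sys
end GTLProof

namespace GTLProof
set_option linter.unusedSectionVars false
section U
variable {k G : Type} [CommRing k] [CommGroup G] {ρ : G →* RingAut k} {δ : k} {N n : ℕ}
variable {X : Type} [Ring X] [Algebra k X]

def Sys.U (S : Sys ρ δ N X) : ℕ → X
  | 0 => S.E 0
  | m + 1 => S.E (m + 1) * S.U m

def Sys.C (S : Sys ρ δ N X) : ℕ → X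
  | 0 => S.E 0
  | m + 1 => S.C m * S.E (m + 1)

variable (S : Sys ρ δ N X)

lemma Sys.U_fac (m : ℕ) : ∃ W, S.U m = S.E m * W := by
  cases m with
  | zero => exact ⟨1, by simp [Sys.U]⟩
  | succ m => exact ⟨S.U m, rfl⟩

lemma Sys.EU (m : ℕ) (h : m + 1 < N) : S.E m * S.U m = δ • S.U m := by
  obtain ⟨W, hW⟩ := S.U_fac m
  rw [hW, ← mul_assoc, S.e_sq m h, smul_mul_assoc]

lemma Sys.ETU (m : ℕ) (g : G) (h : m + 1 < N) : S.E m * (S.T g m * S.U m) = (ρ g δ) • S.U m := by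
  obtain ⟨W, hW⟩ := S.U_fac m
  rw [hW, ← mul_assoc, ← mul_assoc, S.loop g m h, smul_mul_assoc]

lemma Sys.u1 (m : ℕ) (h : m + 2 < N) : S.E m * S.U (m + 1) = S.U m := by
  obtain ⟨W, hW⟩ := S.U_fac m
  rw [Sys.U, hW, ← mul_assoc, ← mul_assoc, S.hook_up m h]

lemma Sys.u6 (m : ℕ) (g : G) (h : m + 1 < N) : S.T g m * S.U m = S.T g (m + 1) * S.U m := by
  obtain ⟨W, hW⟩ := S.U_fac m
  rw [hW, ← mul_assoc, S.slide_l g m h, mul_assoc]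

lemma Sys.u2 (i m : ℕ) (h : m + 1 < i) (hi : i + 1 < N) : S.E i * S.U m = S.U m * S.E i := by
  induction m with
  | zero => exact (S.ee 0 i h hi).symm
  | succ m ih =>
    rw [Sys.U, ← mul_assoc, ← S.ee (m+1) i (by omega) hi, mul_assoc, ih (by omega), mul_assoc]

lemma Sys.u4 (p m : ℕ) (g : G) (h : m + 1 < p) (hp : p < N) : S.T g p * S.U m = S.U m * S.T g p := by
  induction m with
  | zero => exact (S.et g 0 p (by omega) hp (by omega) (by omega)).symm
  | succ m ih =>
    rw [Sys.U, ← mul_assoc, ← S.et g (m+1) p (by omega) hp (by omega) (by omega), mul_assoc,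
      ih (by omega), mul_assoc]

lemma Sys.u3 (i d : ℕ) (h : i + 2 + d + 1 < N) :
    S.E i * S.U (i + 2 + d) = S.U (i + 2 + d) * S.E (i + 2) := by
  induction d with
  | zero =>
    have h1 : S.E i * S.U (i + 2) = S.E (i + 2) * S.U i := by
      rw [Sys.U, ← mul_assoc, S.ee i (i+2) (by omega) (by omega), mul_assoc, S.u1 i (by omega)]
    have h2 : S.U (i + 2) * S.E (i + 2) = S.E (i + 2) * S.U i := by
      rw [Sys.U, Sys.U, mul_assoc, mul_assoc, ← S.u2 (i+2) i (by omega) (by omega), ← mul_assoc,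
        ← mul_assoc, S.hook_dn (i+1) (by omega)]
    exact h1.trans h2.symm
  | succ d ih =>
    rw [← add_assoc, Sys.U, ← mul_assoc, S.ee i _ (by omega) (by omega), mul_assoc, ih (by omega), mul_assoc]

lemma Sys.u5 (p d : ℕ) (g : G) (h : p + 1 + d + 1 < N) :
    S.T g p * S.U (p + 1 + d) = S.U (p + 1 + d) * S.T g (p + 2) := by
  induction d with
  | zero =>
    rw [add_zero, Sys.U, ← mul_assoc, ← S.et g (p+1) p (by omega) (by omega) (by omega) (by omega),
      mul_assoc, S.u6 p g (by omega), ← mul_assoc, S.slide_r g (p+1) (by omega), mul_assoc,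
      S.u4 (p+2) p g (by omega) (by omega), mul_assoc]
  | succ d ih =>
    rw [← add_assoc, Sys.U, ← mul_assoc, ← S.et g (p+1+d+1) p (by omega) (by omega) (by omega) (by omega),
      mul_assoc, ih (by omega), mul_assoc]

lemma Sys.CEU (m : ℕ) (h : m + 2 < N) : S.C m * S.E (m + 1) * S.U m = S.E 0 := by
  induction m with
  | zero => exact S.hook_up 0 (by omega)
  | succ m ih =>
    have h1 : S.C (m + 1) * S.E (m + 1 + 1) * S.U (m + 1) = S.C m * (S.E (m + 1) * S.U (m + 2)) := by
      rw [mul_assoc, Sys.C, mul_assoc]; rfl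
    rw [h1, S.u1 (m+1) (by omega), Sys.U, ← mul_assoc, ih (by omega)]

lemma Sys.CU (m : ℕ) (h : m + 1 < N) : S.C m * S.U m = δ • S.E 0 := by
  cases m with
  | zero => exact S.e_sq 0 h
  | succ m =>
    rw [← S.CEU m h, Sys.C, mul_assoc, S.EU (m+1) h, mul_smul_comm, Sys.U, mul_assoc]

lemma Sys.UC (m : ℕ) (h : m + 1 < N) : S.U m * S.C m = δ • S.E m := by
  induction m with
  | zero => exact S.e_sq 0 h
  | succ m ih =>
    rw [Sys.U, Sys.C, mul_assoc, ← mul_assoc (S.U m), ih (by omega), smul_mul_assoc, mul_smul_comm,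
      ← mul_assoc, S.hook_dn m (by omega)]

lemma Sys.star_U (m : ℕ) : (starSys S).U m = MulOpposite.op (S.C m) := by
  induction m with
  | zero => rfl
  | succ m ih => rw [Sys.U, ih, Sys.C, MulOpposite.op_mul]; rfl

end U

section LQ
variable {k G : Type} [CommRing k] [CommGroup G] {ρ : G →* RingAut k} {δ : k} {n : ℕ}
variable {X : Type} [Ring X] [Algebra k X] (S : Sys ρ δ (n + 2) X)

def Sys.sh : GTLAlg k G ρ n δ →ₐ[k] X := (shSys S).lift

lemma Sys.sh_e (i : ℕ) (h : i + 1 < n) : S.sh (ge ρ δ n i) = S.E (i + 2) := (shSys S).lift_e i h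
lemma Sys.sh_t (g : G) (i : ℕ) (h : i < n) : S.sh (gt ρ δ n g i) = S.T g (i + 2) := (shSys S).lift_t g i h

def Sys.LQ (x : X) : Prop := ∃ m g z, m ≤ n ∧ x = S.T g m * S.U m * S.sh z

lemma Sys.LQ_mk (m : ℕ) (g : G) (z) (h : m ≤ n) : S.LQ (S.T g m * S.U m * S.sh z) := ⟨m, g, z, h, rfl⟩

lemma Sys.LQ_smul {x : X} (c : k) (h : S.LQ x) : S.LQ (c • x) := by
  obtain ⟨m, g, z, hm, rfl⟩ := h
  exact ⟨m, g, c • z, hm, by rw [map_smul, mul_smul_comm]⟩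

lemma Sys.LQ_U (m : ℕ) (z) (h : m ≤ n) : S.LQ (S.U m * S.sh z) :=
  ⟨m, 1, z, h, by rw [S.t_one m (by omega), one_mul]⟩

lemma Sys.LQ_mulr {x : X} (z) (h : S.LQ x) : S.LQ (x * S.sh z) := by
  obtain ⟨m, g, z', hm, rfl⟩ := h
  exact ⟨m, g, z' * z, hm, by rw [map_mul, ← mul_assoc]⟩

/-- far generators slide through -/
lemma Sys.e_far (i m : ℕ) (g : G) (hi : i + 1 < n + 2) (hm : m ≤ n) (h : m + 1 < i ∨ i + 1 < m) :
    S.E i * (S.T g m * S.U m) = S.T g m * S.U m * S.sh (ge ρ δ n (if i < m then i else i - 2)) := by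
  rw [← mul_assoc, S.et g i m hi (by omega) (by omega) (by omega), mul_assoc, mul_assoc]
  congr 1
  rcases h with h | h
  · rw [S.u2 i m h hi, if_neg (by omega), S.sh_e _ (by omega)]
    congr 2; omega
  · obtain ⟨d, rfl⟩ : ∃ d, m = i + 2 + d := ⟨m - (i + 2), by omega⟩
    rw [S.u3 i d (by omega), if_pos (by omega), S.sh_e _ (by omega)]

lemma Sys.t_far' (p m : ℕ) (h : G) (hp : p < n + 2) (hm : m ≤ n) (hh : m + 1 < p ∨ p < m) :
    S.T h p * S.U m = S.U m * S.sh (gt ρ δ n h (if p < m then p else p - 2)) := by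
  rcases hh with hh | hh
  · rw [S.u4 p m h hh hp, if_neg (by omega), S.sh_t _ _ (by omega)]
    congr 2; omega
  · obtain ⟨d, rfl⟩ : ∃ d, m = p + 1 + d := ⟨m - (p + 1), by omega⟩
    rw [S.u5 p d h (by omega), if_pos (by omega), S.sh_t _ _ (by omega)]

lemma Sys.t_far (p m : ℕ) (g h : G) (hp : p < n + 2) (hm : m ≤ n) (hh : m + 1 < p ∨ p < m) :
    S.T h p * (S.T g m * S.U m) = S.T g m * S.U m * S.sh (gt ρ δ n h (if p < m then p else p - 2)) := by
  rw [← mul_assoc, S.tt _ _ p m hp (by omega) (by omega), mul_assoc, mul_assoc, S.t_far' p m h hp hm hh]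

lemma Sys.LQ_e (i : ℕ) (hi : i + 1 < n + 2) {x : X} (hx : S.LQ x) : S.LQ (S.E i * x) := by
  obtain ⟨m, g, z, hm, rfl⟩ := hx
  rw [← mul_assoc]
  by_cases h : m + 1 < i ∨ i + 1 < m
  · rw [S.e_far i m g hi hm h]
    exact S.LQ_mulr _ (S.LQ_mk _ _ _ hm)
  apply S.LQ_mulr
  obtain rfl | rfl | rfl : i = m ∨ i = m + 1 ∨ m = i + 1 := by omega
  · rw [S.ETU i g hi]
    exact S.LQ_smul _ (by simpa using S.LQ_U i 1 hm)
  · rw [← mul_assoc, S.et g (m+1) m hi (by omega) (by omega) (by omega), mul_assoc, ← Sys.U,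
      S.u5 m 0 g (by omega), ← S.sh_t _ _ (by omega)]
    exact S.LQ_U _ _ (by omega)
  · rw [S.u6 (i+1) g (by omega), ← mul_assoc, S.et g i (i+2) hi (by omega) (by omega) (by omega), mul_assoc,
      S.u1 i (by omega), S.u4 (i+2) i g (by omega) (by omega), ← S.sh_t _ _ (by omega)]
    exact S.LQ_U _ _ (by omega)

lemma Sys.LQ_t (p : ℕ) (h : G) (hp : p < n + 2) {x : X} (hx : S.LQ x) : S.LQ (S.T h p * x) := by
  obtain ⟨m, g, z, hm, rfl⟩ := hx
  rw [← mul_assoc]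
  apply S.LQ_mulr
  by_cases hh : m + 1 < p ∨ p < m
  · rw [S.t_far p m g h hp hm hh]
    exact (S.LQ_mk _ _ _ hm)
  obtain rfl | rfl : p = m ∨ p = m + 1 := by omega
  · rw [← mul_assoc, S.t_mul _ _ p hp]
    simpa using S.LQ_mk p (h * g) 1 hm
  · rw [S.u6 m g (by omega), ← mul_assoc, S.t_mul _ _ _ hp, ← S.u6 _ _ (by omega)]
    simpa using S.LQ_mk m (h * g) 1 hm

lemma Sys.e_sh (z) : S.E 0 * S.sh z = S.sh z * S.E 0 := by
  let M : Subalgebra k (GTLAlg k G ρ n δ) := (Subalgebra.centralizer k {S.E 0}).comap S.sh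
  have : z ∈ M := by
    apply gen_top M
    · intro i hi
      change S.sh _ ∈ Subalgebra.centralizer k _
      rw [Subalgebra.mem_centralizer_iff]
      rintro _ rfl
      rw [S.sh_e _ hi, S.ee 0 (i+2) (by omega) (by omega)]
    · intro g i hi
      change S.sh _ ∈ Subalgebra.centralizer k _
      rw [Subalgebra.mem_centralizer_iff]
      rintro _ rfl
      rw [S.sh_t _ _ hi, S.et g 0 (i+2) (by omega) (by omega) (by omega) (by omega)]
  exact (Subalgebra.mem_centralizer_iff k).1 this _ rfl

lemma Sys.e0U (m : ℕ) (h : m ≤ n) (g : G) : ∃ w, S.E 0 * (S.T g m * S.U m) = S.E 0 * S.sh w := by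
  match m, h with
  | 0, h =>
    rw [S.ETU 0 g (by omega)]
    exact ⟨algebraMap k _ (ρ g δ), by rw [AlgHom.commutes, Algebra.smul_def, Algebra.commutes]; rfl⟩
  | 1, h =>
    rw [S.u6 1 g (by omega), ← mul_assoc, S.et g 0 2 (by omega) (by omega) (by omega) (by omega), mul_assoc,
      S.u1 0 (by omega), S.u4 2 0 g (by omega) (by omega)]
    exact ⟨gt ρ δ n g 0, by rw [S.sh_t _ _ (by omega)]; rfl⟩
  | m + 2, h =>
    have key : ∀ j, j ≤ m → ∃ w, S.E 0 * S.U (j + 2) = S.E 0 * S.sh w := by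
      intro j hj
      induction j with
      | zero =>
        refine ⟨ge ρ δ n 0, ?_⟩
        rw [S.sh_e _ (by omega), Sys.U, ← mul_assoc, S.ee 0 2 (by omega) (by omega), mul_assoc,
          S.u1 0 (by omega)]
        rfl
      | succ j ih =>
        obtain ⟨w, hw⟩ := ih (by omega)
        refine ⟨ge ρ δ n (j + 1) * w, ?_⟩
        rw [Sys.U, ← mul_assoc, S.ee 0 (j + 2 + 1) (by omega) (by omega), mul_assoc, hw, ← mul_assoc,
          ← S.ee 0 (j + 2 + 1) (by omega) (by omega), map_mul, S.sh_e _ (by omega), mul_assoc]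
    obtain ⟨w, hw⟩ := key m le_rfl
    refine ⟨gt ρ δ n g m * w, ?_⟩
    rw [← mul_assoc, S.et g 0 (m + 2) (by omega) (by omega) (by omega) (by omega), mul_assoc, hw,
      ← mul_assoc, ← S.et g 0 (m + 2) (by omega) (by omega) (by omega) (by omega), map_mul,
      S.sh_t _ _ (by omega), mul_assoc]

end LQ

section Corner
variable {k G : Type} [CommRing k] [CommGroup G] {ρ : G →* RingAut k} {δ : k} {n : ℕ}

lemma span_LQ (a : GTLAlg k G ρ (n + 2) δ) :
    a * ge ρ δ (n + 2) 0 ∈ Submodule.span k {x | (gSys ρ δ (n + 2)).LQ x} := by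
  set P := Submodule.span k {x | (gSys ρ δ (n + 2)).LQ x}
  have := left_ind (P.comap (LinearMap.mulRight k (ge ρ δ (n + 2) 0))) ?_ ?_ ?_ a
  · exact this
  · change 1 * ge ρ δ (n + 2) 0 ∈ P
    apply Submodule.subset_span
    have := (gSys ρ δ (n + 2)).LQ_U 0 1 (by omega)
    rw [map_one, mul_one] at this
    rw [one_mul]; exact this
  · intro i hi x hx
    change ge ρ δ (n + 2) i * x * ge ρ δ (n + 2) 0 ∈ P
    change x * ge ρ δ (n + 2) 0 ∈ P at hx
    rw [mul_assoc]
    generalize x * ge ρ δ (n + 2) 0 = y at hx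
    induction hx using Submodule.span_induction with
    | mem x hx => exact Submodule.subset_span ((gSys ρ δ (n + 2)).LQ_e i hi hx)
    | zero => rw [mul_zero]; exact P.zero_mem
    | add x y _ _ h1 h2 => rw [mul_add]; exact P.add_mem h1 h2
    | smul c x _ h1 => rw [mul_smul_comm]; exact P.smul_mem _ h1
  · intro g i hi x hx
    change gt ρ δ (n + 2) g i * x * ge ρ δ (n + 2) 0 ∈ P
    change x * ge ρ δ (n + 2) 0 ∈ P at hx
    rw [mul_assoc]
    generalize x * ge ρ δ (n + 2) 0 = y at hx
    induction hx using Submodule.span_induction with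
    | mem x hx => exact Submodule.subset_span ((gSys ρ δ (n + 2)).LQ_t i g hi hx)
    | zero => rw [mul_zero]; exact P.zero_mem
    | add x y _ _ h1 h2 => rw [mul_add]; exact P.add_mem h1 h2
    | smul c x _ h1 => rw [mul_smul_comm]; exact P.smul_mem _ h1

lemma corner (a : GTLAlg k G ρ (n + 2) δ) : ∃ w,
    ge ρ δ (n + 2) 0 * a * ge ρ δ (n + 2) 0 = ge ρ δ (n + 2) 0 * (gSys ρ δ (n + 2)).sh w := by
  have := span_LQ a
  rw [mul_assoc]
  generalize a * ge ρ δ (n + 2) 0 = y at this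
  induction this using Submodule.span_induction with
  | mem x hx =>
    obtain ⟨m, g, z, hm, rfl⟩ := hx
    obtain ⟨w, hw⟩ := (gSys ρ δ (n + 2)).e0U m hm g
    refine ⟨w * z, ?_⟩
    have := congrArg (· * (gSys ρ δ (n + 2)).sh z) hw
    simp only [mul_assoc] at this
    rw [map_mul, mul_assoc]
    exact this
  | zero => exact ⟨0, by rw [map_zero]⟩
  | add x y _ _ h1 h2 =>
    obtain ⟨w, hw⟩ := h1
    obtain ⟨w', hw'⟩ := h2
    exact ⟨w + w', by rw [map_add, mul_add, mul_add, hw, hw']⟩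
  | smul c x _ h1 =>
    obtain ⟨w, hw⟩ := h1
    exact ⟨c • w, by rw [map_smul, mul_smul_comm, mul_smul_comm, hw]⟩
end Corner
end GTLProof

namespace GTLProof
set_option linter.unusedSectionVars false
set_option linter.unusedSimpArgs false
section Wt
variable {X G k : Type} [CommGroup G] [DecidableEq X] [CommRing k] (ρ : G →* RingAut k) (δ : k)

def opW (f : Mt X G → Mt X G) (w : Mt X G → k) : Module.End k (Mt X G →₀ k) :=
  Finsupp.lsum k fun d => w d • Finsupp.lsingle (f d)

lemma opW_single (f : Mt X G → Mt X G) (w : Mt X G → k) (d : Mt X G) (c : k) :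
    opW f w (Finsupp.single d c) = Finsupp.single (f d) (w d * c) := by
  simp [opW]

lemma opW_mul (f f' : Mt X G → Mt X G) (w w' : Mt X G → k) :
    opW f w * opW f' w' = opW (fun d => f (f' d)) (fun d => w' d * w (f' d)) := by
  apply Finsupp.lhom_ext
  intro d c
  rw [Module.End.mul_apply, opW_single, opW_single, opW_single]
  congr 1
  ring

lemma opW_congr {f f' : Mt X G → Mt X G} {w w' : Mt X G → k} (h1 : ∀ d, f d = f' d)
    (h2 : ∀ d, w d = w' d) : opW f w = opW f' w' := by
  rw [funext h1, funext h2]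

def wE (p q : X) (d : Mt X G) : k := if d.s p = q then ρ (d.l p) δ else 1

def opE (p q : X) (h : p ≠ q) : Module.End k (Mt X G →₀ k) := opW (Mt.E p q h) (wE ρ δ p q)
def opT (p : X) (g : G) : Module.End k (Mt X G →₀ k) := opW (Mt.T p g) (fun _ => 1)

lemma opE_symm (p q : X) (h : p ≠ q) : opE ρ δ p q h = opE (G := G) ρ δ q p h.symm := by
  apply opW_congr
  · intro d; exact Mt.E_symm _ _ _ _
  · intro d
    have := d.inv; have := d.hl
    simp only [wE]; grind

lemma Mt.Es (p q : X) (h : p ≠ q) (d : Mt X G) : (d.E p q h).s p = q ∧ (d.E p q h).l p = 1 := by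
  simp [Mt.E]

lemma opE_sq (p q : X) (h : p ≠ q) : opE ρ δ p q h * opE ρ δ p q h = δ • opE (G := G) ρ δ p q h := by
  apply Finsupp.lhom_ext
  intro d c
  rw [Module.End.mul_apply, LinearMap.smul_apply, opE, opW_single, opW_single,
    Mt.E_of p q h _ (Mt.Es ..).1 (Mt.Es ..).2, Finsupp.smul_single]
  congr 1
  rw [wE, if_pos (Mt.Es ..).1, (Mt.Es ..).2, map_one]
  simp [mul_comm]

lemma opE_hook (p q r : X) (h : p ≠ q) (h' : q ≠ r) (hpr : p ≠ r) :
    opE ρ δ p q h * opE ρ δ q r h' * opE ρ δ p q h = opE (G := G) ρ δ p q h := by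
  simp only [opE, opW_mul]
  apply opW_congr
  · intro d; exact Mt.E_hook _ _ _ _ _ hpr _ (Mt.Es ..).1 (Mt.Es ..).2
  · intro d
    have := d.inv; have := d.nf
    have h1 : wE ρ δ q r (d.E p q h) = 1 := by
      rw [wE, if_neg]; simp [Mt.E]; grind
    have h2 : wE ρ δ p q ((d.E p q h).E q r h') = 1 := by
      rw [wE, if_neg]
      generalize hd : d.E p q h = d'
      have a1 : d'.s p = q := by rw [← hd]; exact (Mt.Es ..).1
      have := d'.inv; have := d'.nf
      simp only [Mt.E]; grind
    rw [h1, h2]; simp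

lemma opE_comm (p q r t : X) (h : p ≠ q) (h' : r ≠ t) (h1 : p ≠ r) (h2 : p ≠ t) (h3 : q ≠ r)
    (h4 : q ≠ t) : opE ρ δ p q h * opE ρ δ r t h' = opE (G := G) ρ δ r t h' * opE ρ δ p q h := by
  simp only [opE, opW_mul]
  apply opW_congr
  · intro d; exact Mt.E_comm _ _ _ _ _ _ h1 h2 h3 h4 _
  · intro d
    have a1 := d.inv; have a2 := d.nf; have a3 := d.hl
    simp only [wE, Mt.E, h1, h2, h3, h4, h1.symm, h2.symm, h3.symm, h4.symm, if_false, false_or]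
    by_cases c1 : d.s r = t
    · have : ¬ (p = d.s r) := by grind
      have : ¬ (p = d.s t) := by grind
      have : ¬ (r = d.s p) := by grind
      have : ¬ (r = d.s q) := by grind
      simp [*, h3.symm, h2.symm, mul_comm]
    · by_cases c2 : d.s p = q
      · have : ¬ (p = d.s r) := by grind
        have : ¬ (p = d.s t) := by grind
        have : ¬ (r = d.s p) := by grind
        have : ¬ (r = d.s q) := by grind
        simp [*, h3.symm, h2.symm, mul_comm]
      · grind

lemma opT_mul (p : X) (g h : G) : opT p g * opT p h = opT (k := k) p (g * h) := by
  simp only [opT, opW_mul]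
  exact opW_congr (fun d => Mt.T_mul _ _ _ _) (fun d => by simp)

lemma opT_one (p : X) : opT p (1 : G) = (1 : Module.End k (Mt X G →₀ k)) := by
  apply Finsupp.lhom_ext
  intro d c
  rw [opT, opW_single, Mt.T_one]; simp

lemma opT_comm (p q : X) (g h : G) : opT p g * opT q h = opT (k := k) q h * opT p g := by
  simp only [opT, opW_mul]
  exact opW_congr (fun d => Mt.T_comm _ _ _ _ _) (fun d => by simp)

lemma opET_comm (p q r : X) (h : p ≠ q) (h1 : r ≠ p) (h2 : r ≠ q) (g : G) :
    opE ρ δ p q h * opT r g = opT r g * opE ρ δ p q h := by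
  simp only [opT, opE, opW_mul]
  refine opW_congr (fun d => Mt.ET_comm _ _ _ _ h1 h2 _ _) (fun d => ?_)
  have a1 := d.inv; have a2 := d.nf; have a3 := d.hl
  simp only [wE, Mt.T]; grind

lemma opTE_slide (p q : X) (h : p ≠ q) (g : G) :
    opT p g * opE ρ δ p q h = opT q g * opE ρ δ p q h := by
  simp only [opT, opE, opW_mul]
  refine opW_congr (fun d => Mt.TE_slide _ _ _ _ _) (fun d => rfl)

lemma opET_slide (p q : X) (h : p ≠ q) (g : G) :
    opE ρ δ p q h * opT p g = opE ρ δ p q h * opT q g := by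
  simp only [opT, opE, opW_mul]
  refine opW_congr (fun d => Mt.ET_slide _ _ _ _ _) (fun d => ?_)
  have a1 := d.inv; have a2 := d.nf; have a3 := d.hl
  simp only [wE, Mt.T]; grind

lemma opETE (p q : X) (h : p ≠ q) (g : G) :
    opE ρ δ p q h * opT p g * opE ρ δ p q h = (ρ g δ) • opE ρ δ p q h := by
  apply Finsupp.lhom_ext
  intro d c
  rw [Module.End.mul_apply, Module.End.mul_apply, LinearMap.smul_apply, opE, opT, opW_single, opW_single, opW_single,
    Mt.ETE, Finsupp.smul_single]
  congr 1
  simp [wE, Mt.E, Mt.T, mul_comm]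

def mSys (n : ℕ) (c : ℕ → X) (hc : Function.Injective c) :
    Sys ρ δ n (Module.End k (Mt X G →₀ k)) where
  E i := opE ρ δ (c i) (c (i + 1)) (fun h => by have := hc h; omega)
  T g j := opT (c j) g
  e_sq i _ := opE_sq ..
  hook_up i _ := opE_hook _ _ _ _ _ _ _ (fun h => by have := hc h; omega)
  hook_dn i _ := by
    rw [opE_symm ρ δ (c i), opE_symm ρ δ (c (i+1))]
    exact opE_hook _ _ _ _ _ _ _ (fun h => by have := hc h; omega)
  ee i j h _ := by
    apply opE_comm <;> (intro h; have := hc h; omega)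
  t_mul g h j _ := opT_mul ..
  t_one j _ := opT_one _
  tt g h j l _ _ _ := opT_comm ..
  et g i l _ _ h1 h2 := by
    apply opET_comm <;> (intro h; have := hc h; omega)
  slide_l g i _ := opTE_slide ..
  slide_r g i _ := opET_slide ..
  loop g i _ := opETE ..

end Wt

section Phi
variable {k G : Type} [CommRing k] [CommGroup G] (ρ : G →* RingAut k) (δ : k) (n : ℕ)

abbrev Dg (G : Type) [CommGroup G] := Mt (ℕ ⊕ ℕ) G

def PL : GTLAlg k G ρ n δ →ₐ[k] Module.End k (Dg G →₀ k) := (mSys ρ δ n Sum.inl Sum.inl_injective).lift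
def PR : GTLAlg k G ρ n δ →ₐ[k] Module.End k (Dg G →₀ k) := (mSys ρ δ n Sum.inr Sum.inr_injective).lift

lemma PL_e (i : ℕ) (h : i + 1 < n) : PL ρ δ n (ge ρ δ n i) = opE ρ δ (Sum.inl i) (Sum.inl (i+1)) (by simp) :=
  Sys.lift_e _ i h
lemma PR_e (i : ℕ) (h : i + 1 < n) : PR ρ δ n (ge ρ δ n i) = opE ρ δ (Sum.inr i) (Sum.inr (i+1)) (by simp) :=
  Sys.lift_e _ i h
lemma PL_t (g : G) (i : ℕ) (h : i < n) : PL ρ δ n (gt ρ δ n g i) = opT (Sum.inl i) g :=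
  Sys.lift_t _ g i h
lemma PR_t (g : G) (i : ℕ) (h : i < n) : PR ρ δ n (gt ρ δ n g i) = opT (Sum.inr i) g :=
  Sys.lift_t _ g i h

lemma comm_gen {X : Type} [Ring X] [Algebra k X] (f : GTLAlg k G ρ n δ →ₐ[k] X) (y : X)
    (h1 : ∀ i, i + 1 < n → y * f (ge ρ δ n i) = f (ge ρ δ n i) * y)
    (h2 : ∀ g i, i < n → y * f (gt ρ δ n g i) = f (gt ρ δ n g i) * y) (a) : y * f a = f a * y := by
  let M : Subalgebra k (GTLAlg k G ρ n δ) := (Subalgebra.centralizer k {y}).comap f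
  have : a ∈ M := by
    apply gen_top M
    · intro i hi
      change f _ ∈ Subalgebra.centralizer k _
      rw [Subalgebra.mem_centralizer_iff]
      rintro _ rfl
      exact h1 i hi
    · intro g i hi
      change f _ ∈ Subalgebra.centralizer k _
      rw [Subalgebra.mem_centralizer_iff]
      rintro _ rfl
      exact h2 g i hi
  exact (Subalgebra.mem_centralizer_iff k).1 this _ rfl

lemma PLR (a b) : PL ρ δ n a * PR ρ δ n b = PR ρ δ n b * PL ρ δ n a := by
  refine comm_gen (X := Module.End k (Dg G →₀ k)) ρ δ n (PR ρ δ n) (PL ρ δ n a) ?_ ?_ b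
  · intro i hi
    symm
    refine comm_gen (X := Module.End k (Dg G →₀ k)) ρ δ n (PL ρ δ n) _ ?_ ?_ a
    · intro j hj
      rw [PL_e _ _ _ _ hj, PR_e _ _ _ _ hi]
      apply opE_comm <;> simp
    · intro g j hj
      rw [PL_t _ _ _ _ _ hj, PR_e _ _ _ _ hi]
      apply opET_comm <;> simp
  · intro h i hi
    symm
    refine comm_gen (X := Module.End k (Dg G →₀ k)) ρ δ n (PL ρ δ n) _ ?_ ?_ a
    · intro j hj
      rw [PL_e _ _ _ _ hj, PR_t _ _ _ _ _ hi]
      symm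
      apply opET_comm <;> simp
    · intro g j hj
      rw [PL_t _ _ _ _ _ hj, PR_t _ _ _ _ _ hi]
      apply opT_comm

def dId : Dg G where
  s := Sum.swap
  l _ := 1
  inv x := by simp
  nf x := by cases x <;> simp
  hl _ := rfl

def phi : GTLAlg k G ρ n δ →ₗ[k] (Dg G →₀ k) :=
  (LinearMap.applyₗ (Finsupp.single dId (1 : k))).comp (PL ρ δ n).toLinearMap

lemma phi_apply (a) : phi ρ δ n a = PL ρ δ n a (Finsupp.single dId 1) := rfl

lemma phi_mul (a b) : phi ρ δ n (a * b) = PL ρ δ n a (phi ρ δ n b) := by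
  rw [phi_apply, map_mul, Module.End.mul_apply, ← phi_apply]

def starH : GTLAlg k G ρ n δ →ₐ[k] (GTLAlg k G ρ n δ)ᵐᵒᵖ := (starSys (gSys ρ δ n)).lift
def str (a : GTLAlg k G ρ n δ) : GTLAlg k G ρ n δ := (starH ρ δ n a).unop

variable {ρ δ n}
lemma str_mul (a b : GTLAlg k G ρ n δ) : str ρ δ n (a * b) = str ρ δ n b * str ρ δ n a := by
  simp [str]
lemma str_one : str ρ δ n 1 = 1 := by simp [str]
lemma str_add (a b : GTLAlg k G ρ n δ) : str ρ δ n (a + b) = str ρ δ n a + str ρ δ n b := by simp [str]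
lemma str_smul (c : k) (a : GTLAlg k G ρ n δ) : str ρ δ n (c • a) = c • str ρ δ n a := by simp [str]
lemma str_e (i : ℕ) : str ρ δ n (ge ρ δ n i) = ge ρ δ n i := by
  by_cases h : i + 1 < n
  · rw [str, starH, Sys.lift_e _ _ h]; rfl
  · rw [ge_out _ h]; simp [str]
lemma str_t (g : G) (i : ℕ) : str ρ δ n (gt ρ δ n g i) = gt ρ δ n g i := by
  by_cases h : i < n
  · rw [str, starH, Sys.lift_t _ _ _ h]; rfl
  · rw [gt_out _ _ h]; simp [str]
lemma str_str (a : GTLAlg k G ρ n δ) : str ρ δ n (str ρ δ n a) = a := by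
  let f : GTLAlg k G ρ n δ →ₐ[k] GTLAlg k G ρ n δ :=
    AlgHom.ofLinearMap
      { toFun := fun a => str ρ δ n (str ρ δ n a)
        map_add' := fun a b => by rw [str_add, str_add]
        map_smul' := fun a b => by rw [str_smul, str_smul]; rfl }
      (by change str ρ δ n (str ρ δ n 1) = 1; rw [str_one, str_one])
      (fun a b => by
        change str ρ δ n (str ρ δ n (a * b)) = str ρ δ n (str ρ δ n a) * str ρ δ n (str ρ δ n b)
        rw [str_mul, str_mul])
  have : f = AlgHom.id k _ := by
    apply hom_ext
    · intro i _; change str ρ δ n (str ρ δ n _) = _; rw [str_e, str_e]; rfl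
    · intro g i _; change str ρ δ n (str ρ δ n _) = _; rw [str_t, str_t]; rfl
  exact DFunLike.congr_fun this a

/-- the right action description of `phi` -/
lemma phi_str (a : GTLAlg k G ρ n δ) : PR ρ δ n (str ρ δ n a) (Finsupp.single dId 1) = phi ρ δ n a := by
  let M : Submodule k (GTLAlg k G ρ n δ) :=
    LinearMap.eqLocus (phi ρ δ n) ((LinearMap.applyₗ (Finsupp.single dId (1 : k))).comp
      ((PR ρ δ n).toLinearMap.comp
        ({ toFun := str ρ δ n, map_add' := str_add, map_smul' := fun c a => str_smul c a } : GTLAlg k G ρ n δ →ₗ[k] GTLAlg k G ρ n δ)))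
  have hM : ∀ a, a ∈ M ↔ phi ρ δ n a = PR ρ δ n (str ρ δ n a) (Finsupp.single dId 1) := fun a => Iff.rfl
  refine ((hM a).1 (left_ind M ?_ ?_ ?_ a)).symm
  · rw [hM, str_one, phi_apply, map_one (PL ρ δ n), map_one (PR ρ δ n)]
  · intro i hi x hx
    rw [hM] at hx ⊢
    rw [phi_mul, hx, ← Module.End.mul_apply, PLR, str_mul, map_mul, Module.End.mul_apply, Module.End.mul_apply]
    congr 1
    rw [str_e, PL_e _ _ _ _ hi, PR_e _ _ _ _ hi, opE, opE, opW_single, opW_single]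
    congr 1
    · apply Mt.ext
      · funext x; cases x <;> simp [Mt.E, dId] <;> grind
      · funext x; cases x <;> simp [Mt.E, dId]
  · intro g i hi x hx
    rw [hM] at hx ⊢
    rw [phi_mul, hx, ← Module.End.mul_apply, PLR, str_mul, map_mul, Module.End.mul_apply, Module.End.mul_apply]
    congr 1
    rw [str_t, PL_t _ _ _ _ _ hi, PR_t _ _ _ _ _ hi, opT, opT, opW_single, opW_single]
    congr 1
    · apply Mt.ext
      · funext x; cases x <;> simp [Mt.T, dId] 
      · funext x; cases x <;> simp [Mt.T, dId]

lemma phi_mul_right (a b : GTLAlg k G ρ n δ) : phi ρ δ n (a * b) = PR ρ δ n (str ρ δ n b) (phi ρ δ n a) := by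
  rw [phi_mul, ← phi_str b, ← Module.End.mul_apply, PLR, Module.End.mul_apply, phi_apply]

lemma ker_mul (a b c : GTLAlg k G ρ n δ) (h : phi ρ δ n b = 0) : phi ρ δ n (a * b * c) = 0 := by
  rw [phi_mul_right, phi_mul, h, map_zero, map_zero]

end Phi
end GTLProof

namespace GTLProof
set_option linter.unusedSectionVars false
set_option linter.unusedSimpArgs false
section Emb
variable {k G : Type} [CommRing k] [CommGroup G] {ρ : G →* RingAut k} {δ : k} {n : ℕ}

lemma intertw {V W : Type} [AddCommGroup V] [AddCommGroup W] [Module k V] [Module k W]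
    (α : GTLAlg k G ρ n δ →ₐ[k] Module.End k V) (β : GTLAlg k G ρ n δ →ₐ[k] Module.End k W)
    (F : V →ₗ[k] W)
    (h1 : ∀ i, i + 1 < n → ∀ v, F (α (ge ρ δ n i) v) = β (ge ρ δ n i) (F v))
    (h2 : ∀ g i, i < n → ∀ v, F (α (gt ρ δ n g i) v) = β (gt ρ δ n g i) (F v)) (a) :
    ∀ v, F (α a v) = β a (F v) := by
  let S : Subalgebra k (GTLAlg k G ρ n δ) :=
    { carrier := {a | ∀ v, F (α a v) = β a (F v)}
      mul_mem' := fun {a b} ha hb v => by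
        rw [map_mul, map_mul, Module.End.mul_apply, Module.End.mul_apply, ha, hb]
      add_mem' := fun {a b} ha hb v => by
        rw [map_add, map_add, LinearMap.add_apply, LinearMap.add_apply, map_add, ha, hb]
      algebraMap_mem' := fun r v => by
        rw [AlgHom.commutes, AlgHom.commutes, Module.algebraMap_end_apply, Module.algebraMap_end_apply, map_smul] }
  exact gen_top S h1 h2 a

def sft : ℕ ⊕ ℕ → ℕ ⊕ ℕ := Sum.map (· + 2) (· + 2)

lemma sft_inj : Function.Injective sft := by
  intro a b h; cases a <;> cases b <;> simp [sft] at h ⊢ <;> exact h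

def embs (f : ℕ ⊕ ℕ → ℕ ⊕ ℕ) : ℕ ⊕ ℕ → ℕ ⊕ ℕ
  | Sum.inl 0 => Sum.inl 1
  | Sum.inl 1 => Sum.inl 0
  | Sum.inl (i+2) => sft (f (Sum.inl i))
  | Sum.inr 0 => Sum.inr 1
  | Sum.inr 1 => Sum.inr 0
  | Sum.inr (i+2) => sft (f (Sum.inr i))

def embl (f : ℕ ⊕ ℕ → G) : ℕ ⊕ ℕ → G
  | Sum.inl (i+2) => (f (Sum.inl i))
  | Sum.inr (i+2) => (f (Sum.inr i))
  | _ => 1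

lemma embs_sft (f : ℕ ⊕ ℕ → ℕ ⊕ ℕ) (x) : embs f (sft x) = sft (f x) := by
  cases x <;> rfl
lemma embl_sft (f : ℕ ⊕ ℕ → G) (x) : embl f (sft x) = (f x) := by
  cases x <;> rfl

lemma pt_cases (x : ℕ ⊕ ℕ) : x = Sum.inl 0 ∨ x = Sum.inl 1 ∨ x = Sum.inr 0 ∨ x = Sum.inr 1 ∨ ∃ y, x = sft y := by
  match x with
  | Sum.inl 0 => simp
  | Sum.inl 1 => simp
  | Sum.inl (i+2) => right; right; right; right; exact ⟨Sum.inl i, rfl⟩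
  | Sum.inr 0 => simp
  | Sum.inr 1 => simp
  | Sum.inr (i+2) => right; right; right; right; exact ⟨Sum.inr i, rfl⟩

def emb (d : Dg G) : Dg G where
  s := embs d.s
  l := embl d.l
  inv x := by
    rcases pt_cases x with rfl | rfl | rfl | rfl | ⟨y, rfl⟩ <;> try rfl
    rw [embs_sft, embs_sft, d.inv]
  nf x := by
    rcases pt_cases x with rfl | rfl | rfl | rfl | ⟨y, rfl⟩
    iterate 4 simp [embs]
    rw [embs_sft]
    exact fun h => d.nf y (sft_inj h)
  hl x := by
    rcases pt_cases x with rfl | rfl | rfl | rfl | ⟨y, rfl⟩ <;> try rfl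
    rw [embs_sft, embl_sft, embl_sft, d.hl]

lemma emb_inj : Function.Injective (emb : Dg G → Dg G) := by
  intro d d' h
  apply Mt.ext
  · funext x
    apply sft_inj
    rw [← embs_sft, ← embs_sft]
    exact congrFun (congrArg Mt.s h) _
  · funext x
    rw [← embl_sft d.l, ← embl_sft d'.l]
    exact congrFun (congrArg Mt.l h) _

lemma sft_ne (y : ℕ ⊕ ℕ) : sft y ≠ Sum.inl 0 ∧ sft y ≠ Sum.inl 1 ∧ sft y ≠ Sum.inr 0 ∧ sft y ≠ Sum.inr 1 := by
  cases y <;> simp [sft]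

lemma emb_E (p q : ℕ ⊕ ℕ) (h : p ≠ q) (h' : sft p ≠ sft q) (d : Dg G) : (emb d).E (sft p) (sft q) h' = emb (d.E p q h) := by
  have hs : ∀ x y, (sft x = sft y) ↔ x = y := fun x y => sft_inj.eq_iff
  have np := sft_ne p
  have nq := sft_ne q
  have np' := sft_ne (d.s p)
  have nq' := sft_ne (d.s q)
  apply Mt.ext
  · funext x
    change _ = embs _ _
    rcases pt_cases x with rfl | rfl | rfl | rfl | ⟨y, rfl⟩
    · simp [Mt.E, emb, embs_sft, embl_sft, np.1.symm, nq.1.symm, np'.1.symm, nq'.1.symm]; rfl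
    · simp [Mt.E, emb, embs_sft, embl_sft, np.2.1.symm, nq.2.1.symm, np'.2.1.symm, nq'.2.1.symm]; rfl
    · simp [Mt.E, emb, embs_sft, embl_sft, np.2.2.1.symm, nq.2.2.1.symm, np'.2.2.1.symm, nq'.2.2.1.symm]; rfl
    · simp [Mt.E, emb, embs_sft, embl_sft, np.2.2.2.symm, nq.2.2.2.symm, np'.2.2.2.symm, nq'.2.2.2.symm]; rfl
    · simp only [Mt.E, emb, embs_sft, embl_sft, hs]
      simp only [apply_ite sft]
  · funext x
    change _ = embl _ _
    rcases pt_cases x with rfl | rfl | rfl | rfl | ⟨y, rfl⟩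
    · simp [Mt.E, emb, embs_sft, embl_sft, np.1.symm, nq.1.symm, np'.1.symm, nq'.1.symm]; rfl
    · simp [Mt.E, emb, embs_sft, embl_sft, np.2.1.symm, nq.2.1.symm, np'.2.1.symm, nq'.2.1.symm]; rfl
    · simp [Mt.E, emb, embs_sft, embl_sft, np.2.2.1.symm, nq.2.2.1.symm, np'.2.2.1.symm, nq'.2.2.1.symm]; rfl
    · simp [Mt.E, emb, embs_sft, embl_sft, np.2.2.2.symm, nq.2.2.2.symm, np'.2.2.2.symm, nq'.2.2.2.symm]; rfl
    · simp only [Mt.E, emb, embs_sft, embl_sft, hs]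

lemma emb_T (p : ℕ ⊕ ℕ) (g : G) (d : Dg G) : (emb d).T (sft p) g = emb (d.T p g) := by
  have hs : ∀ x y, (sft x = sft y) ↔ x = y := fun x y => sft_inj.eq_iff
  have np := sft_ne p
  have np' := sft_ne (d.s p)
  apply Mt.ext
  · rfl
  · funext x
    change _ = embl _ _
    rcases pt_cases x with rfl | rfl | rfl | rfl | ⟨y, rfl⟩
    · simp [Mt.T, emb, embs_sft, embl_sft, np.1.symm, np'.1.symm]; rfl
    · simp [Mt.T, emb, embs_sft, embl_sft, np.2.1.symm, np'.2.1.symm]; rfl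
    · simp [Mt.T, emb, embs_sft, embl_sft, np.2.2.1.symm, np'.2.2.1.symm]; rfl
    · simp [Mt.T, emb, embs_sft, embl_sft, np.2.2.2.symm, np'.2.2.2.symm]; rfl
    · simp only [Mt.T, emb, embs_sft, embl_sft, hs]

lemma emb_wE (p q : ℕ ⊕ ℕ) (d : Dg G) : wE ρ δ (sft p) (sft q) (emb d) = wE ρ δ p q d := by
  have hs : ∀ x y, (sft x = sft y) ↔ x = y := fun x y => sft_inj.eq_iff
  simp only [wE, emb, embs_sft, embl_sft, hs]

def gsh : GTLAlg k G ρ n δ →ₐ[k] GTLAlg k G ρ (n + 2) δ := (gSys ρ δ (n+2)).sh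

lemma gsh_e (i : ℕ) (h : i + 1 < n) : gsh (ge ρ δ n i) = ge ρ δ (n + 2) (i + 2) := Sys.sh_e _ i h
lemma gsh_t (g : G) (i : ℕ) (h : i < n) : gsh (gt ρ δ n g i) = gt ρ δ (n + 2) g (i + 2) := Sys.sh_t _ g i h

lemma emb_PL (a : GTLAlg k G ρ n δ) (v : Dg G →₀ k) :
    Finsupp.lmapDomain k k emb (PL ρ δ n a v) = PL ρ δ (n + 2) (gsh a) (Finsupp.lmapDomain k k emb v) := by
  refine intertw (PL ρ δ n) ((PL ρ δ (n+2)).comp gsh) (Finsupp.lmapDomain k k emb) ?_ ?_ a v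
  · intro i hi v
    change _ = PL ρ δ (n+2) (gsh _) _
    rw [gsh_e i hi, PL_e _ _ _ _ hi, PL_e _ _ _ _ (by omega)]
    induction v using Finsupp.induction_linear with
    | zero => simp only [map_zero]
    | add x y hx hy => simp only [map_add, hx, hy]
    | single d c =>
      rw [Finsupp.lmapDomain_apply, Finsupp.lmapDomain_apply, Finsupp.mapDomain_single, opE, opE,
        opW_single, opW_single, Finsupp.mapDomain_single]
      congr 1
      · exact (emb_E (Sum.inl i) (Sum.inl (i+1)) (by simp) (by simp [sft]) d).symm
      · congr 1; exact (emb_wE (Sum.inl i) (Sum.inl (i+1)) d).symm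
  · intro g i hi v
    change _ = PL ρ δ (n+2) (gsh _) _
    rw [gsh_t g i hi, PL_t _ _ _ _ _ hi, PL_t _ _ _ _ _ (by omega)]
    induction v using Finsupp.induction_linear with
    | zero => simp only [map_zero]
    | add x y hx hy => simp only [map_add, hx, hy]
    | single d c =>
      rw [Finsupp.lmapDomain_apply, Finsupp.lmapDomain_apply, Finsupp.mapDomain_single, opT, opT,
        opW_single, opW_single, Finsupp.mapDomain_single]
      congr 1
      exact (emb_T (Sum.inl i) g d).symm

lemma phi_corner (z : GTLAlg k G ρ n δ) :
    phi ρ δ (n + 2) (ge ρ δ (n + 2) 0 * gsh z) = Finsupp.lmapDomain k k emb (phi ρ δ n z) := by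
  have := (gSys ρ δ (n+2)).e_sh z
  change ge ρ δ (n + 2) 0 * gsh z = gsh z * ge ρ δ (n + 2) 0 at this
  rw [this, phi_mul, phi_apply, phi_apply, emb_PL]
  congr 1
  rw [PL_e _ _ _ _ (by omega), opE, opW_single, Finsupp.lmapDomain_apply, Finsupp.mapDomain_single]
  congr 1
  · apply Mt.ext
    · funext x
      rcases pt_cases x with rfl | rfl | rfl | rfl | ⟨y, rfl⟩
      · simp [Mt.E, emb, dId, embs]
      · simp [Mt.E, emb, dId, embs]
      · simp [Mt.E, emb, dId, embs]
      · simp [Mt.E, emb, dId, embs]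
      · cases y <;> simp [Mt.E, emb, dId, embs, sft]
    · funext x
      rcases pt_cases x with rfl | rfl | rfl | rfl | ⟨y, rfl⟩
      · simp [Mt.E, emb, dId, embl]
      · simp [Mt.E, emb, dId, embl]
      · simp [Mt.E, emb, dId, embl]
      · simp [Mt.E, emb, dId, embl]
      · cases y <;> simp [Mt.E, emb, dId, embl, sft]
  · simp [wE, dId]

/-- if `phi` is injective in degree `n`, the corner has no kernel -/
lemma corner_inj (hn : Function.Injective (phi ρ δ n)) (z : GTLAlg k G ρ n δ)
    (h : phi ρ δ (n + 2) (ge ρ δ (n + 2) 0 * gsh z) = 0) : z = 0 := by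
  rw [phi_corner, Finsupp.lmapDomain_apply] at h
  have := Finsupp.mapDomain_injective emb_inj (h.trans (Finsupp.mapDomain_zero).symm)
  exact hn (this.trans (map_zero _).symm)

/-- kernel elements vanish when squeezed -/
lemma squeeze (hn : Function.Injective (phi ρ δ n)) (x a b : GTLAlg k G ρ (n+2) δ)
    (h : phi ρ δ (n + 2) x = 0) : ge ρ δ (n + 2) 0 * a * x * b * ge ρ δ (n + 2) 0 = 0 := by
  obtain ⟨w, hw⟩ := corner (a * x * b)
  simp only [← mul_assoc] at hw
  rw [hw]
  have : phi ρ δ (n + 2) (ge ρ δ (n + 2) 0 * gsh w) = 0 := by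
    change phi ρ δ (n + 2) (ge ρ δ (n + 2) 0 * (gSys ρ δ (n+2)).sh w) = 0
    rw [← hw, mul_assoc _ b]
    exact ker_mul _ _ _ h
  rw [corner_inj hn w this, map_zero, mul_zero]

end Emb
end GTLProof

namespace GTLProof
set_option linter.unusedSectionVars false
set_option linter.unusedSimpArgs false
section Mono
variable {k G : Type} [CommRing k] [CommGroup G] {ρ : G →* RingAut k} {δ : k} {n : ℕ}

inductive Mon (ρ : G →* RingAut k) (δ : k) (n : ℕ) : GTLAlg k G ρ n δ → Prop
  | one : Mon ρ δ n 1
  | e (i : ℕ) (hi : i + 1 < n) (x : GTLAlg k G ρ n δ) (hx : Mon ρ δ n x) : Mon ρ δ n (ge ρ δ n i * x)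
  | t (g : G) (i : ℕ) (hi : i < n) (x : GTLAlg k G ρ n δ) (hx : Mon ρ δ n x) : Mon ρ δ n (gt ρ δ n g i * x)

lemma Mon_span (a : GTLAlg k G ρ n δ) : a ∈ Submodule.span k {x | Mon ρ δ n x} := by
  set P := Submodule.span k {x | Mon ρ δ n x}
  have key : ∀ b : GTLAlg k G ρ n δ, (∀ x, Mon ρ δ n x → Mon ρ δ n (b * x)) → ∀ x ∈ P, b * x ∈ P := by
    intro b hb x hx
    induction hx using Submodule.span_induction with
    | mem x hx => exact Submodule.subset_span (hb x hx)
    | zero => rw [mul_zero]; exact P.zero_mem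
    | add x y _ _ h1 h2 => rw [mul_add]; exact P.add_mem h1 h2
    | smul c x _ h1 => rw [mul_smul_comm]; exact P.smul_mem _ h1
  exact left_ind P (Submodule.subset_span Mon.one)
    (fun i hi => key _ fun x hx => Mon.e i hi x hx) (fun g i hi => key _ fun x hx => Mon.t g i hi x hx) a

lemma wE_unit (hδ : IsUnit δ) (p q : ℕ ⊕ ℕ) (d : Dg G) : IsUnit (wE ρ δ p q d) := by
  rw [wE]; split_ifs
  · exact hδ.map (ρ (d.l p))
  · exact isUnit_one

lemma Mon.phi (hδ : IsUnit δ) {x : GTLAlg k G ρ n δ} (hx : Mon ρ δ n x) :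
    ∃ d u, IsUnit u ∧ phi ρ δ n x = Finsupp.single d u := by
  induction hx with
  | one => exact ⟨dId, 1, isUnit_one, by rw [phi_apply, map_one (PL ρ δ n)]; rfl⟩
  | e i hi x hx ih =>
    obtain ⟨d, u, hu, h⟩ := ih
    exact ⟨_, _, (wE_unit hδ _ _ _).mul hu, by rw [phi_mul, h, PL_e _ _ _ _ hi, opE, opW_single]⟩
  | t g i hi x hx ih =>
    obtain ⟨d, u, hu, h⟩ := ih
    exact ⟨_, _, hu, by rw [phi_mul, h, PL_t _ _ _ _ _ hi, opT, opW_single, one_mul]⟩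

/-- products of labels -/
def tau (ρ : G →* RingAut k) (δ : k) (n : ℕ) (g : ℕ → G) : ℕ → GTLAlg k G ρ n δ
  | 0 => 1
  | m + 1 => tau ρ δ n g m * gt ρ δ n (g m) m

lemma tau_congr (g g' : ℕ → G) (m : ℕ) (h : ∀ i, i < m → g i = g' i) : tau ρ δ n g m = tau ρ δ n g' m := by
  induction m with
  | zero => rfl
  | succ m ih => rw [tau, tau, ih (fun i hi => h i (by omega)), h m (by omega)]

lemma t_tau (h : G) (g : ℕ → G) (i m : ℕ) (hm : m ≤ n) (hi : i < n) :
    gt ρ δ n h i * tau ρ δ n g m = if i < m then tau ρ δ n (Function.update g i (h * g i)) m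
      else tau ρ δ n g m * gt ρ δ n h i := by
  have S := gSys ρ δ n
  induction m with
  | zero => simp [tau]
  | succ m ih =>
    by_cases him : i < m
    · rw [if_pos (by omega), tau, ← mul_assoc, ih (by omega), if_pos him, tau]
      rw [Function.update_of_ne (by omega)]
    · rw [if_neg him] at ih
      rw [tau, ← mul_assoc, ih (by omega), mul_assoc]
      by_cases h' : i = m
      · subst h'
        rw [if_pos (by omega), tau, Function.update_self]
        have h2 := (gSys ρ δ n).t_mul h (g i) i hi
        change gt ρ δ n h i * gt ρ δ n (g i) i = gt ρ δ n (h * g i) i at h2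
        rw [h2]
        congr 1
        exact tau_congr _ _ _ (fun j hj => by rw [Function.update_of_ne (by omega)])
      · rw [if_neg (by omega)]
        have h2 := (gSys ρ δ n).tt h (g m) i m hi (by omega) h'
        change gt ρ δ n h i * gt ρ δ n (g m) m = gt ρ δ n (g m) m * gt ρ δ n h i at h2
        rw [h2, mul_assoc]

lemma tau_one (m : ℕ) (hm : m ≤ n) : tau ρ δ n (fun _ => 1) m = 1 := by
  induction m with
  | zero => rfl
  | succ m ih =>
    rw [tau, ih (by omega), one_mul]
    exact (gSys ρ δ n).t_one m (by omega)

inductive TMon (ρ : G →* RingAut k) (δ : k) (n : ℕ) : GTLAlg k G ρ n δ → Prop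
  | one : TMon ρ δ n 1
  | t (g : G) (i : ℕ) (hi : i < n) (x : GTLAlg k G ρ n δ) (hx : TMon ρ δ n x) : TMon ρ δ n (gt ρ δ n g i * x)

lemma TMon.spec {x : GTLAlg k G ρ n δ} (hx : TMon ρ δ n x) : ∃ d : Dg G, d.s = Sum.swap ∧
    phi ρ δ n x = Finsupp.single d 1 ∧ x = tau ρ δ n (fun i => d.l (Sum.inl i)) n := by
  induction hx with
  | one => exact ⟨dId, rfl, by rw [phi_apply, map_one (PL ρ δ n)]; rfl, (tau_one n le_rfl).symm⟩
  | t g i hi x hx ih =>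
    obtain ⟨d, h1, h2, h3⟩ := ih
    refine ⟨d.T (Sum.inl i) g, h1, ?_, ?_⟩
    · rw [phi_mul, h2, PL_t _ _ _ _ _ hi, opT, opW_single, one_mul]
    · conv_lhs => rw [h3]
      rw [t_tau _ _ _ _ le_rfl hi, if_pos hi]
      congr 1
      funext j
      simp only [Function.update_apply, Mt.T, h1]
      simp
      split_ifs with h
      · rw [h]
      · rfl

lemma TMon.mul {x y : GTLAlg k G ρ n δ} (hx : TMon ρ δ n x) (hy : TMon ρ δ n y) : TMon ρ δ n (x * y) := by
  induction hx with
  | one => rwa [one_mul]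
  | t g i hi x hx ih => rw [mul_assoc]; exact TMon.t g i hi _ ih

/-- the idempotents up to scalar -/
def fm (ρ : G →* RingAut k) (δ : k) (n : ℕ) (m : ℕ) (g : G) : GTLAlg k G ρ n δ :=
  gt ρ δ n g m * ge ρ δ n m * gt ρ δ n g⁻¹ m

def Lcup (d : Dg G) (m : ℕ) (g : G) : Prop := d.s (Sum.inl m) = Sum.inl (m + 1) ∧ d.l (Sum.inl m) = g

lemma PL_f_of (m : ℕ) (g : G) (hm : m + 1 < n) (d : Dg G) (h : Lcup d m g) (c : k) :
    PL ρ δ n (fm ρ δ n m g) (Finsupp.single d c) = δ • Finsupp.single d c := by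
  rw [fm, map_mul, map_mul, Module.End.mul_apply, Module.End.mul_apply, PL_t _ _ _ _ _ (by omega),
    PL_t _ _ _ _ _ (by omega), PL_e _ _ _ _ hm, opT, opT, opE, opW_single, opW_single, opW_single]
  have h1 : (d.T (Sum.inl m) g⁻¹).s (Sum.inl m) = Sum.inl (m + 1) := h.1
  have h2 : (d.T (Sum.inl m) g⁻¹).l (Sum.inl m) = 1 := by simp [Mt.T, h.2]
  rw [Mt.E_of _ _ _ _ h1 h2, Mt.T_mul, mul_inv_cancel, Mt.T_one, wE, if_pos h1, h2, map_one]
  simp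

lemma PL_f_single (m : ℕ) (g : G) (hm : m + 1 < n) (d : Dg G) (c : k) :
    ∃ d' c', Lcup d' m g ∧ PL ρ δ n (fm ρ δ n m g) (Finsupp.single d c) = Finsupp.single d' c' := by
  rw [fm, map_mul, map_mul, Module.End.mul_apply, Module.End.mul_apply, PL_t _ _ _ _ _ (by omega),
    PL_t _ _ _ _ _ (by omega), PL_e _ _ _ _ hm, opT, opT, opE, opW_single, opW_single, opW_single]
  refine ⟨_, _, ⟨?_, ?_⟩, rfl⟩
  · simp [Mt.T, Mt.E]
  · simp [Mt.T, Mt.E]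

lemma cup_of_f [Nontrivial k] (m : ℕ) (g : G) (hm : m + 1 < n) (d : Dg G) (u : k) (hu : IsUnit u) (hδ : IsUnit δ)
    (h : PL ρ δ n (fm ρ δ n m g) (Finsupp.single d u) = δ • Finsupp.single d u) : Lcup d m g := by
  obtain ⟨d', c', hd', h'⟩ := PL_f_single (ρ := ρ) (δ := δ) m g hm d u
  rw [h', Finsupp.smul_single, Finsupp.single_eq_single_iff] at h
  rcases h with h | h
  · rw [← h.1]; exact hd'
  · exact absurd h.2 (hδ.mul hu).ne_zero

end Mono

section Q
variable {k G : Type} [CommRing k] [CommGroup G] {ρ : G →* RingAut k} {δ : k} {n : ℕ}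

abbrev gU (ρ : G →* RingAut k) (δ : k) (n : ℕ) (m : ℕ) := (gSys ρ δ n).U m
abbrev gC (ρ : G →* RingAut k) (δ : k) (n : ℕ) (m : ℕ) := (gSys ρ δ n).C m

lemma str_U (m : ℕ) : str ρ δ n (gU ρ δ n m) = gC ρ δ n m := by
  induction m with
  | zero => exact str_e 0
  | succ m ih =>
    change str ρ δ n (ge ρ δ n (m+1) * gU ρ δ n m) = gC ρ δ n m * ge ρ δ n (m+1)
    rw [str_mul, ih, str_e]

lemma str_C (m : ℕ) : str ρ δ n (gC ρ δ n m) = gU ρ δ n m := by rw [← str_U, str_str]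

lemma str_sh (z : GTLAlg k G ρ n δ) : ((starSys (gSys ρ δ (n+2))).sh z).unop = gsh (str ρ δ n z) := by
  have : (starSys (gSys ρ δ (n+2))).sh = (AlgHom.op gsh).comp (starH ρ δ n) := by
    apply hom_ext
    · intro i hi
      rw [Sys.sh_e _ _ hi]
      change _ = MulOpposite.op (gsh (str ρ δ n _))
      rw [str_e, gsh_e _ hi]; rfl
    · intro g i hi
      rw [Sys.sh_t _ _ _ hi]
      change _ = MulOpposite.op (gsh (str ρ δ n _))
      rw [str_t, gsh_t _ _ hi]; rfl
  rw [this]; rfl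

lemma str_gsh (z : GTLAlg k G ρ n δ) : str ρ δ (n+2) (gsh z) = gsh (str ρ δ n z) := by
  have : (starH ρ δ (n+2)).comp gsh = (AlgHom.op gsh).comp (starH ρ δ n) := by
    apply hom_ext
    · intro i hi
      change MulOpposite.op (str ρ δ (n+2) (gsh _)) = MulOpposite.op (gsh (str ρ δ n _))
      rw [str_e, gsh_e _ hi, str_e]
    · intro g i hi
      change MulOpposite.op (str ρ δ (n+2) (gsh _)) = MulOpposite.op (gsh (str ρ δ n _))
      rw [str_t, gsh_t _ _ hi, str_t]
  exact congrArg MulOpposite.unop (DFunLike.congr_fun this z)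

def Qel (ρ : G →* RingAut k) (δ : k) (n : ℕ) (m : ℕ) (g : G) (z : GTLAlg k G ρ n δ) (l : ℕ) (h : G) :
    GTLAlg k G ρ (n+2) δ :=
  gt ρ δ (n+2) g m * gU ρ δ (n+2) m * gsh z * (gC ρ δ (n+2) l * gt ρ δ (n+2) h l)

def IsQ (ρ : G →* RingAut k) (δ : k) (n : ℕ) (x : GTLAlg k G ρ (n+2) δ) : Prop :=
  ∃ m g z l h, m ≤ n ∧ l ≤ n ∧ x = Qel ρ δ n m g z l h

lemma str_Qel (m : ℕ) (g : G) (z : GTLAlg k G ρ n δ) (l : ℕ) (h : G) :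
    str ρ δ (n+2) (Qel ρ δ n m g z l h) = Qel ρ δ n l h (str ρ δ n z) m g := by
  simp only [Qel, str_mul, str_t, str_U, str_C, str_gsh, mul_assoc]

lemma IsQ.str {x : GTLAlg k G ρ (n+2) δ} (hx : IsQ ρ δ n x) : IsQ ρ δ n (GTLProof.str ρ δ (n+2) x) := by
  obtain ⟨m, g, z, l, h, hm, hl, rfl⟩ := hx
  exact ⟨_, _, _, _, _, hl, hm, str_Qel _ _ _ _ _⟩

lemma IsQ_iff {x : GTLAlg k G ρ (n+2) δ} : IsQ ρ δ n x ↔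
    ∃ y l h, (gSys ρ δ (n+2)).LQ y ∧ l ≤ n ∧ x = y * (gC ρ δ (n+2) l * gt ρ δ (n+2) h l) := by
  constructor
  · rintro ⟨m, g, z, l, h, hm, hl, rfl⟩
    exact ⟨_, l, h, ⟨m, g, z, hm, rfl⟩, hl, rfl⟩
  · rintro ⟨_, l, h, ⟨m, g, z, hm, rfl⟩, hl, rfl⟩
    exact ⟨m, g, z, l, h, hm, hl, rfl⟩

lemma IsQ.e {x : GTLAlg k G ρ (n+2) δ} (hx : IsQ ρ δ n x) (i : ℕ) (hi : i + 1 < n + 2) :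
    IsQ ρ δ n (ge ρ δ (n+2) i * x) := by
  rw [IsQ_iff] at hx ⊢
  obtain ⟨y, l, h, hy, hl, rfl⟩ := hx
  exact ⟨_, l, h, (gSys ρ δ (n+2)).LQ_e i hi hy, hl, by rw [← mul_assoc]; rfl⟩

lemma IsQ.t {x : GTLAlg k G ρ (n+2) δ} (hx : IsQ ρ δ n x) (g : G) (i : ℕ) (hi : i < n + 2) :
    IsQ ρ δ n (gt ρ δ (n+2) g i * x) := by
  rw [IsQ_iff] at hx ⊢
  obtain ⟨y, l, h, hy, hl, rfl⟩ := hx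
  exact ⟨_, l, h, (gSys ρ δ (n+2)).LQ_t i g hi hy, hl, by rw [← mul_assoc]; rfl⟩

lemma IsQ.eT (hδ : IsUnit δ) {x : GTLAlg k G ρ (n+2) δ} (hx : TMon ρ δ (n+2) x) (i : ℕ) (hi : i + 1 < n + 2) :
    IsQ ρ δ n (ge ρ δ (n+2) i * x) := by
  have key : ∀ y, (starSys (gSys ρ δ (n+2))).LQ (MulOpposite.op y) →
      (starSys (gSys ρ δ (n+2))).LQ (MulOpposite.op (y * x)) := by
    induction hx with
    | one => intro y hy; rwa [mul_one]
    | t g i hi x hx ih =>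
      intro y hy
      rw [← mul_assoc]
      apply ih
      rw [MulOpposite.op_mul]
      exact (starSys (gSys ρ δ (n+2))).LQ_t i g hi hy
  have h0 : (starSys (gSys ρ δ (n+2))).LQ (MulOpposite.op (gC ρ δ (n+2) i)) := by
    have := (starSys (gSys ρ δ (n+2))).LQ_U i 1 (by omega)
    rw [map_one, mul_one, Sys.star_U] at this
    exact this
  obtain ⟨l, h, z, hl, hz⟩ := key _ h0
  have hz' := congrArg MulOpposite.unop hz
  rw [Sys.star_U] at hz'
  change gC ρ δ (n+2) i * x = ((starSys (gSys ρ δ (n+2))).sh z).unop * (gC ρ δ (n+2) l * gt ρ δ (n+2) h l) at hz'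
  rw [str_sh] at hz'
  have hUC : gU ρ δ (n+2) i * gC ρ δ (n+2) i = δ • ge ρ δ (n+2) i := (gSys ρ δ (n+2)).UC i hi
  obtain ⟨δ', hδ'⟩ := hδ.exists_left_inv
  refine ⟨i, 1, δ' • GTLProof.str ρ δ n z, l, h, by omega, hl, ?_⟩
  rw [Qel, map_smul]
  have h1 : gt ρ δ (n+2) (1 : G) i = 1 := (gSys ρ δ (n+2)).t_one i (by omega)
  rw [h1, one_mul, mul_smul_comm, smul_mul_assoc, mul_assoc, ← hz', ← mul_assoc, hUC, smul_mul_assoc, smul_smul,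
    hδ', one_smul]

lemma Mon.cases (hδ : IsUnit δ) {x : GTLAlg k G ρ (n+2) δ} (hx : Mon ρ δ (n+2) x) :
    TMon ρ δ (n+2) x ∨ IsQ ρ δ n x := by
  induction hx with
  | one => exact Or.inl TMon.one
  | e i hi x hx ih =>
    rcases ih with h | h
    · exact Or.inr (IsQ.eT hδ h i hi)
    · exact Or.inr (h.e i hi)
  | t g i hi x hx ih =>
    rcases ih with h | h
    · exact Or.inl (TMon.t g i hi _ h)
    · exact Or.inr (h.t g i hi)

end Q
end GTLProof

namespace GTLProof
set_option linter.unusedSectionVars false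
set_option linter.unusedSimpArgs false
section Flip
variable {k G : Type} [CommRing k] [CommGroup G] {ρ : G →* RingAut k} {δ : k} {n : ℕ}

def flip (d : Dg G) : Dg G where
  s x := (d.s x.swap).swap
  l x := d.l x.swap
  inv x := by simp [d.inv]
  nf x h := d.nf x.swap (by have := congrArg Sum.swap h; simpa using this)
  hl x := by simp [d.hl]

lemma swap_eq_iff (x y : ℕ ⊕ ℕ) : x.swap = y ↔ x = y.swap := by
  constructor
  · rintro rfl; simp
  · rintro rfl; simp

lemma flip_flip (d : Dg G) : flip (flip d) = d := by
  apply Mt.ext <;> funext x <;> simp [flip]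

lemma flip_E (p q : ℕ ⊕ ℕ) (h : p ≠ q) (h' : p.swap ≠ q.swap) (d : Dg G) :
    flip (d.E p q h) = (flip d).E p.swap q.swap h' := by
  apply Mt.ext
  · funext x
    have e : ∀ y, (x = Sum.swap y) ↔ (x.swap = y) := fun y => (swap_eq_iff x y).symm
    simp only [flip, Mt.E, Sum.swap_swap, e]
    simp only [apply_ite Sum.swap]
  · funext x
    have e : ∀ y, (x = Sum.swap y) ↔ (x.swap = y) := fun y => (swap_eq_iff x y).symm
    simp only [flip, Mt.E, Sum.swap_swap, e]

lemma flip_T (p : ℕ ⊕ ℕ) (g : G) (d : Dg G) :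
    flip (d.T p g) = (flip d).T p.swap g := by
  apply Mt.ext
  · rfl
  · funext x
    have e : ∀ y, (x = Sum.swap y) ↔ (x.swap = y) := fun y => (swap_eq_iff x y).symm
    simp only [flip, Mt.T, Sum.swap_swap, e]

lemma flip_wE (p q : ℕ ⊕ ℕ) (d : Dg G) : wE ρ δ p.swap q.swap (flip d) = wE ρ δ p q d := by
  have e : ∀ x y : ℕ ⊕ ℕ, (x.swap = y.swap) ↔ x = y := fun x y => by rw [swap_eq_iff, Sum.swap_swap]
  simp only [wE, flip, Sum.swap_swap, e]

lemma flip_PL (a : GTLAlg k G ρ n δ) (v : Dg G →₀ k) :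
    Finsupp.lmapDomain k k flip (PL ρ δ n a v) = PR ρ δ n a (Finsupp.lmapDomain k k flip v) := by
  refine intertw (PL ρ δ n) (PR ρ δ n) (Finsupp.lmapDomain k k flip) ?_ ?_ a v
  · intro i hi v
    rw [PL_e _ _ _ _ hi, PR_e _ _ _ _ (by omega)]
    induction v using Finsupp.induction_linear with
    | zero => simp only [map_zero]
    | add x y hx hy => simp only [map_add, hx, hy]
    | single d c =>
      rw [Finsupp.lmapDomain_apply, Finsupp.lmapDomain_apply, Finsupp.mapDomain_single, opE, opE,
        opW_single, opW_single, Finsupp.mapDomain_single]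
      congr 1
      · exact (flip_E (Sum.inl i) (Sum.inl (i+1)) (by simp) (by simp) d)
      · congr 1; exact (flip_wE (Sum.inl i) (Sum.inl (i+1)) d).symm
  · intro g i hi v
    rw [PL_t _ _ _ _ _ hi, PR_t _ _ _ _ _ (by omega)]
    induction v using Finsupp.induction_linear with
    | zero => simp only [map_zero]
    | add x y hx hy => simp only [map_add, hx, hy]
    | single d c =>
      rw [Finsupp.lmapDomain_apply, Finsupp.lmapDomain_apply, Finsupp.mapDomain_single, opT, opT,
        opW_single, opW_single, Finsupp.mapDomain_single]
      congr 1
      exact (flip_T (Sum.inl i) g d)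

lemma flip_dId : flip (dId : Dg G) = dId := by
  apply Mt.ext <;> funext x <;> simp [flip, dId]

lemma phi_flip (a : GTLAlg k G ρ n δ) : phi ρ δ n (str ρ δ n a) = Finsupp.lmapDomain k k flip (phi ρ δ n a) := by
  rw [← phi_str, str_str, phi_apply, flip_PL, Finsupp.lmapDomain_apply, Finsupp.mapDomain_single, flip_dId]

end Flip

section Inj
variable {k G : Type} [CommRing k] [CommGroup G] {ρ : G →* RingAut k} {δ : k} {n : ℕ}

lemma gt_inv_mul (g : G) (m : ℕ) : gt ρ δ n g⁻¹ m * gt ρ δ n g m = 1 := by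
  by_cases h : m < n
  · have := (gSys ρ δ n).t_mul g⁻¹ g m h
    rw [inv_mul_cancel, (gSys ρ δ n).t_one m h] at this
    exact this
  · rw [gt_out _ _ h, gt_out _ _ h, one_mul]

lemma gt_mul_inv (g : G) (m : ℕ) : gt ρ δ n g m * gt ρ δ n g⁻¹ m = 1 := by
  have := gt_inv_mul (ρ := ρ) (δ := δ) (n := n) g⁻¹ m
  rwa [inv_inv] at this

lemma unit_smul_zero {M : Type} [AddCommGroup M] [Module k M] (hδ : IsUnit δ) {x : M} (h : δ • x = 0) : x = 0 := by
  obtain ⟨δ', hδ'⟩ := hδ.exists_left_inv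
  have := congrArg (δ' • ·) h
  simpa [smul_smul, hδ'] using this

lemma Qel_zero (hδ : IsUnit δ) (hn : Function.Injective (phi ρ δ n)) (m : ℕ) (g : G) (z : GTLAlg k G ρ n δ) (l : ℕ) (h : G)
    (hm : m ≤ n) (hl : l ≤ n) (h0 : phi ρ δ (n+2) (Qel ρ δ n m g z l h) = 0) : z = 0 := by
  apply corner_inj hn
  have hCU : ∀ m, m ≤ n → gC ρ δ (n+2) m * gU ρ δ (n+2) m = δ • ge ρ δ (n+2) 0 :=
    fun m hm => (gSys ρ δ (n+2)).CU m (by omega)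
  have hes : ge ρ δ (n+2) 0 * gsh z = gsh z * ge ρ δ (n+2) 0 := (gSys ρ δ (n+2)).e_sh z
  have hee : ge ρ δ (n+2) 0 * ge ρ δ (n+2) 0 = δ • ge ρ δ (n+2) 0 := (gSys ρ δ (n+2)).e_sq 0 (by omega)
  have h1 : (gC ρ δ (n+2) m * gt ρ δ (n+2) g⁻¹ m) * Qel ρ δ n m g z l h * (gt ρ δ (n+2) h⁻¹ l * gU ρ δ (n+2) l)
      = δ • δ • δ • (ge ρ δ (n+2) 0 * gsh z) := by
    calc _ = gC ρ δ (n+2) m * ((gt ρ δ (n+2) g⁻¹ m * gt ρ δ (n+2) g m) * (gU ρ δ (n+2) m * (gsh z *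
          (gC ρ δ (n+2) l * ((gt ρ δ (n+2) h l * gt ρ δ (n+2) h⁻¹ l) * gU ρ δ (n+2) l))))) := by
            simp only [Qel, mul_assoc]
      _ = (gC ρ δ (n+2) m * gU ρ δ (n+2) m) * (gsh z * (gC ρ δ (n+2) l * gU ρ δ (n+2) l)) := by
            rw [gt_inv_mul, gt_mul_inv, one_mul, one_mul, mul_assoc]
      _ = _ := by
            rw [hCU m hm, hCU l hl, mul_smul_comm, mul_smul_comm, smul_mul_assoc, ← hes, ← mul_assoc, hee,
              smul_mul_assoc]
  have h2 := ker_mul (gC ρ δ (n+2) m * gt ρ δ (n+2) g⁻¹ m) _ (gt ρ δ (n+2) h⁻¹ l * gU ρ δ (n+2) l) h0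
  rw [h1, map_smul, map_smul, map_smul] at h2
  exact unit_smul_zero hδ (unit_smul_zero hδ (unit_smul_zero hδ h2))

lemma f_Qel (m : ℕ) (g : G) (z : GTLAlg k G ρ n δ) (l : ℕ) (h : G) (hm : m ≤ n) :
    fm ρ δ (n+2) m g * Qel ρ δ n m g z l h = δ • Qel ρ δ n m g z l h := by
  have h1 : ge ρ δ (n+2) m * gU ρ δ (n+2) m = δ • gU ρ δ (n+2) m := (gSys ρ δ (n+2)).EU m (by omega)
  calc _ = gt ρ δ (n+2) g m * (ge ρ δ (n+2) m * ((gt ρ δ (n+2) g⁻¹ m * gt ρ δ (n+2) g m) * (gU ρ δ (n+2) m *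
      (gsh z * (gC ρ δ (n+2) l * gt ρ δ (n+2) h l))))) := by simp only [Qel, fm, mul_assoc]
    _ = gt ρ δ (n+2) g m * ((ge ρ δ (n+2) m * gU ρ δ (n+2) m) *
      (gsh z * (gC ρ δ (n+2) l * gt ρ δ (n+2) h l))) := by rw [gt_inv_mul, one_mul, mul_assoc]
    _ = _ := by rw [h1, smul_mul_assoc, mul_smul_comm, Qel]; simp only [mul_assoc]

lemma f_far (i m : ℕ) (g g' : G) (hi : i + 1 < n + 2) (hm : m ≤ n) (h : m + 1 < i ∨ i + 1 < m) :
    fm ρ δ (n+2) i g * (gt ρ δ (n+2) g' m * gU ρ δ (n+2) m) =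
      gt ρ δ (n+2) g' m * gU ρ δ (n+2) m * gsh (fm ρ δ n (if i < m then i else i - 2) g) := by
  have h1 := (gSys ρ δ (n+2)).e_far i m g' hi hm h
  have h2 := fun g => (gSys ρ δ (n+2)).t_far i m g' g (by omega) hm (by omega)
  change ge ρ δ (n+2) i * (gt ρ δ (n+2) g' m * gU ρ δ (n+2) m) =
    gt ρ δ (n+2) g' m * gU ρ δ (n+2) m * gsh _ at h1
  change ∀ g, gt ρ δ (n+2) g i * (gt ρ δ (n+2) g' m * gU ρ δ (n+2) m) =
    gt ρ δ (n+2) g' m * gU ρ δ (n+2) m * gsh _ at h2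
  generalize gt ρ δ (n+2) g' m * gU ρ δ (n+2) m = y at *
  rw [fm, mul_assoc, h2, ← mul_assoc, mul_assoc (gt ρ δ (n+2) g i), h1, ← mul_assoc, h2, fm, map_mul, map_mul]
  simp only [mul_assoc]

lemma Qel_cup [Nontrivial k] (hδ : IsUnit δ) (m : ℕ) (g : G) (z : GTLAlg k G ρ n δ) (l : ℕ) (h : G)
    (hm : m ≤ n) (d : Dg G) (u : k) (hu : IsUnit u)
    (h0 : phi ρ δ (n+2) (Qel ρ δ n m g z l h) = Finsupp.single d u) : Lcup d m g := by
  apply cup_of_f (ρ := ρ) (n := n + 2) m g (by omega) d u hu hδ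
  rw [← h0, ← phi_mul, f_Qel _ _ _ _ _ hm, map_smul]

lemma lemK [Nontrivial k] (hδ : IsUnit δ) (hn : Function.Injective (phi ρ δ n)) {x : GTLAlg k G ρ (n+2) δ}
    (hx : IsQ ρ δ n x) (d : Dg G) (u : k) (hu : IsUnit u) (h0 : phi ρ δ (n+2) x = Finsupp.single d u)
    (m : ℕ) (g : G) (hm : m ≤ n) (hc : Lcup d m g) : fm ρ δ (n+2) m g * x = δ • x := by
  obtain ⟨m', g', z, l, h, hm', hl, rfl⟩ := hx
  have hc' := Qel_cup hδ m' g' z l h hm' d u hu h0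
  by_cases hf : m' + 1 < m ∨ m + 1 < m'
  · have h1 : fm ρ δ (n+2) m g * Qel ρ δ n m' g' z l h =
        Qel ρ δ n m' g' (fm ρ δ n (if m < m' then m else m - 2) g * z) l h := by
      have h4 := f_far (ρ := ρ) (δ := δ) m m' g g' (by omega) hm' hf
      rw [Qel, ← mul_assoc, ← mul_assoc (fm ρ δ (n+2) m g), h4, Qel, map_mul]
      simp only [mul_assoc]
    have h2 : fm ρ δ n (if m < m' then m else m - 2) g * z - δ • z = 0 := by
      apply Qel_zero hδ hn m' g' _ l h hm' hl
      have h3 : Qel ρ δ n m' g' (fm ρ δ n (if m < m' then m else m - 2) g * z - δ • z) l h =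
        fm ρ δ (n+2) m g * Qel ρ δ n m' g' z l h - δ • Qel ρ δ n m' g' z l h := by
        rw [h1]
        simp only [Qel, map_sub, map_smul, mul_sub, sub_mul, mul_smul_comm, smul_mul_assoc]
      rw [h3, map_sub, phi_mul, map_smul, h0, PL_f_of m g (by omega) d hc, sub_self]
    rw [h1, sub_eq_zero.1 h2]
    simp only [Qel, map_smul, mul_smul_comm, smul_mul_assoc]
  · have hmm : m = m' := by
      by_contra hne
      obtain rfl | rfl : m' = m + 1 ∨ m = m' + 1 := by omega
      · have := d.inv (Sum.inl m)
        rw [hc.1, hc'.1] at this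
        simp at this
        omega
      · have := d.inv (Sum.inl m')
        rw [hc'.1, hc.1] at this
        simp at this
        omega
    subst hmm
    have : g = g' := hc.2.symm.trans hc'.2
    subst this
    exact f_Qel _ _ _ _ _ hm

lemma ge_ideal (m : ℕ) (hm : m + 1 < n) : ∃ a b, ge ρ δ n m = a * ge ρ δ n 0 * b := by
  induction m with
  | zero => exact ⟨1, 1, by simp⟩
  | succ m ih =>
    obtain ⟨a, b, hab⟩ := ih (by omega)
    refine ⟨ge ρ δ n (m+1) * a, b * ge ρ δ n (m+1), ?_⟩
    have : ge ρ δ n (m+1) * ge ρ δ n m * ge ρ δ n (m+1) = ge ρ δ n (m+1) := (gSys ρ δ n).hook_dn m (by omega)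
    rw [← this, hab]
    rw [hab] at this
    simp only [mul_assoc] at this ⊢
    simp only [this]

lemma fm_ideal (m : ℕ) (g : G) (hm : m + 1 < n) : ∃ a b, fm ρ δ n m g = a * ge ρ δ n 0 * b := by
  obtain ⟨a, b, hab⟩ := ge_ideal (ρ := ρ) (δ := δ) m hm
  exact ⟨gt ρ δ n g m * a, b * gt ρ δ n g⁻¹ m, by rw [fm, hab]; simp only [mul_assoc]⟩

lemma squeeze2 (hδ : IsUnit δ) (hn : Function.Injective (phi ρ δ n)) (x : GTLAlg k G ρ (n+2) δ)
    (h : phi ρ δ (n + 2) x = 0) (m l : ℕ) (g g' : G) (hm : m ≤ n) (hl : l ≤ n)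
    (h1 : fm ρ δ (n+2) m g * x = δ • x) (h2 : x * str ρ δ (n+2) (fm ρ δ (n+2) l g') = δ • x) : x = 0 := by
  obtain ⟨a, b, hab⟩ := fm_ideal (ρ := ρ) (δ := δ) (n := n + 2) m g (by omega)
  obtain ⟨a', b', hab'⟩ := fm_ideal (ρ := ρ) (δ := δ) (n := n + 2) l g' (by omega)
  rw [hab', str_mul, str_mul, str_e] at h2
  have h3 := squeeze hn x b (str ρ δ (n+2) b') h
  have : δ • δ • x = 0 := by
    rw [← h2, ← smul_mul_assoc, ← h1, hab]
    calc _ = a * (ge ρ δ (n + 2) 0 * b * x * str ρ δ (n+2) b' * ge ρ δ (n + 2) 0) * str ρ δ (n+2) a' := by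
          simp only [mul_assoc]
      _ = 0 := by rw [h3, mul_zero, zero_mul]
  exact unit_smul_zero hδ (unit_smul_zero hδ this)

lemma lemK' [Nontrivial k] (hδ : IsUnit δ) (hn : Function.Injective (phi ρ δ n)) {x : GTLAlg k G ρ (n+2) δ}
    (hx : IsQ ρ δ n x) (d : Dg G) (u : k) (hu : IsUnit u) (h0 : phi ρ δ (n+2) x = Finsupp.single d u)
    (m : ℕ) (g : G) (hm : m ≤ n) (hc : Lcup (flip d) m g) : x * str ρ δ (n+2) (fm ρ δ (n+2) m g) = δ • x := by
  have h1 : phi ρ δ (n+2) (str ρ δ (n+2) x) = Finsupp.single (flip d) u := by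
    rw [phi_flip, h0, Finsupp.lmapDomain_apply, Finsupp.mapDomain_single]
  have := congrArg (str ρ δ (n+2)) (lemK hδ hn hx.str _ u hu h1 m g hm hc)
  rwa [str_mul, str_str, str_smul, str_str] at this

/-- monomials are determined by their diagram -/
def Uniq (ρ : G →* RingAut k) (δ : k) (n : ℕ) : Prop :=
  ∀ x y d u v, Mon ρ δ n x → Mon ρ δ n y → IsUnit u → IsUnit v → phi ρ δ n x = Finsupp.single d u →
    phi ρ δ n y = Finsupp.single d v → v • x = u • y

lemma TMon_uniq [Nontrivial k] {x y : GTLAlg k G ρ n δ} {d : Dg G} {u v : k} (hx : TMon ρ δ n x) (hy : TMon ρ δ n y)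
    (hu : IsUnit u) (hv : IsUnit v)
    (h1 : phi ρ δ n x = Finsupp.single d u) (h2 : phi ρ δ n y = Finsupp.single d v) : v • x = u • y := by
  obtain ⟨d1, _, h3, h4⟩ := hx.spec
  obtain ⟨d2, _, h5, h6⟩ := hy.spec
  rw [h3, Finsupp.single_eq_single_iff] at h1
  rw [h5, Finsupp.single_eq_single_iff] at h2
  rcases h1 with h1 | h1
  · rcases h2 with h2 | h2
    · rw [h4, h6, h1.1, h2.1, ← h1.2, ← h2.2]
    · exact absurd h2.1 one_ne_zero
  · exact absurd h1.1 one_ne_zero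

lemma TMon_Q [Nontrivial k] (hδ : IsUnit δ) {x y : GTLAlg k G ρ (n+2) δ} {d : Dg G} {u v : k} (hx : TMon ρ δ (n+2) x)
    (hy : IsQ ρ δ n y) (hu : IsUnit u) (hv : IsUnit v)
    (h1 : phi ρ δ (n+2) x = Finsupp.single d u) (h2 : phi ρ δ (n+2) y = Finsupp.single d v) : False := by
  obtain ⟨d1, hd1, h3, h4⟩ := hx.spec
  obtain ⟨m, g, z, l, h, hm, hl, rfl⟩ := hy
  have hc := Qel_cup hδ m g z l h hm d v hv h2
  rw [h3, Finsupp.single_eq_single_iff] at h1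
  rcases h1 with h1 | h1
  · have := hc.1
    rw [← h1.1, hd1] at this
    simp at this
  · exact absurd h1.1 one_ne_zero

lemma uniq_step [Nontrivial k] (hδ : IsUnit δ) (hn : Function.Injective (phi ρ δ n)) : Uniq ρ δ (n+2) := by
  intro x y d u v hx hy hu hv h1 h2
  rcases hx.cases hδ with hx | hx <;> rcases hy.cases hδ with hy | hy
  · exact TMon_uniq hx hy hu hv h1 h2
  · exact (TMon_Q hδ hx hy hu hv h1 h2).elim
  · exact (TMon_Q hδ hy hx hv hu h2 h1).elim
  · obtain ⟨m, g, hm, hc⟩ : ∃ m g, m ≤ n ∧ Lcup d m g := by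
      obtain ⟨m, g, z, l, h, hm, hl, rfl⟩ := hx
      exact ⟨m, g, hm, Qel_cup hδ m g z l h hm d u hu h1⟩
    obtain ⟨l, g', hl, hc'⟩ : ∃ m g, m ≤ n ∧ Lcup (flip d) m g := by
      have h3 : phi ρ δ (n+2) (str ρ δ (n+2) x) = Finsupp.single (flip d) u := by
        rw [phi_flip, h1, Finsupp.lmapDomain_apply, Finsupp.mapDomain_single]
      obtain ⟨m, g, z, l, h, hm, hl, he⟩ := hx.str
      rw [he] at h3
      exact ⟨m, g, hm, Qel_cup hδ m g z l h hm _ u hu h3⟩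
    rw [← sub_eq_zero]
    apply squeeze2 hδ hn _ _ m l g g' hm hl
    · rw [mul_sub, mul_smul_comm, mul_smul_comm, lemK hδ hn hx d u hu h1 m g hm hc,
        lemK hδ hn hy d v hv h2 m g hm hc, smul_sub, smul_comm δ, smul_comm δ]
    · rw [sub_mul, smul_mul_assoc, smul_mul_assoc, lemK' hδ hn hx d u hu h1 l g' hl hc',
        lemK' hδ hn hy d v hv h2 l g' hl hc', smul_sub, smul_comm δ, smul_comm δ]
    · rw [map_sub, map_smul, map_smul, h1, h2, Finsupp.smul_single, Finsupp.smul_single, smul_eq_mul, smul_eq_mul,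
        mul_comm, sub_self]

lemma uniq_small [Nontrivial k] (h : n < 2) : Uniq ρ δ n := by
  have key : ∀ x, Mon ρ δ n x → TMon ρ δ n x := by
    intro x hx
    induction hx with
    | one => exact TMon.one
    | e i hi x hx ih => omega
    | t g i hi x hx ih => exact TMon.t g i hi _ ih
  intro x y d u v hx hy hu hv h1 h2
  exact TMon_uniq (key x hx) (key y hy) hu hv h1 h2

lemma linv_of_uniq (hδ : IsUnit δ) (h : Uniq ρ δ n) :
    ∃ ψ : (Dg G →₀ k) →ₗ[k] GTLAlg k G ρ n δ, ∀ x, ψ (phi ρ δ n x) = x := by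
  classical
  have : ∀ d : Dg G, ∃ y : GTLAlg k G ρ n δ, ∀ x u, Mon ρ δ n x → IsUnit u → phi ρ δ n x = Finsupp.single d u →
      u • y = x := by
    intro d
    by_cases hd : ∃ y v, Mon ρ δ n y ∧ IsUnit v ∧ phi ρ δ n y = Finsupp.single d v
    · obtain ⟨y, v, hy, hv, h2⟩ := hd
      obtain ⟨v', hv'⟩ := hv.exists_left_inv
      refine ⟨v' • y, fun x u hx hu h1 => ?_⟩
      rw [smul_comm, ← h x y d u v hx hy hu hv h1 h2, smul_smul, hv', one_smul]
    · exact ⟨0, fun x u hx hu h1 => (hd ⟨x, u, hx, hu, h1⟩).elim⟩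
  choose y hy using this
  refine ⟨Finsupp.lsum k fun d => (LinearMap.toSpanSingleton k _ (y d)), fun x => ?_⟩
  have hx := Mon_span x
  induction hx using Submodule.span_induction with
  | mem x hx =>
    obtain ⟨d, u, hu, h1⟩ := Mon.phi hδ hx
    rw [h1, Finsupp.lsum_single, LinearMap.toSpanSingleton_apply]
    exact hy d x u hx hu h1
  | zero => rw [map_zero, map_zero]
  | add x y _ _ h1 h2 => rw [map_add, map_add, h1, h2]
  | smul c x _ h1 => rw [map_smul, map_smul, h1]

theorem exists_linv (hδ : IsUnit δ) : ∀ n,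
    ∃ ψ : (Dg G →₀ k) →ₗ[k] GTLAlg k G ρ n δ, ∀ x, ψ (phi ρ δ n x) = x := by
  rcases subsingleton_or_nontrivial k with hk | hk
  · intro n
    have : Subsingleton (GTLAlg k G ρ n δ) := Module.subsingleton k _
    exact ⟨0, fun x => Subsingleton.elim _ _⟩
  intro n
  induction n using Nat.strong_induction_on with
  | _ n ih =>
    match n, ih with
    | 0, _ => exact linv_of_uniq hδ (uniq_small (by omega))
    | 1, _ => exact linv_of_uniq hδ (uniq_small (by omega))
    | n + 2, ih =>
      obtain ⟨ψ, hψ⟩ := ih n (by omega)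
      exact linv_of_uniq hδ (uniq_step hδ (Function.LeftInverse.injective hψ))

end Inj
end GTLProof

namespace GTLProof
set_option linter.unusedSectionVars false
set_option linter.unusedSimpArgs false
section MV
variable {k : Type} [CommRing k] {A : Type} [Ring A] [Algebra k A]
variable {N N0 N1 N2 : Type} [AddCommGroup N] [Module k N] [AddCommGroup N0] [Module k N0]
  [AddCommGroup N1] [Module k N1] [AddCommGroup N2] [Module k N2]

lemma cMap_add (f f' : N →ₗ[k] N1) : ∀ q x, cMap (AlgHom.id k A) (f + f') q x =
    cMap (AlgHom.id k A) f q x + cMap (AlgHom.id k A) f' q x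
  | 0 => fun x => rfl
  | (q + 1) => by
    intro (x : A ⊗[k] _)
    change TensorProduct.map (AlgHom.id k A).toLinearMap (cMap (AlgHom.id k A) (f + f') q) x =
      TensorProduct.map (AlgHom.id k A).toLinearMap (cMap (AlgHom.id k A) f q) x +
      TensorProduct.map (AlgHom.id k A).toLinearMap (cMap (AlgHom.id k A) f' q) x
    induction x with
    | zero => simp
    | add x y hx hy => simp only [map_add, hx, hy]; abel
    | tmul c x =>
      simp only [TensorProduct.map_tmul, cMap_add f f' q, TensorProduct.tmul_add]

variable {ε : A →ₐ[k] k} {α : A →ₐ[k] Module.End k N} {α0 : A →ₐ[k] Module.End k N0}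
  {α1 : A →ₐ[k] Module.End k N1} {α2 : A →ₐ[k] Module.End k N2}

lemma Acyc.sum [Module.Flat k A] (h1 : Acyc ε α1) (h2 : Acyc ε α2) {i1 : N1 →ₗ[k] N} {i2 : N2 →ₗ[k] N}
    {p1 : N →ₗ[k] N1} {p2 : N →ₗ[k] N2} (hi1 : EquiA α1 α i1) (hi2 : EquiA α2 α i2)
    (hp1 : EquiA α α1 p1) (hp2 : EquiA α α2 p2) (h : ∀ x, i1 (p1 x) + i2 (p2 x) = x) : Acyc ε α := by
  intro q x hx
  obtain ⟨y1, hy1⟩ := h1 q _ (hx.map hp1 (ε' := ε) (fun _ => rfl))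
  obtain ⟨y2, hy2⟩ := h2 q _ (hx.map hp2 (ε' := ε) (fun _ => rfl))
  refine ⟨cMap1 (AlgHom.id k A) i1 q y1 + cMap1 (AlgHom.id k A) i2 q y2, ?_⟩
  rw [map_add, ← cMapA_cD hi1, ← cMapA_cD hi2, hy1, hy2, cMap_comp, cMap_comp]
  have : (i1 ∘ₗ p1) + (i2 ∘ₗ p2) = LinearMap.id := LinearMap.ext h
  refine (cMap_add (A := A) _ _ q x).symm.trans ?_
  rw [this]
  exact cMap_id q x

/-- product of representations -/
def prodRep (α1 : A →ₐ[k] Module.End k N1) (α2 : A →ₐ[k] Module.End k N2) :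
    A →ₐ[k] Module.End k (N1 × N2) where
  toFun a := LinearMap.prodMap (α1 a) (α2 a)
  map_one' := by ext <;> simp
  map_mul' a b := by ext <;> simp
  map_zero' := by ext <;> simp
  map_add' a b := by ext <;> simp
  commutes' c := by ext <;> simp

lemma Acyc.mv [Module.Flat k A] (h0 : Acyc ε α0) (h1 : Acyc ε α1) (h2 : Acyc ε α2)
    {j1 : N0 →ₗ[k] N1} {j2 : N0 →ₗ[k] N2} {i1 : N1 →ₗ[k] N} {i2 : N2 →ₗ[k] N}
    (hj1 : EquiA α0 α1 j1) (hj2 : EquiA α0 α2 j2) (hi1 : EquiA α1 α i1) (hi2 : EquiA α2 α i2)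
    (hj : Function.Injective j1) (hc : ∀ z, i1 (j1 z) = i2 (j2 z))
    (hx : ∀ x y, i1 x = i2 y → ∃ z, j1 z = x ∧ j2 z = y)
    (hs : ∀ x, ∃ a b, i1 a + i2 b = x) : Acyc ε α := by
  have hp : Acyc ε (prodRep α1 α2) := by
    refine Acyc.sum h1 h2 (i1 := LinearMap.inl k N1 N2) (i2 := LinearMap.inr k N1 N2)
      (p1 := LinearMap.fst k N1 N2) (p2 := LinearMap.snd k N1 N2) ?_ ?_ ?_ ?_ ?_
    · intro a x; simp [prodRep]
    · intro a x; simp [prodRep]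
    · intro a x; simp [prodRep]
    · intro a x; simp [prodRep]
    · intro x; simp
  refine Acyc.quot h0 hp (f := LinearMap.prod j1 j2) (g := LinearMap.coprod i1 (-i2)) ?_ ?_ ?_ ?_ ?_
  · intro a x; exact Prod.ext (hj1 a x) (hj2 a x)
  · intro a x
    have e1 := hi1 a x.1
    have e2 := hi2 a x.2
    simp only [prodRep, AlgHom.coe_mk, RingHom.coe_mk, MonoidHom.coe_mk, OneHom.coe_mk, LinearMap.coprod_apply,
      LinearMap.prodMap_apply, LinearMap.neg_apply, map_add, map_neg, e1, e2]
  · intro x y h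
    exact hj (congrArg Prod.fst h)
  · intro x
    constructor
    · intro h
      obtain ⟨z, hz1, hz2⟩ := hx x.1 x.2 (by
        simp only [LinearMap.coprod_apply, LinearMap.neg_apply] at h
        rwa [← sub_eq_add_neg, sub_eq_zero] at h)
      exact ⟨z, Prod.ext hz1 hz2⟩
    · rintro ⟨z, rfl⟩
      simp [hc]
  · intro x
    obtain ⟨a, b, hab⟩ := hs x
    exact ⟨(a, -b), by simp [hab]⟩

lemma Acyc.triv (h : ∀ x : N, x = 0) : Acyc ε α := by
  intro q x hx
  refine ⟨0, ?_⟩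
  rw [map_zero]
  have : ∀ q (x : cC k A N q), x = 0 := by
    intro q
    induction q with
    | zero => exact h
    | succ q ih =>
      intro (x : A ⊗[k] _)
      change x = 0
      induction x with
      | zero => rfl
      | add x y hx hy => rw [hx, hy, add_zero]
      | tmul c x => rw [ih x, TensorProduct.tmul_zero]
  exact (this q x).symm

/-- direct sums of copies -/
lemma Acyc.translates [Module.Flat k A] {ι : Type} [DecidableEq ι] (h : Acyc ε α) (m : ι → N →ₗ[k] N1) (p : ι → N1 →ₗ[k] N)
    (hmE : ∀ j, EquiA α α1 (m j)) (hm : ∀ j j' x, p j (m j' x) = if j = j' then x else 0)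
    (hs : ∀ x, x ∈ Submodule.span k {y | ∃ x j, y = m j x}) : Acyc ε α1 := by
  let Θ : (ι →₀ N) →ₗ[k] N1 := Finsupp.lsum k m
  have hΘp : ∀ j z, p j (Θ z) = z j := by
    intro j z
    induction z using Finsupp.induction_linear with
    | zero => simp
    | add x y hx hy => rw [map_add, map_add, hx, hy]; rfl
    | single j' x =>
      simp only [Θ, Finsupp.lsum_single, hm, Finsupp.single_apply, eq_comm]
  have hinj : Function.Injective Θ := by
    intro x y h
    ext j
    rw [← hΘp, ← hΘp, h]
  have hsurj : Function.Surjective Θ := by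
    intro x
    have hx := hs x
    induction hx using Submodule.span_induction with
    | mem y hy =>
      obtain ⟨x, j, rfl⟩ := hy
      exact ⟨Finsupp.single j x, by simp [Θ]⟩
    | zero => exact ⟨0, by simp⟩
    | add x y _ _ h1 h2 =>
      obtain ⟨z1, h1⟩ := h1
      obtain ⟨z2, h2⟩ := h2
      exact ⟨z1 + z2, by rw [map_add, ← h1, ← h2]⟩
    | smul c x _ h1 =>
      obtain ⟨z1, h1⟩ := h1
      exact ⟨c • z1, by rw [map_smul, ← h1]⟩
  let e : (N ⊗[k] (ι →₀ k)) ≃ₗ[k] N1 :=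
    (TensorProduct.finsuppScalarRight k k N ι).trans (LinearEquiv.ofBijective Θ ⟨hinj, hsurj⟩)
  let β : A →ₐ[k] Module.End k (N ⊗[k] (ι →₀ k)) :=
    (Module.End.rTensorAlgHom k N (ι →₀ k)).comp α
  have hβ : Acyc ε β := Acyc.tens (V := ι →₀ k) h (fun a x => rfl)
  have he1 : ∀ x j c, e (x ⊗ₜ Finsupp.single j c) = c • m j x := by
    intro x j c
    have h1 : TensorProduct.finsuppScalarRight k k N ι (x ⊗ₜ Finsupp.single j c) = Finsupp.single j (c • x) := by
      rw [TensorProduct.finsuppScalarRight_apply_tmul]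
      simp
    change Θ (TensorProduct.finsuppScalarRight k k N ι (x ⊗ₜ Finsupp.single j c)) = _
    rw [h1, Finsupp.lsum_single, map_smul]
  have he : EquiA β α1 e.toLinearMap := by
    intro a x
    induction x with
    | zero => simp
    | add x y hx hy => rw [map_add, map_add, hx, hy, map_add, map_add]
    | tmul x f =>
      induction f using Finsupp.induction_linear with
      | zero => simp
      | add f g hf hg => rw [TensorProduct.tmul_add, map_add, map_add, map_add, map_add, hf, hg]
      | single j c =>
        change e (α a x ⊗ₜ Finsupp.single j c) = α1 a (e (x ⊗ₜ Finsupp.single j c))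
        rw [he1, he1, map_smul, hmE j a x]; rfl
  refine Acyc.retract hβ he (i := e.symm.toLinearMap) ?_ ?_
  · intro a x
    apply e.injective
    have := he a (e.symm x)
    simp only [LinearEquiv.coe_coe, LinearEquiv.apply_symm_apply] at this ⊢
    exact this.symm
  · intro x; simp

end MV

section Sub
variable {k : Type} [CommRing k] {A : Type} [Ring A] [Algebra k A] [Module.Flat k A] {ε : A →ₐ[k] k}

/-- acyclicity of a left ideal, as a property of the underlying submodule -/
def AcI (ε : A →ₐ[k] k) (K : Submodule k A) : Prop :=
  ∃ h : ∀ a, ∀ x ∈ K, Algebra.lmul k A a x ∈ K, Acyc (N := ↥K) ε (subRep (Algebra.lmul k A) K h)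

lemma AcI.mv {K1 K2 : Submodule k A} (h0 : AcI ε (K1 ⊓ K2)) (h1 : AcI ε K1) (h2 : AcI ε K2) : AcI ε (K1 ⊔ K2) := by
  obtain ⟨i0, a0⟩ := h0
  obtain ⟨i1, a1⟩ := h1
  obtain ⟨i2, a2⟩ := h2
  have i : ∀ a, ∀ x ∈ K1 ⊔ K2, Algebra.lmul k A a x ∈ K1 ⊔ K2 := by
    intro a x hx
    obtain ⟨y, hy, z, hz, rfl⟩ := Submodule.mem_sup.1 hx
    rw [map_add]
    exact Submodule.add_mem_sup (i1 a y hy) (i2 a z hz)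
  refine ⟨i, ?_⟩
  refine Acyc.mv (N0 := ↥(K1 ⊓ K2)) (N1 := ↥K1) (N2 := ↥K2) (N := ↥(K1 ⊔ K2)) a0 a1 a2
    (j1 := Submodule.inclusion inf_le_left) (j2 := Submodule.inclusion inf_le_right)
    (i1 := Submodule.inclusion le_sup_left) (i2 := Submodule.inclusion le_sup_right) ?_ ?_ ?_ ?_ ?_ ?_ ?_ ?_
  · intro a x; rfl
  · intro a x; rfl
  · intro a x; rfl
  · intro a x; rfl
  · exact Submodule.inclusion_injective _
  · intro z; rfl
  · intro x y h
    have : (x : A) = y := congrArg Subtype.val h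
    exact ⟨⟨x, x.2, this ▸ y.2⟩, rfl, Subtype.ext this⟩
  · rintro ⟨x, hx⟩
    obtain ⟨y, hy, z, hz, rfl⟩ := Submodule.mem_sup.1 hx
    exact ⟨⟨y, hy⟩, ⟨z, hz⟩, rfl⟩

/-- retract by right multiplication -/
lemma AcI.retract {K K' : Submodule k A} (h : AcI ε K) (b : A) (hK : K' ≤ K) (h1 : ∀ x ∈ K, x * b ∈ K')
    (h2 : ∀ x ∈ K', x * b = x) : AcI ε K' := by
  obtain ⟨i, a⟩ := h
  have i' : ∀ a, ∀ x ∈ K', Algebra.lmul k A a x ∈ K' := by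
    intro a x hx
    have := h1 _ (i a x (hK hx))
    simp only [Algebra.coe_lmul_eq_mul, LinearMap.mul_apply'] at this ⊢
    rwa [mul_assoc, h2 x hx] at this
  refine ⟨i', ?_⟩
  refine Acyc.retract (N := ↥K) (N'' := ↥K') a (g := (LinearMap.mulRight k b).restrict h1)
    (i := Submodule.inclusion hK) ?_ ?_ ?_
  · intro a x
    apply Subtype.ext
    exact mul_assoc a x.1 b
  · intro a x; rfl
  · intro x
    exact Subtype.ext (h2 x.1 x.2)

lemma AcI.of_idem (K : Submodule k A) (b : A) (hb : ε b = 0) (h1 : ∀ x, x * b ∈ K) (h2 : ∀ x ∈ K, x * b = x) :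
    AcI ε K := by
  have i : ∀ a, ∀ x ∈ K, Algebra.lmul k A a x ∈ K := by
    intro a x hx
    have := h1 (a * x)
    simp only [Algebra.coe_lmul_eq_mul, LinearMap.mul_apply'] at this ⊢
    rwa [mul_assoc, h2 x hx] at this
  refine ⟨i, ?_⟩
  let r : A →ₗ[k] K := (LinearMap.mulRight k b).codRestrict K h1
  refine ind_retract_acyc (N := ↥K) (V := k) ε ((TensorProduct.rid k A).symm.toLinearMap ∘ₗ K.subtype)
    (r ∘ₗ (TensorProduct.rid k A).toLinearMap) ?_ ?_ ?_ ?_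
  · intro a x
    simp [TensorProduct.smul_tmul']
  · intro a x
    induction x with
    | zero => simp
    | add x y hx hy => rw [map_add, map_add, hx, hy, map_add, map_add]
    | tmul x c =>
      apply Subtype.ext
      have hr : ∀ y, (r y : A) = y * b := fun y => rfl
      simp only [TensorProduct.smul_tmul', LinearMap.comp_apply, LinearEquiv.coe_coe, Algebra.lsmul_coe,
        TensorProduct.rid_tmul, map_smul, subRep_coe, Submodule.coe_smul, hr, smul_eq_mul, AlgHom.coe_id, id_eq,
        Algebra.coe_lmul_eq_mul, LinearMap.mul_apply', mul_assoc]
  · intro x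
    apply Subtype.ext
    have hr : ∀ y, (r y : A) = y * b := fun y => rfl
    simp only [LinearMap.comp_apply, LinearEquiv.coe_coe, LinearEquiv.apply_symm_apply, hr, Submodule.subtype_apply, h2 x.1 x.2]
  · intro x
    simp only [LinearMap.comp_apply, LinearEquiv.coe_coe, TensorProduct.rid_symm_apply, Submodule.subtype_apply]
    rw [gE_tmul]
    rw [← h2 x.1 x.2, map_mul, hb, mul_zero, zero_smul]

lemma AcI.bot : AcI ε (⊥ : Submodule k A) := by
  refine ⟨fun a x hx => ?_, ?_⟩
  · rw [Submodule.mem_bot] at hx ⊢; rw [hx, map_zero]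
  · exact Acyc.triv (N := ↥(⊥ : Submodule k A)) (fun x => Subsingleton.elim _ _)

/-- direct sums of translates -/
lemma AcI.translates {ι : Type} [DecidableEq ι] {K K' : Submodule k A} (h : AcI ε K) (b : ι → A) (h1 : ∀ x ∈ K, ∀ j, x * b j ∈ K')
    (p : ι → K' →ₗ[k] K) (hp : ∀ (j j' : ι) (x : K), p j ⟨x.1 * b j', h1 x.1 x.2 j'⟩ = if j = j' then x else 0)
    (hs : ∀ x ∈ K', x ∈ Submodule.span k {y | ∃ x ∈ K, ∃ j, y = x * b j}) : AcI ε K' := by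
  obtain ⟨i, a⟩ := h
  have i' : ∀ a, ∀ x ∈ K', Algebra.lmul k A a x ∈ K' := by
    intro a x hx
    have := hs x hx
    clear hx
    induction this using Submodule.span_induction with
    | mem y hy =>
      obtain ⟨x, hx, j, rfl⟩ := hy
      have := h1 _ (i a x hx) j
      simp only [Algebra.coe_lmul_eq_mul, LinearMap.mul_apply'] at this ⊢
      rwa [mul_assoc] at this
    | zero => rw [map_zero]; exact K'.zero_mem
    | add x y _ _ h1 h2 => rw [map_add]; exact K'.add_mem h1 h2
    | smul c x _ h1 => rw [map_smul]; exact K'.smul_mem c h1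
  refine ⟨i', ?_⟩
  let m : ι → K →ₗ[k] K' := fun j => (LinearMap.mulRight k (b j)).restrict (fun x hx => h1 x hx j)
  refine Acyc.translates (N := ↥K) (N1 := ↥K') a m p ?_ hp ?_
  · intro j a x
    exact Subtype.ext (mul_assoc a x.1 (b j))
  · rintro ⟨x, hx⟩
    have key : ∀ x ∈ Submodule.span k {y | ∃ x ∈ K, ∃ j, y = x * b j},
        ∃ z ∈ Submodule.span k {y | ∃ x j, y = m j x}, (z : A) = x := by
      intro x hx
      induction hx using Submodule.span_induction with
      | mem y hy =>
        obtain ⟨x, hx, j, rfl⟩ := hy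
        exact ⟨m j ⟨x, hx⟩, Submodule.subset_span ⟨_, j, rfl⟩, rfl⟩
      | zero => exact ⟨0, Submodule.zero_mem _, rfl⟩
      | add x y _ _ h1 h2 =>
        obtain ⟨z1, h1', h1⟩ := h1
        obtain ⟨z2, h2', h2⟩ := h2
        exact ⟨z1 + z2, Submodule.add_mem _ h1' h2', by rw [← h1, ← h2]; rfl⟩
      | smul c x _ h1 =>
        obtain ⟨z1, h1', h1⟩ := h1
        exact ⟨c • z1, Submodule.smul_mem _ _ h1', by rw [← h1]; rfl⟩
    obtain ⟨z, hz, hzx⟩ := key x (hs x hx)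
    have : z = ⟨x, hx⟩ := Subtype.ext hzx
    rwa [← this]

end Sub
end GTLProof

namespace GTLProof
set_option linter.unusedSectionVars false
set_option linter.unusedSimpArgs false
set_option linter.unusedVariables false
section LSsec
variable {k G : Type} [CommRing k] [CommGroup G] {ρ : G →* RingAut k} {δ : k} {n : ℕ}

def LS (ρ : G →* RingAut k) (δ : k) (n : ℕ) (S : Set (Dg G)) : Submodule k (GTLAlg k G ρ n δ) :=
  (Finsupp.supported k k S).comap (phi ρ δ n)

lemma mem_LS {S : Set (Dg G)} {x : GTLAlg k G ρ n δ} : x ∈ LS ρ δ n S ↔ phi ρ δ n x ∈ Finsupp.supported k k S := Iff.rfl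

lemma LS_inter (S S' : Set (Dg G)) : LS ρ δ n (S ∩ S') = LS ρ δ n S ⊓ LS ρ δ n S' := by
  rw [LS, Finsupp.supported_inter, Submodule.comap_inf]; rfl

lemma LS_mono {S S' : Set (Dg G)} (h : S ⊆ S') : LS ρ δ n S ≤ LS ρ δ n S' :=
  Submodule.comap_mono (Finsupp.supported_mono h)

lemma opW_supp {f : Dg G → Dg G} {w : Dg G → k} {S S' : Set (Dg G)} (h : ∀ d ∈ S, w d = 0 ∨ f d ∈ S')
    {v : Dg G →₀ k} (hv : v ∈ Finsupp.supported k k S) : opW f w v ∈ Finsupp.supported k k S' := by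
  rw [Finsupp.supported_eq_span_single] at hv
  induction hv using Submodule.span_induction with
  | mem x hx =>
    obtain ⟨d, hd, rfl⟩ := hx
    rw [opW_single]
    rcases h d hd with h | h
    · rw [h, zero_mul, Finsupp.single_zero]; exact Submodule.zero_mem _
    · exact Finsupp.single_mem_supported k _ h
  | zero => rw [map_zero]; exact Submodule.zero_mem _
  | add x y _ _ h1 h2 => rw [map_add]; exact Submodule.add_mem _ h1 h2
  | smul c x _ h1 => rw [map_smul]; exact Submodule.smul_mem _ c h1

lemma opW_scal {f : Dg G → Dg G} {w : Dg G → k} {S : Set (Dg G)} {c : k} (h : ∀ d ∈ S, (f d = d ∧ w d = c))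
    {v : Dg G →₀ k} (hv : v ∈ Finsupp.supported k k S) : opW f w v = c • v := by
  rw [Finsupp.supported_eq_span_single] at hv
  induction hv using Submodule.span_induction with
  | mem x hx =>
    obtain ⟨d, hd, rfl⟩ := hx
    rw [opW_single, (h d hd).1, (h d hd).2, Finsupp.smul_single, smul_eq_mul]
  | zero => rw [map_zero, smul_zero]
  | add x y _ _ h1 h2 => rw [map_add, h1, h2, smul_add]
  | smul c x _ h1 => rw [map_smul, h1, smul_comm]

lemma opW_zero' {f : Dg G → Dg G} {w : Dg G → k} {S : Set (Dg G)} (h : ∀ d ∈ S, w d = 0)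
    {v : Dg G →₀ k} (hv : v ∈ Finsupp.supported k k S) : opW f w v = 0 := by
  have := opW_supp (S' := (∅ : Set (Dg G))) (f := f) (fun d hd => Or.inl (h d hd)) hv
  simpa using this

open Classical in
def fil (S : Set (Dg G)) : Module.End k (Dg G →₀ k) := opW id (fun d => if d ∈ S then 1 else 0)

lemma fil_single_of {S : Set (Dg G)} {d : Dg G} (h : d ∈ S) (c : k) : fil S (Finsupp.single d c) = Finsupp.single d c := by
  simp [fil, opW_single, h]
lemma fil_single_not {S : Set (Dg G)} {d : Dg G} (h : d ∉ S) (c : k) : fil S (Finsupp.single d c) = 0 := by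
  simp [fil, opW_single, h]
lemma fil_id {S : Set (Dg G)} {v : Dg G →₀ k} (hv : v ∈ Finsupp.supported k k S) : fil S v = v := by
  have := opW_scal (f := id) (w := fun d => open Classical in if d ∈ S then (1 : k) else 0) (S := S) (c := 1) (fun d hd => ⟨rfl, if_pos hd⟩) hv
  rw [one_smul] at this
  exact this
lemma fil_zero {S S' : Set (Dg G)} (h : ∀ d ∈ S', d ∉ S) {v : Dg G →₀ k} (hv : v ∈ Finsupp.supported k k S') : fil S v = 0 :=
  opW_zero' (fun d hd => if_neg (h d hd)) hv
lemma fil_supp {S S' : Set (Dg G)} {v : Dg G →₀ k} (hv : v ∈ Finsupp.supported k k S') :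
    fil S v ∈ Finsupp.supported k k (S' ∩ S) := by
  apply opW_supp _ hv
  intro d hd
  by_cases h : d ∈ S
  · exact Or.inr ⟨hd, h⟩
  · exact Or.inl (if_neg h)

def res (ψ : (Dg G →₀ k) →ₗ[k] GTLAlg k G ρ n δ) (S : Set (Dg G)) : GTLAlg k G ρ n δ →ₗ[k] GTLAlg k G ρ n δ :=
  ψ ∘ₗ fil S ∘ₗ phi ρ δ n

section
variable {ψ : (Dg G →₀ k) →ₗ[k] GTLAlg k G ρ n δ} 

lemma phi_res (hψ : ∀ x, ψ (phi ρ δ n x) = x) (hδ : IsUnit δ) (S : Set (Dg G)) (x : GTLAlg k G ρ n δ) : phi ρ δ n (res ψ S x) = fil S (phi ρ δ n x) := by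
  have hx := Mon_span x
  induction hx using Submodule.span_induction with
  | mem x hx =>
    obtain ⟨d, u, hu, h⟩ := Mon.phi hδ hx
    rw [res, LinearMap.comp_apply, LinearMap.comp_apply, h]
    by_cases hd : d ∈ S
    · rw [fil_single_of hd, ← h, hψ]
    · rw [fil_single_not hd, map_zero, map_zero]
  | zero => simp only [map_zero]
  | add x y _ _ h1 h2 => simp only [map_add, h1, h2]
  | smul c x _ h1 => simp only [map_smul, h1]

lemma res_id (hψ : ∀ x, ψ (phi ρ δ n x) = x) {S : Set (Dg G)} {x : GTLAlg k G ρ n δ} (hx : x ∈ LS ρ δ n S) : res ψ S x = x := by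
  rw [res, LinearMap.comp_apply, LinearMap.comp_apply, fil_id hx, hψ]

lemma LS_span (hψ : ∀ x, ψ (phi ρ δ n x) = x) (hδ : IsUnit δ) {S : Set (Dg G)} {x : GTLAlg k G ρ n δ} (hx : x ∈ LS ρ δ n S) :
    x ∈ Submodule.span k {y : GTLAlg k G ρ n δ | ∃ d u, d ∈ S ∧ phi ρ δ n y = Finsupp.single d u} := by
  rw [← res_id hψ hx]
  clear hx
  have hx := Mon_span x
  induction hx using Submodule.span_induction with
  | mem x hx =>
    obtain ⟨d, u, hu, h⟩ := Mon.phi hδ hx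
    rw [res, LinearMap.comp_apply, LinearMap.comp_apply, h]
    by_cases hd : d ∈ S
    · rw [fil_single_of hd, ← h, hψ]
      exact Submodule.subset_span ⟨d, u, hd, h⟩
    · rw [fil_single_not hd, map_zero]
      exact Submodule.zero_mem _
  | zero => simp only [map_zero]; exact Submodule.zero_mem _
  | add x y _ _ h1 h2 => simp only [map_add]; exact Submodule.add_mem _ h1 h2
  | smul c x _ h1 => simp only [map_smul]; exact Submodule.smul_mem _ _ h1

lemma LS_union (hψ : ∀ x, ψ (phi ρ δ n x) = x) (hδ : IsUnit δ) (S S' : Set (Dg G)) : LS ρ δ n (S ∪ S') = LS ρ δ n S ⊔ LS ρ δ n S' := by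
  apply le_antisymm
  · intro x hx
    have := LS_span hψ hδ hx
    refine (Submodule.span_le.2 ?_) this
    rintro y ⟨d, u, hd, h⟩
    rcases hd with hd | hd
    · refine (le_sup_left : LS ρ δ n S ≤ _) ?_
      rw [mem_LS, h]; exact Finsupp.single_mem_supported k _ hd
    · refine (le_sup_right : LS ρ δ n S' ≤ _) ?_
      rw [mem_LS, h]; exact Finsupp.single_mem_supported k _ hd
  · exact sup_le (LS_mono Set.subset_union_left) (LS_mono Set.subset_union_right)

lemma phi_mul_e (x : GTLAlg k G ρ n δ) (m : ℕ) (hm : m + 1 < n) :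
    phi ρ δ n (x * ge ρ δ n m) = opE ρ δ (Sum.inr m) (Sum.inr (m+1)) (by simp) (phi ρ δ n x) := by
  rw [phi_mul_right, str_e, PR_e _ _ _ _ hm]

lemma phi_mul_t (x : GTLAlg k G ρ n δ) (g : G) (m : ℕ) (hm : m < n) :
    phi ρ δ n (x * gt ρ δ n g m) = opT (Sum.inr m) g (phi ρ δ n x) := by
  rw [phi_mul_right, str_t, PR_t _ _ _ _ _ hm]

/-- right cup at `m` -/
def cup (G : Type) [CommGroup G] (m : ℕ) : Set (Dg G) := {d | d.s (Sum.inr m) = Sum.inr (m + 1)}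
def cupg (m : ℕ) (g : G) : Set (Dg G) := {d | d.s (Sum.inr m) = Sum.inr (m + 1) ∧ d.l (Sum.inr m) = g}

def TInv (m : ℕ) (Q : Set (Dg G)) : Prop := ∀ d ∈ Q, ∀ g, d.T (Sum.inr m) g ∈ Q
def EInv (m : ℕ) (Q : Set (Dg G)) : Prop := ∀ d ∈ Q, d.E (Sum.inr m) (Sum.inr (m+1)) (by simp) ∈ Q

lemma cupg_T {m : ℕ} {g h : G} {d : Dg G} (hd : d ∈ cupg m g) : d.T (Sum.inr m) h ∈ cupg m (h * g) := by
  refine ⟨hd.1, ?_⟩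
  have := hd.2
  simp only [Mt.T]; grind

lemma mul_e_mem {m : ℕ} (hm : m + 1 < n) {Q : Set (Dg G)} (hQ : EInv m Q) {x : GTLAlg k G ρ n δ}
    (hx : x ∈ LS ρ δ n Q) : x * ge ρ δ n m ∈ LS ρ δ n (Q ∩ cupg m 1) := by
  rw [mem_LS, phi_mul_e _ _ hm]
  refine opW_supp ?_ hx
  intro d hd
  exact Or.inr ⟨hQ d hd, Mt.Es _ _ _ _⟩

lemma mul_t_mem {m : ℕ} (hm : m < n) {Q : Set (Dg G)} (hQ : TInv m Q) {g h : G} {x : GTLAlg k G ρ n δ}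
    (hx : x ∈ LS ρ δ n (Q ∩ cupg m g)) : x * gt ρ δ n h m ∈ LS ρ δ n (Q ∩ cupg m (h * g)) := by
  rw [mem_LS, phi_mul_t _ _ _ hm]
  refine opW_supp ?_ hx
  intro d hd
  exact Or.inr ⟨hQ d hd.1 _, cupg_T hd.2⟩

lemma mul_e_eq (hψ : ∀ x, ψ (phi ρ δ n x) = x) {m : ℕ} (hm : m + 1 < n) {Q : Set (Dg G)} {x : GTLAlg k G ρ n δ}
    (hx : x ∈ LS ρ δ n (Q ∩ cupg m 1)) : x * ge ρ δ n m = δ • x := by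
  rw [← hψ (x * _), phi_mul_e _ _ hm, opE, opW_scal (c := δ) _ hx, map_smul, hψ]
  rintro d ⟨_, hd⟩
  refine ⟨Mt.E_of _ _ _ _ hd.1 hd.2, ?_⟩
  rw [wE, if_pos hd.1, hd.2, map_one]; rfl

lemma aug_e (m : ℕ) : GTLaug k G ρ n δ (ge ρ δ n m) = 0 := by
  by_cases h : m + 1 < n
  · rw [ge, dif_pos (by omega)]
    simp [GTLaug]
  · rw [ge_out _ h, map_zero]

variable [Module.Flat k (GTLAlg k G ρ n δ)]

lemma acI_cupg (hψ : ∀ x, ψ (phi ρ δ n x) = x) (hδ : IsUnit δ) {m : ℕ} (hm : m + 1 < n) : AcI (GTLaug k G ρ n δ) (LS ρ δ n (Set.univ ∩ cupg m 1)) := by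
  obtain ⟨δ', hδ'⟩ := hδ.exists_left_inv
  refine AcI.of_idem _ (δ' • ge ρ δ n m) ?_ ?_ ?_
  · rw [map_smul, aug_e, smul_zero]
  · intro x
    rw [mul_smul_comm]
    exact Submodule.smul_mem _ _ (mul_e_mem (Q := Set.univ) hm (fun _ _ => trivial) (by rw [mem_LS]; simp))
  · intro x hx
    rw [mul_smul_comm, mul_e_eq hψ hm hx, smul_smul, hδ', one_smul]

lemma acI_inter_cupg (hψ : ∀ x, ψ (phi ρ δ n x) = x) (hδ : IsUnit δ) {m : ℕ} (hm : m + 1 < n) {Q : Set (Dg G)} (hQ : EInv m Q) (h : AcI (GTLaug k G ρ n δ) (LS ρ δ n Q)) :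
    AcI (GTLaug k G ρ n δ) (LS ρ δ n (Q ∩ cupg m 1)) := by
  obtain ⟨δ', hδ'⟩ := hδ.exists_left_inv
  refine h.retract (δ' • ge ρ δ n m) (LS_mono Set.inter_subset_left) ?_ ?_
  · intro x hx
    rw [mul_smul_comm]
    exact Submodule.smul_mem _ _ (mul_e_mem hm hQ hx)
  · intro x hx
    rw [mul_smul_comm, mul_e_eq hψ hm hx, smul_smul, hδ', one_smul]

lemma acI_cup (hψ : ∀ x, ψ (phi ρ δ n x) = x) (hδ : IsUnit δ) {m : ℕ} (hm : m + 1 < n) {Q : Set (Dg G)} (hQ : TInv m Q)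
    (h : AcI (GTLaug k G ρ n δ) (LS ρ δ n (Q ∩ cupg m 1))) : AcI (GTLaug k G ρ n δ) (LS ρ δ n (Q ∩ cup G m)) := by
  classical
  have hsub : ∀ g : G, Q ∩ cupg m g ⊆ Q ∩ cup G m := fun g d hd => ⟨hd.1, hd.2.1⟩
  have hp : ∀ g : G, ∀ x ∈ LS ρ δ n (Q ∩ cup G m),
      (LinearMap.mulRight k (gt ρ δ n g⁻¹ m) ∘ₗ res ψ (cupg m g)) x ∈ LS ρ δ n (Q ∩ cupg m 1) := by
    intro g x hx
    have h1 : res ψ (cupg m g) x ∈ LS ρ δ n (Q ∩ cupg m g) := by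
      rw [mem_LS, phi_res hψ hδ]
      refine Finsupp.supported_mono ?_ (fil_supp hx)
      exact fun d hd => ⟨hd.1.1, hd.2⟩
    have := mul_t_mem (h := g⁻¹) (by omega) hQ h1
    rwa [inv_mul_cancel] at this
  have hq : ∀ x ∈ LS ρ δ n (Q ∩ cupg m 1), ∀ g, x * gt ρ δ n g m ∈ LS ρ δ n (Q ∩ cupg m g) := by
    intro x hx g
    have := mul_t_mem (h := g) (by omega) hQ hx
    rwa [mul_one] at this
  refine h.translates (fun g => gt ρ δ n g m) (fun x hx g => LS_mono (hsub g) (hq x hx g))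
    (fun g => (LinearMap.mulRight k (gt ρ δ n g⁻¹ m) ∘ₗ res ψ (cupg m g)).restrict (hp g)) ?_ ?_
  · intro g g' x
    apply Subtype.ext
    change res ψ (cupg m g) (x.1 * gt ρ δ n g' m) * gt ρ δ n g⁻¹ m = _
    have h1 := hq x.1 x.2 g'
    split_ifs with hg
    · subst hg
      rw [res_id hψ (LS_mono Set.inter_subset_right h1), mul_assoc, gt_mul_inv, mul_one]
    · have : res ψ (cupg m g) (x.1 * gt ρ δ n g' m) = 0 := by
        rw [res, LinearMap.comp_apply, LinearMap.comp_apply, fil_zero _ h1, map_zero]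
        intro d hd hd'
        exact hg (hd'.2.symm.trans hd.2.2)
      rw [this, zero_mul]; rfl
  · intro x hx
    refine (Submodule.span_mono ?_) (LS_span hψ hδ hx)
    rintro y ⟨d, u, hd, h⟩
    have h1 : y ∈ LS ρ δ n (Q ∩ cupg m (d.l (Sum.inr m))) := by
      rw [mem_LS, h]
      exact Finsupp.single_mem_supported k _ ⟨hd.1, hd.2, rfl⟩
    have h2 := mul_t_mem (h := (d.l (Sum.inr m))⁻¹) (by omega) hQ h1
    rw [inv_mul_cancel] at h2
    exact ⟨_, h2, d.l (Sum.inr m), by rw [mul_assoc, gt_inv_mul, mul_one]⟩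

/-- a right cup below `m` -/
def Sm (G : Type) [CommGroup G] (m : ℕ) : Set (Dg G) := {d | ∃ j < m, d ∈ cup G j}

lemma Sm_T (m i : ℕ) : TInv i (Sm G m) := by
  rintro d ⟨j, hj, hd⟩ g
  exact ⟨j, hj, hd⟩

lemma Sm_E (m : ℕ) : EInv m (Sm G (m - 1)) := by
  rintro d ⟨j, hj, hd⟩
  refine ⟨j, hj, ?_⟩
  have h1 := d.inv; have h2 := d.nf
  have hd' : d.s (Sum.inr j) = Sum.inr (j + 1) := hd
  have n1 : (Sum.inr j : ℕ ⊕ ℕ) ≠ Sum.inr m := by simp; omega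
  have n2 : (Sum.inr j : ℕ ⊕ ℕ) ≠ Sum.inr (m+1) := by simp; omega
  have n3 : (Sum.inr (j+1) : ℕ ⊕ ℕ) ≠ Sum.inr m := by simp; omega
  have n4 : (Sum.inr (j+1) : ℕ ⊕ ℕ) ≠ Sum.inr (m+1) := by simp; omega
  change (d.E _ _ _).s (Sum.inr j) = Sum.inr (j + 1)
  simp only [Mt.E]
  grind

lemma Sm_succ (m : ℕ) : Sm G (m + 1) = Sm G m ∪ (Set.univ ∩ cup G m) := by
  ext d
  simp only [Sm, Set.mem_ofPred_eq, Set.univ_inter, Set.mem_union]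
  constructor
  · rintro ⟨j, hj, hd⟩
    rcases Nat.lt_succ_iff_lt_or_eq.1 hj with h | rfl
    · exact Or.inl ⟨j, h, hd⟩
    · exact Or.inr hd
  · rintro (⟨j, hj, hd⟩ | hd)
    · exact ⟨j, by omega, hd⟩
    · exact ⟨m, by omega, hd⟩

lemma Sm_inter (m : ℕ) : Sm G m ∩ (Set.univ ∩ cup G m) = Sm G (m - 1) ∩ cup G m := by
  ext d
  simp only [Sm, Set.mem_ofPred_eq, Set.univ_inter, Set.mem_inter_iff]
  constructor
  · rintro ⟨⟨j, hj, hd⟩, hm⟩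
    refine ⟨⟨j, ?_, hd⟩, hm⟩
    by_contra hne
    obtain rfl : m = j + 1 := by omega
    have h1 := d.inv (Sum.inr j)
    have hd' : d.s (Sum.inr j) = Sum.inr (j + 1) := hd
    have hm' : d.s (Sum.inr (j + 1)) = Sum.inr (j + 1 + 1) := hm
    rw [hd', hm'] at h1
    simp at h1
    omega
  · rintro ⟨⟨j, hj, hd⟩, hm⟩
    exact ⟨⟨j, by omega, hd⟩, hm⟩

lemma acI_Sm (hψ : ∀ x, ψ (phi ρ δ n x) = x) (hδ : IsUnit δ) : ∀ m, m + 1 ≤ n ∨ m = 0 → AcI (GTLaug k G ρ n δ) (LS ρ δ n (Sm G m)) := by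
  intro m
  induction m using Nat.strong_induction_on with
  | _ m ih =>
    intro hm
    match m, ih, hm with
    | 0, _, _ =>
      have h1 : LS ρ δ n (Sm G 0) = ⊥ := by
        rw [eq_bot_iff]
        intro x hx
        have h2 : Sm G 0 = ∅ := by ext d; simp [Sm]
        rw [h2, mem_LS, Finsupp.supported_empty, Submodule.mem_bot] at hx
        rw [Submodule.mem_bot, ← hψ x, hx, map_zero]
      rw [h1]; exact AcI.bot
    | m + 1, ih, hm =>
      rw [Sm_succ, LS_union hψ hδ]
      apply AcI.mv
      · rw [← LS_inter, Sm_inter]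
        exact acI_cup hψ hδ (by omega) (Sm_T _ _) (acI_inter_cupg hψ hδ (by omega) (Sm_E m) (ih (m-1) (by omega) (by omega)))
      · exact ih m (by omega) (by omega)
      · exact acI_cup hψ hδ (by omega) (fun _ _ _ => trivial) (acI_cupg hψ hδ (by omega))
end
end LSsec
end GTLProof

namespace GTLProof
set_option linter.unusedSectionVars false
set_option linter.unusedSimpArgs false
set_option linter.unusedVariables false
section Fin
variable {k G : Type} [CommRing k] [CommGroup G] {ρ : G →* RingAut k} {δ : k} {n : ℕ}

lemma aug_t (g : G) (m : ℕ) : GTLaug k G ρ n δ (gt ρ δ n g m) = 1 := by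
  by_cases h : m < n
  · rw [gt, dif_pos h]
    simp [GTLaug]
  · rw [gt_out _ _ h, map_one]

/-- The projection onto the group algebra. -/
def piH (ρ : G →* RingAut k) (δ : k) (n : ℕ) : GTLAlg k G ρ n δ →ₐ[k] MonoidAlgebra k (Fin n → G) :=
  (piSys ρ δ n).lift

lemma piH_e (i : ℕ) (h : i + 1 < n) : piH ρ δ n (ge ρ δ n i) = 0 := Sys.lift_e _ _ h
lemma piH_t (g : G) (i : ℕ) (h : i < n) :
    piH ρ δ n (gt ρ δ n g i) = MonoidAlgebra.of k _ (Pi.mulSingle ⟨i, h⟩ g) := by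
  refine (Sys.lift_t _ _ _ h).trans ?_
  simp only [piSys, h, dif_pos]

lemma piH_aug (a : GTLAlg k G ρ n δ) : groupAug k (Fin n → G) (piH ρ δ n a) = GTLaug k G ρ n δ a := by
  have : (groupAug k (Fin n → G)).comp (piH ρ δ n) = GTLaug k G ρ n δ := by
    apply hom_ext (X := k)
    · intro i hi
      rw [AlgHom.comp_apply, piH_e _ hi, map_zero, aug_e]
    · intro g i hi
      rw [AlgHom.comp_apply, piH_t _ _ hi, aug_t]
      simp [groupAug]
  exact DFunLike.congr_fun this a

lemma piH_tau (g : ℕ → G) (m : ℕ) (hm : m ≤ n) : piH ρ δ n (tau ρ δ n g m) =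
    MonoidAlgebra.of k _ (fun i : Fin n => if (i : ℕ) < m then g i else 1) := by
  induction m with
  | zero =>
    rw [tau, map_one (piH ρ δ n)]
    simp only [Nat.not_lt_zero, if_false]
    exact (map_one (MonoidAlgebra.of k (Fin n → G))).symm
  | succ m ih =>
    rw [tau, map_mul, ih (by omega), piH_t _ _ (by omega), ← map_mul]
    congr 1
    funext i
    rw [Pi.mul_apply]
    by_cases h : i = ⟨m, by omega⟩
    · subst h
      simp
    · rw [Pi.mulSingle_eq_of_ne h, mul_one]
      have : (i : ℕ) ≠ m := fun h' => h (Fin.ext h')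
      have e : ((i : ℕ) < m + 1) ↔ (i : ℕ) < m := by omega
      simp only [e]

/-- Extension by one. -/
def ext1 (f : Fin n → G) (i : ℕ) : G := if h : i < n then f ⟨i, h⟩ else 1

/-- The section. -/
def sig (ρ : G →* RingAut k) (δ : k) (n : ℕ) : MonoidAlgebra k (Fin n → G) →ₗ[k] GTLAlg k G ρ n δ :=
  (MonoidAlgebra.basis (Fin n → G) k).constr k (fun f => tau ρ δ n (ext1 f) n)

lemma sig_of (f : Fin n → G) : sig ρ δ n (MonoidAlgebra.of k _ f) = tau ρ δ n (ext1 f) n := by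
  have : MonoidAlgebra.of k _ f = MonoidAlgebra.basis (Fin n → G) k f := by simp
  rw [this, sig, Module.Basis.constr_basis]

lemma piH_sig (b : MonoidAlgebra k (Fin n → G)) : piH ρ δ n (sig ρ δ n b) = b := by
  have : (piH ρ δ n).toLinearMap ∘ₗ sig ρ δ n = LinearMap.id := by
    apply (MonoidAlgebra.basis (Fin n → G) k).ext
    intro f
    have : MonoidAlgebra.basis (Fin n → G) k f = MonoidAlgebra.of k _ f := by simp
    rw [this, LinearMap.comp_apply, sig_of, AlgHom.toLinearMap_apply, piH_tau _ _ le_rfl, LinearMap.id_apply]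
    congr 1
    funext i
    simp [ext1]
  exact DFunLike.congr_fun this b

lemma sig_TMon {x : GTLAlg k G ρ n δ} (hx : TMon ρ δ n x) : sig ρ δ n (piH ρ δ n x) = x := by
  obtain ⟨d, _, _, h⟩ := hx.spec
  rw [h, piH_tau _ _ le_rfl, sig_of]
  apply tau_congr
  intro i hi
  simp [ext1, hi]

lemma piH_Q {x : GTLAlg k G ρ (n+2) δ} (hx : IsQ ρ δ n x) : piH ρ δ (n+2) x = 0 := by
  obtain ⟨m, g, z, l, h, hm, hl, rfl⟩ := hx
  obtain ⟨W, hW⟩ := Sys.U_fac (S := gSys ρ δ (n+2)) m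
  have h1 : gU ρ δ (n+2) m = ge ρ δ (n+2) m * W := hW
  have h2 : piH ρ δ (n+2) (gU ρ δ (n+2) m) = 0 := by
    rw [h1, map_mul, piH_e _ (by omega), zero_mul]
  rw [Qel, map_mul, map_mul, map_mul, h2, mul_zero, zero_mul, zero_mul]

lemma Mon_dich [Nontrivial k] (hδ : IsUnit δ) : ∀ (n : ℕ) (x : GTLAlg k G ρ n δ), Mon ρ δ n x →
    TMon ρ δ n x ∨ (x ∈ LS ρ δ n (Sm G (n - 1)) ∧ piH ρ δ n x = 0) := by
  have small : ∀ (n : ℕ) (x : GTLAlg k G ρ n δ), n < 2 → Mon ρ δ n x → TMon ρ δ n x := by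
    intro n x h hx
    induction hx with
    | one => exact TMon.one
    | e i hi x hx ih => omega
    | t g i hi x hx ih => exact TMon.t g i hi _ ih
  intro n x hx
  match n, x, hx with
  | 0, x, hx => exact Or.inl (small _ _ (by omega) hx)
  | 1, x, hx => exact Or.inl (small _ _ (by omega) hx)
  | n + 2, x, hx =>
    rcases hx.cases hδ with h | h
    · exact Or.inl h
    · refine Or.inr ⟨?_, piH_Q h⟩
      obtain ⟨d, u, hu, h1⟩ := Mon.phi hδ hx
      have h3 : phi ρ δ (n+2) (str ρ δ (n+2) x) = Finsupp.single (flip d) u := by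
        rw [phi_flip, h1, Finsupp.lmapDomain_apply, Finsupp.mapDomain_single]
      obtain ⟨m, g, z, l, h, hm, hl, he⟩ := h.str
      rw [he] at h3
      have hc := (Qel_cup hδ m g z l h hm _ u hu h3).1
      rw [mem_LS, h1]
      refine Finsupp.single_mem_supported k _ ⟨m, by omega, ?_⟩
      simp only [flip] at hc
      rw [swap_eq_iff] at hc
      exact hc

lemma sig_mem (b : MonoidAlgebra k (Fin n → G)) : sig ρ δ n b ∈ LS ρ δ n {d : Dg G | d.s = Sum.swap} := by
  have hT : ∀ (g : ℕ → G) (m : ℕ), m ≤ n → TMon ρ δ n (tau ρ δ n g m) := by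
    intro g m hm
    induction m with
    | zero => exact TMon.one
    | succ m ih =>
      rw [tau]
      refine (ih (by omega)).mul ?_
      have := TMon.t (ρ := ρ) (δ := δ) (n := n) (g m) m (by omega) 1 TMon.one
      rwa [mul_one] at this
  have hb := (MonoidAlgebra.basis (Fin n → G) k).mem_span b
  induction hb using Submodule.span_induction with
  | mem x hx =>
    obtain ⟨f, rfl⟩ := hx
    have : MonoidAlgebra.basis (Fin n → G) k f = MonoidAlgebra.of k _ f := by simp
    rw [this, sig_of]
    obtain ⟨d, h1, h2, _⟩ := (hT (ext1 f) n le_rfl).spec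
    rw [mem_LS, h2]
    exact Finsupp.single_mem_supported k _ h1
  | zero => rw [map_zero]; exact Submodule.zero_mem _
  | add x y _ _ h1 h2 => rw [map_add]; exact Submodule.add_mem _ h1 h2
  | smul c x _ h1 => rw [map_smul]; exact Submodule.smul_mem _ _ h1

lemma sub_mem_LS [Nontrivial k] (hδ : IsUnit δ) (a : GTLAlg k G ρ n δ) :
    a - sig ρ δ n (piH ρ δ n a) ∈ LS ρ δ n (Sm G (n - 1)) := by
  have ha := Mon_span a
  induction ha using Submodule.span_induction with
  | mem x hx =>
    rcases Mon_dich hδ n x hx with h | h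
    · rw [sig_TMon h, sub_self]; exact Submodule.zero_mem _
    · rw [h.2, map_zero, sub_zero]; exact h.1
  | zero => rw [map_zero, map_zero, sub_zero]; exact Submodule.zero_mem _
  | add x y _ _ h1 h2 =>
    rw [map_add, map_add, add_sub_add_comm]; exact Submodule.add_mem _ h1 h2
  | smul c x _ h1 => rw [map_smul, map_smul, ← smul_sub]; exact Submodule.smul_mem _ _ h1

lemma ker_piH [Nontrivial k] (hδ : IsUnit δ) (a : GTLAlg k G ρ n δ) :
    piH ρ δ n a = 0 ↔ a ∈ LS ρ δ n (Sm G (n - 1)) := by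
  have h0 := sub_mem_LS hδ a
  constructor
  · intro h
    rwa [h, map_zero, sub_zero] at h0
  · intro h
    obtain ⟨ψ, hψ⟩ := exists_linv (G := G) (ρ := ρ) hδ n
    have h1 : sig ρ δ n (piH ρ δ n a) ∈ LS ρ δ n (Sm G (n - 1)) := by
      have := Submodule.sub_mem _ h h0
      rwa [sub_sub_cancel] at this
    have h2 : sig ρ δ n (piH ρ δ n a) ∈ LS ρ δ n (Sm G (n - 1) ∩ {d : Dg G | d.s = Sum.swap}) := by
      rw [LS_inter]; exact ⟨h1, sig_mem _⟩
    have h3 : Sm G (n - 1) ∩ {d : Dg G | d.s = Sum.swap} = ∅ := by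
      ext d
      simp only [Set.mem_inter_iff, Set.mem_empty_iff_false, iff_false]
      rintro ⟨⟨j, _, hj⟩, hd⟩
      have hj' : d.s (Sum.inr j) = Sum.inr (j + 1) := hj
      have hd' : d.s = Sum.swap := hd
      rw [hd'] at hj'
      simp at hj'
    rw [h3, mem_LS, Finsupp.supported_empty, Submodule.mem_bot] at h2
    have h4 : sig ρ δ n (piH ρ δ n a) = 0 := by rw [← hψ (sig ρ δ n (piH ρ δ n a)), h2, map_zero]
    rw [← piH_sig (ρ := ρ) (δ := δ) (piH ρ δ n a), h4, map_zero]

theorem main_thm (ρ : G →* RingAut k) (n : ℕ) (δ : k) (hδ : IsUnit δ) (q : ℕ) :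
    Nonempty ((barTor k (GTLAlg k G ρ n δ) (GTLaug k G ρ n δ) q) ≃ₗ[k]
      (groupTor k (Fin n → G) q)) := by
  rcases subsingleton_or_nontrivial k with hk | hk
  · have h1 : Subsingleton (barTor k (GTLAlg k G ρ n δ) (GTLaug k G ρ n δ) q) := Module.subsingleton k _
    have h2 : Subsingleton (groupTor k (Fin n → G) q) := Module.subsingleton k _
    exact ⟨LinearEquiv.ofLinear 0 0 (LinearMap.ext fun x => Subsingleton.elim _ _)
      (LinearMap.ext fun x => Subsingleton.elim _ _)⟩
  obtain ⟨ψ, hψ⟩ := exists_linv (G := G) (ρ := ρ) hδ n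
  haveI : Module.Flat k (GTLAlg k G ρ n δ) :=
    Module.Flat.of_retract (phi ρ δ n) ψ (LinearMap.ext hψ)
  haveI : Module.Flat k (MonoidAlgebra k (Fin n → G)) :=
    haveI := Module.Free.of_basis (MonoidAlgebra.basis (Fin n → G) k)
    inferInstance
  obtain ⟨h, hA⟩ := acI_Sm (G := G) hψ hδ (n - 1) (by omega)
  refine barTor_equiv (π := piH ρ δ n) (fun b => ⟨_, piH_sig b⟩) piH_aug hA
    (LS ρ δ n (Sm G (n - 1))).subtype (Submodule.subtype_injective _) ?_ ?_ q
  · intro a x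
    rfl
  · intro a
    rw [ker_piH hδ]
    constructor
    · intro h; exact ⟨⟨a, h⟩, rfl⟩
    · rintro ⟨x, rfl⟩; exact x.2
end Fin
end GTLProof

/-- **Homology of `G`-equivariant Temperley-Lieb algebras** (invertible parameter).
Let `G` be an abelian group, `k` a commutative `G`-ring, `n` a natural number, and
`δ ∈ k` invertible.  Then there is an isomorphism of graded `k`-modules
`Tor_*^{GTL_n(δ)}(𝟙,𝟙) ≅ Tor_*^{k[G^n]}(k,k) = H_*(G^n; k)`. -/
theorem equivariant_temperley_lieb_homology (k G : Type) [CommRing k] [CommGroup G]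
    (ρ : G →* RingAut k) (n : ℕ) (δ : k) (hδ : IsUnit δ) (q : ℕ) :
    Nonempty ((barTor k (GTLAlg k G ρ n δ) (GTLaug k G ρ n δ) q) ≃ₗ[k]
      (groupTor k (Fin n → G) q)) := by
  exact GTLProof.main_thm ρ n δ hδ q
end
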